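/- For every nonnegative integer n: (i) for all residues i, j ∈ {0,1,2}, the number of partition pairs (π₁,π₂) ∈ 𝒮𝒯 with |π₁|+|π₂| = 3n+2 and paircrank(π₁,π₂) ≡ i (mod 3) equals the number of such pairs with paircrank ≡ j (mod 3); (ii) for all residues i, j ∈ {0,1,2,3,4}, the number of pairs in 𝒮𝒯 of 5n+3 with paircrank ≡ i (mod 5) equals the number with paircrank ≡ j (mod 5); and (iii) likewise for pairs in 𝒮𝒯 of 5n+4 modulo 5. -/

import Mathlib

open scoped BigOperators

noncomputable section

/-- A partition is a finite multiset of positive integers. -/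
def IsPartition (π : Multiset ℕ) : Prop := ∀ x ∈ π, 0 < x

/-- The smallest part of a partition, with the convention `s(∅) = ∞`. -/
def sPart (π : Multiset ℕ) : ℕ∞ := (π.map (fun x => (x : ℕ∞))).inf

/-- The largest part of a partition, with the convention `ℓ(∅) = 0`. -/
def lPart (π : Multiset ℕ) : ℕ := π.sup

/-- Membership in the set 𝒮𝒯 of partition pairs: π₁ is nonempty,
`s(π₁) ≤ s(π₂)`, and `ℓ(π₂) < 2·s(π₁)`. -/
def InST (p : Multiset ℕ × Multiset ℕ) : Prop :=
  IsPartition p.1 ∧ IsPartition p.2 ∧ p.1 ≠ 0 ∧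
    sPart p.1 ≤ sPart p.2 ∧ (lPart p.2 : ℕ∞) < 2 * sPart p.1

/-- The paircrank of a partition pair: `#(π₁) − 1` if `π₂` is empty,
and `(# parts of π₁ that are ≥ s(π₁) + #(π₂)) − #(π₂)` otherwise. -/
def paircrank (p : Multiset ℕ × Multiset ℕ) : ℤ :=
  if p.2 = 0 then (Multiset.card p.1 : ℤ) - 1
  else (Multiset.countP (fun x => (sPart p.1).toNat + Multiset.card p.2 ≤ x) p.1 : ℤ)
    - Multiset.card p.2

/-! Let `F(z) = ∑ z ^ paircrank q ^ (|π₁| + |π₂|)` over `𝒮𝒯`. Since the only rational linear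
relation among the powers of a primitive `p`-th root of unity `ζ` is that their sum vanishes, the
paircrank is equidistributed modulo a prime `p` on the pairs of size `M` as soon as the coefficient
of `q ^ M` in `F(ζ)` is zero.

Summing over the value of `s(π₁)` with the `q`-binomial theorem, and then applying the finite Jacobi
triple product and a conjugate Bailey pair, gives `F(z) J(z) = N(z)`, where
`J(z) = ∑ (-1) ^ n z ^ n q ^ (n (n - 1) / 2)` is a theta function and `N(z)` is obtained from `J(z)`
by multiplying its `n`-th term by a partial theta function. Let the subscript `r` denote the part
with exponents congruent to `r`.

Modulo `3`, at a primitive cube root of unity `ω`, the series `J(ω)` only has exponents `≡ 0` and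
`N(ω)` none `≡ 2`, so `F(ω)` has none `≡ 2`.

Modulo `5`, at a primitive fifth root of unity `ζ`, the exponents of `J(ζ)` are `≡ 0, 1` and those
of `N(ζ)` are not `≡ 4`, which only gives the single relation `F₄ J₀ + F₃ J₁ = 0`. Its two summands
are separated by a dissection modulo `3`: for every `z`, the parts of `F(z)` with exponents
`≡ 1, 2 (mod 3)` are `J₀`, respectively `-J₁` (residues modulo `3`), times the same quotient of
theta products. At `ζ` this quotient simplifies enough to show that these parts have no exponents
`≡ 3, 4 (mod 5)`. Hence `F₃` and `F₄` only have exponents divisible by `3`, and the relation splits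
modulo `3` into a homogeneous linear system with nonzero determinant.

The dissection rests on `(N (J₀ - J₁))₁ = q (q³; q³)_∞ J(z; q³)²` (residues modulo `3`). The
coefficients of `z ^ m` on both sides satisfy the same recurrence from `m` to `m + 2`, and the two
initial values are found by specialising to `z = 1` and `z = q`. -/

open PowerSeries
open scoped PowerSeries.WithPiTopology

section Summability

variable {R : Type*} [CommRing R] {ι κ : Type*}

/-- A family of power series is `X`-adically summable if, for each `N`, all but finitely many of
its members are divisible by `X ^ N`. Such a family is summable in the product topology, whatever
the topology of the coefficient ring. -/
def XAdicSummable (f : ι → R⟦X⟧) : Prop := ∀ N : ℕ, {i | ¬ X ^ N ∣ f i}.Finite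

lemma eq_of_forall_X_pow_dvd_sub {f g : R⟦X⟧} (h : ∀ N : ℕ, X ^ N ∣ f - g) : f = g := by
  ext n
  exact sub_eq_zero.1 ((map_sub _ f g).symm.trans (X_pow_dvd_iff.1 (h (n + 1)) n n.lt_succ_self))

namespace XAdicSummable

variable {f g : ι → R⟦X⟧}

lemma coeff_finite (h : XAdicSummable f) (n : ℕ) : {i | coeff n (f i) ≠ 0}.Finite :=
  (h (n + 1)).subset fun _ hi hd => hi (X_pow_dvd_iff.1 hd n n.lt_succ_self)

lemma mono (h : XAdicSummable f) (hd : ∀ i, f i ∣ g i) : XAdicSummable g := fun N =>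
  (h N).subset fun i hi hd' => hi (hd'.trans (hd i))

lemma mul_left (h : XAdicSummable f) (g : ι → R⟦X⟧) : XAdicSummable fun i => g i * f i :=
  h.mono fun _ => Dvd.intro_left _ rfl

lemma mul_right (h : XAdicSummable f) (g : ι → R⟦X⟧) : XAdicSummable fun i => f i * g i :=
  h.mono fun _ => Dvd.intro _ rfl

lemma comp_injective (h : XAdicSummable f) {e : κ → ι} (he : Function.Injective e) :
    XAdicSummable fun k => f (e k) := fun N => (h N).preimage he.injOn

lemma add (hf : XAdicSummable f) (hg : XAdicSummable g) : XAdicSummable fun i => f i + g i := by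
  refine fun N => ((hf N).union (hg N)).subset fun i hi => ?_
  by_contra hc
  simp only [Set.mem_union, Set.mem_ofPred_eq, not_or, not_not] at hc
  exact hi (dvd_add hc.1 hc.2)

lemma neg (hf : XAdicSummable f) : XAdicSummable fun i => -f i :=
  hf.mono fun _ => dvd_neg.2 dvd_rfl

lemma prod_mul {g : κ → R⟦X⟧} (hf : XAdicSummable f) (hg : XAdicSummable g) :
    XAdicSummable fun p : ι × κ => f p.1 * g p.2 := fun N =>
  ((hf N).prod (hg N)).subset fun _ hp =>
    ⟨fun h => hp (h.trans (Dvd.intro _ rfl)), fun h => hp (h.trans (Dvd.intro_left _ rfl))⟩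

lemma fiber {f : ι × κ → R⟦X⟧} (h : XAdicSummable f) (i : ι) : XAdicSummable fun k => f (i, k) :=
  h.comp_injective (Prod.mk_right_injective i)

lemma swap {f : ι × κ → R⟦X⟧} (h : XAdicSummable f) : XAdicSummable fun p : κ × ι => f p.swap :=
  h.comp_injective Prod.swap_injective

lemma ite_zero (h : XAdicSummable f) (p : ι → Prop) [DecidablePred p] :
    XAdicSummable fun i => if p i then f i else 0 :=
  h.mono fun i => by split_ifs <;> simp

lemma of_X_pow_dvd {e : ι → ℕ} (h : ∀ i, X ^ e i ∣ f i) (hfin : ∀ N, {i | e i < N}.Finite) :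
    XAdicSummable f := by
  refine fun N => (hfin N).subset fun i hi => ?_
  by_contra hc
  exact hi ((pow_dvd_pow _ (not_lt.1 hc)).trans (h i))

lemma of_X_pow_dvd_nat {f : ℕ → R⟦X⟧} (h : ∀ i, X ^ i ∣ f i) : XAdicSummable f :=
  of_X_pow_dvd h fun N => Set.finite_lt_nat N

lemma of_X_pow_dvd_int {f : ℤ → R⟦X⟧} (e : ℤ → ℤ) (h : ∀ i, X ^ (e i).toNat ∣ f i)
    (B : ℤ) (he : ∀ i, |i| ≤ e i + B) : XAdicSummable f := by
  refine of_X_pow_dvd h fun N => (Set.finite_Icc (-(N + |B|)) (N + |B|)).subset fun i hi => ?_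
  have hN : (e i).toNat < N := hi
  have hi : |i| ≤ N + |B| := by linarith [he i, le_abs_self B, Int.self_le_toNat (e i)]
  exact abs_le.1 hi

variable [TopologicalSpace R]

lemma summable (h : XAdicSummable f) : Summable f :=
  (WithPiTopology.summable_iff_summable_coeff R).2 fun n =>
    summable_of_hasFiniteSupport (h.coeff_finite n)

variable [T2Space R]

lemma coeff_tsum (h : XAdicSummable f) (n : ℕ) :
    coeff n (∑' i, f i) = ∑' i, coeff n (f i) :=
  (((WithPiTopology.hasSum_iff_hasSum_coeff R).1 h.summable.hasSum) n).tsum_eq.symm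

lemma coeff_tsum_eq_sum (h : XAdicSummable f) (n : ℕ) (s : Finset ι)
    (hs : ∀ i ∉ s, coeff n (f i) = 0) : coeff n (∑' i, f i) = ∑ i ∈ s, coeff n (f i) := by
  rw [h.coeff_tsum, tsum_eq_sum hs]

lemma X_pow_dvd_tsum (h : XAdicSummable f) {N : ℕ} (hd : ∀ i, X ^ N ∣ f i) :
    X ^ N ∣ ∑' i, f i := by
  refine X_pow_dvd_iff.2 fun m hm => ?_
  rw [h.coeff_tsum, tsum_congr fun i => X_pow_dvd_iff.1 (hd i) m hm, tsum_zero]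

lemma tsum_fiber {f : ι × κ → R⟦X⟧} (h : XAdicSummable f) :
    XAdicSummable fun i => ∑' k, f (i, k) := by
  refine fun N => ((h N).image Prod.fst).subset fun i hi => ?_
  by_contra hc
  refine hi ((h.fiber i).X_pow_dvd_tsum fun k => ?_)
  by_contra hk
  exact hc ⟨(i, k), hk, rfl⟩

/-- The parametrisation of `ℤ × ℤ` by its antidiagonals: `(m, j)` is sent to `(j, m - j)`. -/
def intAntidiagonalEquiv : ℤ × ℤ ≃ ℤ × ℤ :=
  (Equiv.prodComm ℤ ℤ).trans (Equiv.prodShear (Equiv.refl ℤ) Equiv.subRight)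

lemma int_antidiagonal {f : ℤ × ℤ → R⟦X⟧} (h : XAdicSummable f) :
    XAdicSummable fun m => ∑' j, f (j, m - j) :=
  (h.comp_injective intAntidiagonalEquiv.injective).tsum_fiber

variable [IsTopologicalRing R]

lemma tsum_add (hf : XAdicSummable f) (hg : XAdicSummable g) :
    ∑' i, (f i + g i) = ∑' i, f i + ∑' i, g i :=
  hf.summable.tsum_add hg.summable

lemma tsum_sub (hf : XAdicSummable f) (hg : XAdicSummable g) :
    ∑' i, (f i - g i) = ∑' i, f i - ∑' i, g i :=
  hf.summable.tsum_sub hg.summable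

lemma tsum_mul_left (hf : XAdicSummable f) (a : R⟦X⟧) : ∑' i, a * f i = a * ∑' i, f i :=
  hf.summable.tsum_mul_left a

lemma tsum_mul_right (hf : XAdicSummable f) (a : R⟦X⟧) : ∑' i, f i * a = (∑' i, f i) * a :=
  hf.summable.tsum_mul_right a

lemma tsum_mul_tsum {g : κ → R⟦X⟧} (hf : XAdicSummable f) (hg : XAdicSummable g) :
    (∑' i, f i) * (∑' k, g k) = ∑' p : ι × κ, f p.1 * g p.2 :=
  hf.summable.tsum_mul_tsum hg.summable (hf.prod_mul hg).summable

lemma X_pow_dvd_tsum_sub_sum_range {f : ℕ → R⟦X⟧} (h : ∀ i, X ^ i ∣ f i) (M : ℕ) :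
    X ^ M ∣ ∑' i, f i - ∑ i ∈ Finset.range M, f i := by
  have hf := of_X_pow_dvd_nat h
  rw [← hf.summable.sum_add_tsum_nat_add M, add_sub_cancel_left]
  exact (hf.comp_injective (add_left_injective M)).X_pow_dvd_tsum fun i =>
    (pow_dvd_pow X (Nat.le_add_left M i)).trans (h (i + M))

lemma tsum_prod {f : ι × κ → R⟦X⟧} (h : XAdicSummable f) :
    ∑' p, f p = ∑' i, ∑' k, f (i, k) :=
  h.summable.tsum_prod' fun i => (h.fiber i).summable

lemma tsum_comm {f : ι × κ → R⟦X⟧} (h : XAdicSummable f) :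
    ∑' i, ∑' k, f (i, k) = ∑' k, ∑' i, f (i, k) := by
  rw [← h.tsum_prod, ← (Equiv.prodComm κ ι).tsum_eq f]
  exact h.swap.tsum_prod

lemma tsum_int_even_add_odd {f : ℤ → R⟦X⟧} (h : XAdicSummable f) :
    ∑' n, f n = ∑' k, f (2 * k) + ∑' k, f (2 * k + 1) := by
  let e : ℤ × Fin 2 ≃ ℤ := (Int.divModEquiv 2).symm
  have he : ∀ k r, e (k, r) = 2 * k + (r : ℕ) := fun k r => by
    simp [e, Int.divModEquiv, mul_comm]
  rw [← e.tsum_eq f, (h.comp_injective e.injective).tsum_prod]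
  simp only [tsum_fintype, Fin.sum_univ_two, he, Fin.val_zero, Fin.val_one, Nat.cast_zero,
    Nat.cast_one, add_zero]
  have hinj : Function.Injective fun k : ℤ => 2 * k := fun a b hab => by simpa using hab
  exact (h.comp_injective hinj).tsum_add (h.comp_injective ((add_left_injective 1).comp hinj))

lemma tsum_int_antidiagonal {f : ℤ × ℤ → R⟦X⟧} (h : XAdicSummable f) :
    ∑' p, f p = ∑' m, ∑' j, f (j, m - j) := by
  rw [← intAntidiagonalEquiv.tsum_eq f]
  exact (h.comp_injective intAntidiagonalEquiv.injective).tsum_prod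

end XAdicSummable

end Summability

section Antisymmetry

instance {R : Type*} [CommRing R] [IsAddTorsionFree R] : IsAddTorsionFree R⟦X⟧ :=
  inferInstanceAs (IsAddTorsionFree ((Unit →₀ ℕ) → R))

variable {α ι : Type*} [AddCommGroup α] [TopologicalSpace α] [T2Space α] [IsTopologicalAddGroup α]
  [IsAddTorsionFree α]

lemma tsum_eq_zero_of_comp_eq_neg {f : ι → α} (e : ι ≃ ι) (h : ∀ i, f (e i) = -f i) :
    ∑' i, f i = 0 := by
  rw [← self_eq_neg, ← tsum_neg, ← e.tsum_eq]
  exact tsum_congr h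

lemma tsum_eq_zero_of_one_sub_eq_neg {f : ℤ → α} (h : ∀ n, f (1 - n) = -f n) :
    ∑' n, f n = 0 :=
  tsum_eq_zero_of_comp_eq_neg (Equiv.subLeft 1) h

end Antisymmetry

section ResiduePart

variable {R : Type*} [CommRing R] {m : ℕ}

/-- The part of a power series with exponents congruent to `r` modulo `m`. -/
def residuePart (r : ZMod m) : R⟦X⟧ →ₗ[R] R⟦X⟧ where
  toFun f := PowerSeries.mk fun n => if (n : ZMod m) = r then coeff n f else 0
  map_add' f g := by ext n; by_cases h : (n : ZMod m) = r <;> simp [h]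
  map_smul' c f := by ext n; simp

lemma coeff_residuePart (r : ZMod m) (f : R⟦X⟧) (n : ℕ) :
    coeff n (residuePart r f) = if (n : ZMod m) = r then coeff n f else 0 := by
  simp [residuePart]

lemma X_pow_dvd_residuePart (r : ZMod m) {f : R⟦X⟧} {N : ℕ} (h : X ^ N ∣ f) :
    X ^ N ∣ residuePart r f := by
  rw [X_pow_dvd_iff] at *
  intro k hk
  rw [coeff_residuePart, h k hk, ite_self]

lemma residuePart_comm {k : ℕ} (r : ZMod m) (s : ZMod k) (f : R⟦X⟧) :
    residuePart r (residuePart s f) = residuePart s (residuePart r f) := by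
  ext n
  simp only [coeff_residuePart]
  split_ifs <;> rfl

lemma residuePart_C_mul (r : ZMod m) (c : R) (f : R⟦X⟧) :
    residuePart r (C c * f) = C c * residuePart r f := by
  rw [← smul_eq_C_mul, ← smul_eq_C_mul, map_smul]

lemma coeff_eq_zero_of_residuePart_eq_zero {r : ZMod m} {f : R⟦X⟧} (h : residuePart r f = 0)
    {n : ℕ} (hn : (n : ZMod m) = r) : coeff n f = 0 := by
  rw [← if_pos (c := (n : ZMod m) = r) (t := coeff n f) (e := 0) hn, ← coeff_residuePart, h,
    map_zero]

/-- `ResidueSupported T f` says that `f` only has exponents whose residues modulo `m` lie in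
`T`. -/
def ResidueSupported (T : Set (ZMod m)) (f : R⟦X⟧) : Prop :=
  ∀ n : ℕ, coeff n f ≠ 0 → (n : ZMod m) ∈ T

namespace ResidueSupported

variable {T U W : Set (ZMod m)} {f g : R⟦X⟧}

lemma coeff_eq_zero (hf : ResidueSupported T f) {n : ℕ} (hn : (n : ZMod m) ∉ T) :
    coeff n f = 0 :=
  of_not_not fun h => hn (hf n h)

lemma mono (hf : ResidueSupported T f) (h : T ⊆ U) : ResidueSupported U f :=
  fun n hn => h (hf n hn)

lemma neg (hf : ResidueSupported T f) : ResidueSupported T (-f) :=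
  fun n hn => hf n (by simpa using hn)

lemma mul (hf : ResidueSupported T f) (hg : ResidueSupported U g)
    (h : ∀ t ∈ T, ∀ u ∈ U, t + u ∈ W) : ResidueSupported W (f * g) := by
  intro n hn
  rw [coeff_mul] at hn
  obtain ⟨⟨a, b⟩, hab, hne⟩ := Finset.exists_ne_zero_of_sum_ne_zero hn
  rw [← Finset.HasAntidiagonal.mem_antidiagonal.1 hab, Nat.cast_add]
  exact h _ (hf _ (left_ne_zero_of_mul hne)) _ (hg _ (right_ne_zero_of_mul hne))

lemma C_mul (hf : ResidueSupported T f) (c : R) : ResidueSupported T (C c * f) :=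
  fun n hn => hf n (right_ne_zero_of_mul (by rwa [coeff_C_mul] at hn))

lemma X_pow {k : ℕ} (h : (k : ZMod m) ∈ T) : ResidueSupported T (X ^ k : R⟦X⟧) := by
  intro n hn
  rw [coeff_X_pow] at hn
  rwa [of_not_not fun hne => hn (if_neg hne)]

lemma residuePart_self (r : ZMod m) (f : R⟦X⟧) : ResidueSupported {r} (residuePart r f) := by
  intro n hn
  rw [coeff_residuePart] at hn
  exact of_not_not fun h => hn (if_neg h)

lemma map_residuePart {k : ℕ} (hf : ResidueSupported T f) (r : ZMod k) :
    ResidueSupported T (residuePart r f) := by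
  intro n hn
  refine hf n fun h => hn ?_
  rw [coeff_residuePart, h, ite_self]

lemma residuePart_eq_zero (hf : ResidueSupported T f) {r : ZMod m} (hr : r ∉ T) :
    residuePart r f = 0 := by
  ext n
  rw [coeff_residuePart, map_zero]
  split_ifs with h
  · exact hf.coeff_eq_zero (h ▸ hr)
  · rfl

lemma residuePart_eq_self {r : ZMod m} (hf : ResidueSupported {r} f) : residuePart r f = f := by
  ext n
  rw [coeff_residuePart]
  split_ifs with h
  · rfl
  · exact (hf.coeff_eq_zero h).symm

lemma of_residuePart_eq_zero (h : ∀ r ∉ T, residuePart r f = 0) : ResidueSupported T f := by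
  intro n
  contrapose!
  exact fun hn => coeff_eq_zero_of_residuePart_eq_zero (h _ hn) rfl

lemma residuePart_mul {s : ZMod m} (hf : ResidueSupported {s} f) (r : ZMod m) :
    residuePart r (f * g) = f * residuePart (r - s) g := by
  ext n
  rw [coeff_residuePart, coeff_mul, coeff_mul, Finset.ite_sum_zero]
  refine Finset.sum_congr rfl ?_
  rintro ⟨a, b⟩ hab
  by_cases ha : coeff a f = 0
  · simp [ha]
  have has : (a : ZMod m) = s := hf a ha
  have hb : (b : ZMod m) = r - s ↔ (n : ZMod m) = r := by
    rw [← Finset.HasAntidiagonal.mem_antidiagonal.1 hab, Nat.cast_add, has, eq_sub_iff_add_eq,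
      add_comm]
  simp only [coeff_residuePart, hb, mul_ite, mul_zero]

lemma residuePart_mul' {s : ZMod m} (hf : ResidueSupported {s} f) (r : ZMod m) :
    residuePart r (g * f) = residuePart (r - s) g * f := by
  rw [mul_comm, hf.residuePart_mul, mul_comm]

lemma eq_add {r s : ZMod m} (hf : ResidueSupported {r, s} f) (hrs : r ≠ s) :
    f = residuePart r f + residuePart s f := by
  ext n
  rw [map_add, coeff_residuePart, coeff_residuePart]
  by_cases hr : (n : ZMod m) = r
  · rw [if_pos hr, if_neg (hr ▸ hrs), add_zero]
  · rw [if_neg hr, zero_add]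
    split_ifs with hs
    · rfl
    · exact hf.coeff_eq_zero (by simp [hr, hs])

lemma residuePart_mul_eq_add {r s : ZMod m} (hg : ResidueSupported {r, s} g) (hrs : r ≠ s)
    (f : R⟦X⟧) (t : ZMod m) :
    residuePart t (f * g) =
      residuePart (t - r) f * residuePart r g + residuePart (t - s) f * residuePart s g := by
  conv_lhs => rw [hg.eq_add hrs, mul_add, map_add, (residuePart_self r g).residuePart_mul',
    (residuePart_self s g).residuePart_mul']

variable [TopologicalSpace R] [T2Space R] {ι : Type*}

lemma tsum {f : ι → R⟦X⟧} (h : XAdicSummable f) (hf : ∀ i, ResidueSupported T (f i)) :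
    ResidueSupported T (∑' i, f i) := by
  intro n
  contrapose!
  intro hn
  rw [h.coeff_tsum, tsum_congr fun i => (hf i).coeff_eq_zero hn, tsum_zero]

end ResidueSupported

variable {ι : Type*} {f : ι → R⟦X⟧}

lemma XAdicSummable.map_residuePart (h : XAdicSummable f) (r : ZMod m) :
    XAdicSummable fun i => residuePart r (f i) :=
  fun N => (h N).subset fun _ hi hd => hi (X_pow_dvd_residuePart r hd)

lemma residuePart_tsum [TopologicalSpace R] [T2Space R] (h : XAdicSummable f) (r : ZMod m) :
    residuePart r (∑' i, f i) = ∑' i, residuePart r (f i) := by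
  ext n
  rw [coeff_residuePart, (h.map_residuePart r).coeff_tsum, h.coeff_tsum]
  simp only [coeff_residuePart]
  split_ifs <;> simp

end ResiduePart

section QPochhammer

variable {R : Type*} [CommRing R]

lemma X_pow_dvd_prod_sub_prod {ι : Type*} {f g : ι → R⟦X⟧} {s : Finset ι} {N : ℕ}
    (h : ∀ i ∈ s, X ^ N ∣ f i - g i) : X ^ N ∣ ∏ i ∈ s, f i - ∏ i ∈ s, g i := by
  simp_rw [← Ideal.mem_span_singleton, ← Ideal.Quotient.eq, map_prod] at h ⊢
  exact Finset.prod_congr rfl h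

lemma X_pow_dvd_prod_sub_one {ι : Type*} {f : ι → R⟦X⟧} {s : Finset ι} {N : ℕ}
    (h : ∀ i ∈ s, X ^ N ∣ f i - 1) : X ^ N ∣ ∏ i ∈ s, f i - 1 := by
  simpa only [Finset.prod_const_one] using X_pow_dvd_prod_sub_prod (g := fun _ => 1) h

/-- The finite `q`-Pochhammer symbol `(z; q)_n`. -/
def qPoch (z q : R⟦X⟧) (n : ℕ) : R⟦X⟧ := ∏ i ∈ Finset.range n, (1 - z * q ^ i)

lemma qPoch_zero (z q : R⟦X⟧) : qPoch z q 0 = 1 := rfl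

lemma qPoch_succ (z q : R⟦X⟧) (n : ℕ) : qPoch z q (n + 1) = qPoch z q n * (1 - z * q ^ n) :=
  Finset.prod_range_succ _ _

lemma qPoch_add (z q : R⟦X⟧) (m n : ℕ) :
    qPoch z q (m + n) = qPoch z q m * qPoch (z * q ^ m) q n := by
  simp only [qPoch, Finset.prod_range_add, pow_add, mul_assoc]

lemma qPoch_mul (z q : R⟦X⟧) (m n : ℕ) :
    qPoch z q (m * n) = ∏ i ∈ Finset.range m, qPoch (z * q ^ i) (q ^ m) n := by
  induction n with
  | zero => simp only [mul_zero, qPoch_zero, Finset.prod_const_one]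
  | succ n ih =>
    rw [Nat.mul_succ, qPoch_add, ih]
    simp only [qPoch_succ, Finset.prod_mul_distrib]
    simp only [qPoch, pow_mul, mul_right_comm]

lemma X_pow_dvd_qPoch_sub_one {z : R⟦X⟧} (q : R⟦X⟧) {N : ℕ} (h : X ^ N ∣ z) (n : ℕ) :
    X ^ N ∣ qPoch z q n - 1 :=
  X_pow_dvd_prod_sub_one fun i _ => by
    rw [sub_sub_cancel_left, dvd_neg]
    exact h.mul_right _

lemma constantCoeff_eq_one_of_X_pow_one_dvd_sub {f : R⟦X⟧} (h : X ^ 1 ∣ f - 1) :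
    constantCoeff f = 1 := by
  rwa [pow_one, X_dvd_iff, map_sub, map_one, sub_eq_zero] at h

lemma constantCoeff_qPoch {q : R⟦X⟧} (hq : X ∣ q) (n : ℕ) : constantCoeff (qPoch q q n) = 1 :=
  constantCoeff_eq_one_of_X_pow_one_dvd_sub
    (X_pow_dvd_qPoch_sub_one q ((pow_one (X : R⟦X⟧)).symm ▸ hq) n)

lemma xAdicSummable_mul_pow {q : R⟦X⟧} (hq : X ∣ q) (z : R⟦X⟧) :
    XAdicSummable fun i : ℕ => z * q ^ i :=
  .of_X_pow_dvd_nat fun i => (pow_dvd_pow_of_dvd hq i).mul_left z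

variable [TopologicalSpace R]

/-- The infinite `q`-Pochhammer symbol `(z; q)_∞`, which converges as soon as `X ∣ q`. -/
def qPochInf (z q : R⟦X⟧) : R⟦X⟧ := ∏' i : ℕ, (1 - z * q ^ i)

lemma XAdicSummable.multipliable_one_sub {f : ℕ → R⟦X⟧} (h : XAdicSummable f) :
    Multipliable fun i => 1 - f i := by
  simp only [sub_eq_add_neg]
  refine WithPiTopology.multipliable_one_add_of_tendsto_order_atTop_nhds_top (R := R) ?_
  rw [← Nat.cofinite_eq_atTop, ENat.tendsto_nhds_top_iff_natCast_lt]
  refine fun n => (h (n + 1)).subset fun i hi hd => hi ?_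
  refine lt_of_lt_of_le (Nat.cast_lt.2 n.lt_succ_self) (le_order _ _ fun k hk => ?_)
  exact X_pow_dvd_iff.1 (dvd_neg.2 hd) k (Nat.cast_lt.1 hk)

variable [T2Space R] {q : R⟦X⟧}

lemma X_pow_dvd_tprod_sub_prod {g : ℕ → R⟦X⟧} (hg : Multipliable g) {N M : ℕ}
    (h : ∀ i, M ≤ i → X ^ N ∣ g i - 1) : X ^ N ∣ ∏' i, g i - ∏ i ∈ Finset.range M, g i := by
  refine X_pow_dvd_iff.2 fun n hn => ?_
  rw [map_sub, sub_eq_zero]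
  refine tendsto_nhds_unique
    (((WithPiTopology.continuous_coeff R n).tendsto _).comp hg.tendsto_prod_tprod_nat)
    (tendsto_const_nhds.congr' ?_)
  filter_upwards [Filter.eventually_ge_atTop M] with K hK
  have htail : X ^ N ∣ ∏ i ∈ Finset.Ico M K, g i - 1 :=
    X_pow_dvd_prod_sub_one fun i hi => h i (Finset.mem_Ico.1 hi).1
  have := X_pow_dvd_iff.1 (htail.mul_left (∏ i ∈ Finset.range M, g i)) n hn
  rwa [mul_sub, Finset.prod_range_mul_prod_Ico g hK, mul_one, map_sub, sub_eq_zero, eq_comm] at this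

lemma X_pow_dvd_qPochInf_sub_qPoch (hq : X ∣ q) (z : R⟦X⟧) {N M : ℕ}
    (h : X ^ N ∣ z * q ^ M) : X ^ N ∣ qPochInf z q - qPoch z q M := by
  refine X_pow_dvd_tprod_sub_prod (xAdicSummable_mul_pow hq z).multipliable_one_sub fun i hi => ?_
  rw [sub_sub_cancel_left, dvd_neg]
  exact h.trans (mul_dvd_mul_left z (pow_dvd_pow q hi))

lemma X_pow_dvd_qPochInf_sub_qPoch_self (hq : X ∣ q) (z : R⟦X⟧) (N : ℕ) :
    X ^ N ∣ qPochInf z q - qPoch z q N :=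
  X_pow_dvd_qPochInf_sub_qPoch hq z ((pow_dvd_pow_of_dvd hq N).mul_left z)

lemma X_pow_dvd_qPochInf_sub_one (hq : X ∣ q) {z : R⟦X⟧} {N : ℕ} (h : X ^ N ∣ z) :
    X ^ N ∣ qPochInf z q - 1 :=
  X_pow_dvd_qPochInf_sub_qPoch (M := 0) hq z (h.mul_right _)

lemma qPochInf_eq_qPoch_mul (hq : X ∣ q) (z : R⟦X⟧) (n : ℕ) :
    qPochInf z q = qPoch z q n * qPochInf (z * q ^ n) q := by
  refine eq_of_forall_X_pow_dvd_sub fun N => ?_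
  have h₁ := (pow_dvd_pow X (N.le_add_left n)).trans
    (X_pow_dvd_qPochInf_sub_qPoch_self hq z (n + N))
  have h₂ := (X_pow_dvd_qPochInf_sub_qPoch_self hq (z * q ^ n) N).mul_left (qPoch z q n)
  rw [qPoch_add] at h₁
  convert dvd_sub h₁ h₂ using 1
  ring

lemma qPochInf_eq_one_sub_mul (hq : X ∣ q) (z : R⟦X⟧) :
    qPochInf z q = (1 - z) * qPochInf (z * q) q := by
  simpa [qPoch] using qPochInf_eq_qPoch_mul hq z 1

lemma qPochInf_eq_prod_range (hq : X ∣ q) (z : R⟦X⟧) {m : ℕ} (hm : m ≠ 0) :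
    qPochInf z q = ∏ i ∈ Finset.range m, qPochInf (z * q ^ i) (q ^ m) := by
  refine eq_of_forall_X_pow_dvd_sub fun N => ?_
  have hleft := (pow_dvd_pow X (Nat.le_mul_of_pos_left N (Nat.pos_of_ne_zero hm))).trans
    (X_pow_dvd_qPochInf_sub_qPoch_self hq z (m * N))
  have hright : X ^ N ∣ ∏ i ∈ Finset.range m, qPochInf (z * q ^ i) (q ^ m) -
      ∏ i ∈ Finset.range m, qPoch (z * q ^ i) (q ^ m) N :=
    X_pow_dvd_prod_sub_prod fun i _ =>
      X_pow_dvd_qPochInf_sub_qPoch_self (hq.trans (dvd_pow_self q hm)) (z * q ^ i) N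
  rw [qPoch_mul] at hleft
  simpa only [sub_sub_sub_cancel_right] using dvd_sub hleft hright

lemma qPochInf_ne_zero [Nontrivial R] (hq : X ∣ q) {z : R⟦X⟧} (hz : X ∣ z) :
    qPochInf z q ≠ 0 := fun h0 => by
  have := constantCoeff_eq_one_of_X_pow_one_dvd_sub
    (X_pow_dvd_qPochInf_sub_one hq ((pow_one (X : R⟦X⟧)).symm ▸ hz))
  rw [h0, map_zero] at this
  exact zero_ne_one this

end QPochhammer

section InvQPoch

variable {K : Type*} [Field K]

/-- The reciprocal `1 / (q; q)_n`, extended by zero to negative `n`. -/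
def invQPoch (q : K⟦X⟧) : ℤ → K⟦X⟧
  | Int.ofNat n => (qPoch q q n)⁻¹
  | Int.negSucc _ => 0

lemma invQPoch_of_neg (q : K⟦X⟧) {n : ℤ} (h : n < 0) : invQPoch q n = 0 := by
  obtain ⟨k, rfl⟩ := Int.eq_negSucc_of_lt_zero h
  rfl

variable {q : K⟦X⟧}

lemma qPoch_mul_invQPoch (hq : X ∣ q) (n : ℕ) : qPoch q q n * invQPoch q n = 1 :=
  PowerSeries.mul_inv_cancel _ ((constantCoeff_qPoch hq n).symm ▸ one_ne_zero)

lemma qPoch_ne_zero (hq : X ∣ q) (n : ℕ) : qPoch q q n ≠ 0 :=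
  left_ne_zero_of_mul_eq_one (qPoch_mul_invQPoch hq n)

lemma invQPoch_natCast (hq : X ∣ q) (n : ℕ) :
    invQPoch q n = (1 - q ^ (n + 1)) * invQPoch q (n + 1 : ℕ) := by
  have h₁ := qPoch_mul_invQPoch hq n
  have h₂ := qPoch_mul_invQPoch hq (n + 1)
  rw [qPoch_succ, ← pow_succ'] at h₂
  refine mul_left_cancel₀ (qPoch_ne_zero hq n) ?_
  linear_combination h₁ - h₂

lemma invQPoch_sub_one (hq : X ∣ q) {n : ℤ} (h : 0 ≤ n) :
    invQPoch q (n - 1) = (1 - q ^ n.toNat) * invQPoch q n := by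
  lift n to ℕ using h
  rcases n with _ | n
  · rw [invQPoch_of_neg q (by simp)]
    simp
  · rw [Nat.cast_add_one, add_sub_cancel_right, ← Nat.cast_add_one, Int.toNat_natCast,
      invQPoch_natCast hq]

end InvQPoch

section JacobiTripleProduct

section ThetaTerm

variable {R : Type*} [CommRing R]

/-- The term `(-1) ^ n * z ^ n * q ^ (n * (n - 1) / 2)` of the theta series, for `n : ℤ`. Since `z`
need not be invertible, a second argument `v` with `z * v = q` stands for `q / z`. -/
def thetaTerm (z v q : R⟦X⟧) : ℤ → R⟦X⟧
  | Int.ofNat k => (-1) ^ k * (z ^ k * q ^ k.choose 2)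
  | Int.negSucc k => (-1) ^ (k + 1) * (v ^ (k + 1) * q ^ (k + 1).choose 2)

lemma thetaTerm_natCast (z v q : R⟦X⟧) (k : ℕ) :
    thetaTerm z v q k = (-1) ^ k * (z ^ k * q ^ k.choose 2) := rfl

lemma thetaTerm_neg_natCast (z v q : R⟦X⟧) (k : ℕ) :
    thetaTerm z v q (-k) = (-1) ^ k * (v ^ k * q ^ k.choose 2) := by
  rcases k with _ | k
  · exact (thetaTerm_natCast z v q 0).trans (by simp only [pow_zero])
  · rfl

lemma thetaTerm_zero (z v q : R⟦X⟧) : thetaTerm z v q 0 = 1 := by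
  simpa using thetaTerm_natCast z v q 0

lemma thetaTerm_neg (z v q : R⟦X⟧) (n : ℤ) : thetaTerm z v q (-n) = thetaTerm v z q n := by
  obtain ⟨k, rfl | rfl⟩ := n.eq_nat_or_neg
  · rw [thetaTerm_neg_natCast, thetaTerm_natCast]
  · rw [neg_neg, thetaTerm_natCast, thetaTerm_neg_natCast]

lemma choose_two_succ (k : ℕ) : (k + 1).choose 2 = k.choose 2 + k := by
  rw [Nat.choose_succ_succ' k 1, Nat.choose_one_right, add_comm]

lemma mul_pow_mul_thetaTerm {z v q : R⟦X⟧} (h : z * v = q) {a : ℕ} {n : ℤ} (hn : n ≤ a) :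
    z * q ^ a * thetaTerm z v q n = -(q ^ (a - n).toNat * thetaTerm z v q (n + 1)) := by
  obtain ⟨k, rfl | rfl⟩ := n.eq_nat_or_neg
  · obtain ⟨d, rfl⟩ := Nat.exists_eq_add_of_le (Int.ofNat_le.1 hn)
    rw [Nat.cast_add, add_sub_cancel_left, Int.toNat_natCast, ← Nat.cast_add_one,
      thetaTerm_natCast, thetaTerm_natCast, choose_two_succ]
    ring
  · rcases k with _ | k
    · have h₁ := thetaTerm_natCast z v q 1
      simp only [Nat.cast_one, pow_one, Nat.choose_succ_self, pow_zero] at h₁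
      simp only [Nat.cast_zero, neg_zero, thetaTerm_zero, zero_add, h₁, sub_zero,
        Int.toNat_natCast]
      ring
    · rw [show (a : ℤ) - -((k + 1 : ℕ) : ℤ) = ((a + (k + 1) : ℕ) : ℤ) by push_cast; ring,
        show -((k + 1 : ℕ) : ℤ) + 1 = -(k : ℤ) by push_cast; ring, Int.toNat_natCast,
        thetaTerm_neg_natCast, thetaTerm_neg_natCast, choose_two_succ]
      linear_combination (q ^ a * (-1) ^ (k + 1) * q ^ (k.choose 2 + k) * v ^ k) * h

lemma X_pow_dvd_thetaTerm (z v : R⟦X⟧) {q : R⟦X⟧} (hq : X ∣ q) {n : ℤ} {N : ℕ}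
    (h : N < n.natAbs) : X ^ N ∣ thetaTerm z v q n := by
  have hchoose : X ^ N ∣ q ^ n.natAbs.choose 2 := by
    refine (pow_dvd_pow X ?_).trans (pow_dvd_pow_of_dvd hq _)
    obtain ⟨k, hk⟩ := Nat.exists_eq_succ_of_ne_zero (Nat.ne_zero_of_lt h)
    rw [hk, choose_two_succ]
    omega
  obtain ⟨k, rfl | rfl⟩ := n.eq_nat_or_neg
  · rw [thetaTerm_natCast]
    exact (hchoose.mul_left _).mul_left _
  · rw [thetaTerm_neg_natCast]
    rw [Int.natAbs_neg] at hchoose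
    exact (hchoose.mul_left _).mul_left _

lemma xAdicSummable_thetaTerm (z v : R⟦X⟧) {q : R⟦X⟧} (hq : X ∣ q) :
    XAdicSummable (thetaTerm z v q) := by
  refine fun N => (Set.finite_Icc (-(N : ℤ)) N).subset fun n hn => ?_
  by_contra hc
  refine hn (X_pow_dvd_thetaTerm z v hq ?_)
  simp only [Set.mem_Icc] at hc
  omega

end ThetaTerm

variable {K : Type*} [Field K]

/-- The `n`-th term of the finite Jacobi triple product, divided by `(q; q)_{a+b}`. -/
def jacobiSummand (z v q : K⟦X⟧) (a b n : ℤ) : K⟦X⟧ :=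
  thetaTerm z v q n * (invQPoch q (a - n) * invQPoch q (b + n))

lemma jacobiSummand_of_lt (z v q : K⟦X⟧) {a b n : ℤ} (h : a < n) :
    jacobiSummand z v q a b n = 0 := by
  rw [jacobiSummand, invQPoch_of_neg q (sub_neg.2 h), zero_mul, mul_zero]

lemma jacobiSummand_of_lt_neg (z v q : K⟦X⟧) {a b n : ℤ} (h : n < -b) :
    jacobiSummand z v q a b n = 0 := by
  rw [jacobiSummand, invQPoch_of_neg (n := b + n) q (by omega), mul_zero, mul_zero]

lemma jacobiSummand_neg (z v q : K⟦X⟧) (a b n : ℤ) :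
    jacobiSummand z v q a b (-n) = jacobiSummand v z q b a n := by
  rw [jacobiSummand, jacobiSummand, thetaTerm_neg, sub_neg_eq_add, ← sub_eq_add_neg,
    mul_comm (invQPoch q _)]

lemma xAdicSummable_jacobiSummand (z v q : K⟦X⟧) (a b : ℤ) :
    XAdicSummable (jacobiSummand z v q a b) := by
  refine fun N => (Set.finite_Icc (-b) a).subset fun n hn => ?_
  by_contra hc
  rw [Set.mem_Icc, not_and_or, not_le, not_le] at hc
  have hzero := hc.elim (jacobiSummand_of_lt_neg z v q) (jacobiSummand_of_lt z v q)
  exact hn (hzero ▸ dvd_zero _)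

variable {z v q : K⟦X⟧}

lemma mul_pow_mul_jacobiSummand (hzv : z * v = q) (a : ℕ) (b n : ℤ) :
    z * q ^ a * jacobiSummand z v q a b n =
      -(q ^ (a - n).toNat * jacobiSummand z v q (a + 1) (b - 1) (n + 1)) := by
  rcases le_or_gt n a with hn | hn
  · simp only [jacobiSummand, ← mul_assoc, mul_pow_mul_thetaTerm hzv hn]
    rw [add_sub_add_right_eq_sub, sub_add_add_cancel, neg_mul, neg_mul]
  · rw [jacobiSummand_of_lt z v q hn, jacobiSummand_of_lt z v q (by omega), mul_zero, mul_zero,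
      neg_zero]

lemma jacobiSummand_add_pow_mul (hq : X ∣ q) (a b : ℕ) (n : ℤ) :
    jacobiSummand z v q a b n + q ^ (a + 1 - n).toNat * jacobiSummand z v q (a + 1) (b - 1) n =
      (1 - q * q ^ (a + b)) * jacobiSummand z v q (a + 1) b n := by
  by_cases h₁ : a + 1 < n
  · simp [jacobiSummand_of_lt, h₁, (lt_add_one (a : ℤ)).trans h₁]
  by_cases h₂ : n < -b
  · simp [jacobiSummand_of_lt_neg, h₂, show n < 1 - (b : ℤ) by omega]
  have r₁ := invQPoch_sub_one hq (n := a + 1 - n) (by omega)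
  have r₂ := invQPoch_sub_one hq (n := b + n) (by omega)
  have hexp : q * q ^ (a + b) = q ^ (a + 1 - n : ℤ).toNat * q ^ (b + n : ℤ).toNat := by
    rw [← pow_succ', ← pow_add]
    congr 1
    omega
  rw [sub_right_comm, add_sub_cancel_right] at r₁
  rw [add_sub_right_comm] at r₂
  rw [jacobiSummand, jacobiSummand, jacobiSummand, r₁, r₂, hexp]
  ring

variable [TopologicalSpace K] [T2Space K]

lemma X_pow_dvd_qPoch_mul_qPochInf_mul_invQPoch_sub_one (hq : X ∣ q) {a b N : ℕ} (ha : N ≤ a)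
    (hb : N ≤ b) :
    X ^ N ∣ qPoch q q (a + b) * qPochInf q q * (invQPoch q a * invQPoch q b) - 1 := by
  have hpow {c : ℕ} (hc : N ≤ c) : X ^ N ∣ q * q ^ c :=
    ((pow_dvd_pow X hc).trans (pow_dvd_pow_of_dvd hq c)).mul_left q
  have hfin := X_pow_dvd_qPoch_sub_one q (hpow hb) a
  have hinf := X_pow_dvd_qPochInf_sub_one hq (hpow ha)
  convert dvd_mul_sub_mul hfin hinf using 1
  rw [qPochInf_eq_qPoch_mul hq q a, add_comm, qPoch_add]
  linear_combination qPoch (q * q ^ b) q a * qPochInf (q * q ^ a) q *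
    (qPoch q q b * invQPoch q b * qPoch_mul_invQPoch hq a + qPoch_mul_invQPoch hq b)

lemma X_pow_dvd_jacobiSummand_sub_thetaTerm (z v : K⟦X⟧) (hq : X ∣ q) (N : ℕ) (n : ℤ) :
    X ^ N ∣ qPoch q q (2 * N + 2 * N) * qPochInf q q *
      jacobiSummand z v q (2 * N : ℕ) (2 * N : ℕ) n - thetaTerm z v q n := by
  have hfactor : qPoch q q (2 * N + 2 * N) * qPochInf q q *
      jacobiSummand z v q (2 * N : ℕ) (2 * N : ℕ) n - thetaTerm z v q n = thetaTerm z v q n *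
        (qPoch q q (2 * N + 2 * N) * qPochInf q q *
          (invQPoch q ((2 * N : ℕ) - n) * invQPoch q ((2 * N : ℕ) + n)) - 1) := by
    rw [jacobiSummand]
    ring
  rw [hfactor]
  rcases lt_or_ge N n.natAbs with hn | hn
  · exact (X_pow_dvd_thetaTerm z v hq hn).mul_right _
  obtain ⟨a, ha⟩ := Int.eq_ofNat_of_zero_le (show 0 ≤ ((2 * N : ℕ) : ℤ) - n by omega)
  obtain ⟨b, hb⟩ := Int.eq_ofNat_of_zero_le (show 0 ≤ ((2 * N : ℕ) : ℤ) + n by omega)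
  rw [ha, hb, show 2 * N + 2 * N = a + b by omega]
  exact (X_pow_dvd_qPoch_mul_qPochInf_mul_invQPoch_sub_one hq (by omega) (by omega)).mul_left _

variable [IsTopologicalRing K]

lemma one_sub_mul_tsum_jacobiSummand (hq : X ∣ q) (hzv : z * v = q)
    (a b : ℕ) :
    (1 - z * q ^ a) * ∑' n, jacobiSummand z v q a b n =
      (1 - q * q ^ (a + b)) * ∑' n, jacobiSummand z v q (a + 1) b n := by
  have hsum := xAdicSummable_jacobiSummand z v q
  have hshift : z * q ^ a * ∑' n, jacobiSummand z v q a b n =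
      -∑' n : ℤ, q ^ (a + 1 - n).toNat * jacobiSummand z v q (a + 1) (b - 1) n := by
    rw [← (hsum a b).tsum_mul_left, ← tsum_neg,
      ← (Equiv.addRight (1 : ℤ)).tsum_eq fun n : ℤ => -(q ^ _ * _)]
    refine tsum_congr fun n => ?_
    rw [mul_pow_mul_jacobiSummand hzv, Equiv.coe_addRight, add_sub_add_right_eq_sub]
  rw [sub_mul, one_mul, hshift, sub_neg_eq_add, ← (hsum _ _).tsum_add ((hsum _ _).mul_left _),
    ← (hsum _ _).tsum_mul_left]
  exact tsum_congr (jacobiSummand_add_pow_mul hq a b)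

lemma qPoch_mul_qPoch_succ (hq : X ∣ q) (hzv : z * v = q) {a b : ℕ}
    (h : qPoch z q a * qPoch v q b = qPoch q q (a + b) * ∑' n, jacobiSummand z v q a b n) :
    qPoch z q (a + 1) * qPoch v q b =
      qPoch q q (a + 1 + b) * ∑' n, jacobiSummand z v q (a + 1 : ℕ) b n := by
  rw [add_right_comm, qPoch_succ, qPoch_succ, Nat.cast_succ, mul_assoc (qPoch q q _),
    ← one_sub_mul_tsum_jacobiSummand hq hzv]
  linear_combination (1 - z * q ^ a) * h

theorem finite_jacobi_triple_product (hq : X ∣ q) (hzv : z * v = q) (a b : ℕ) :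
    qPoch z q a * qPoch v q b = qPoch q q (a + b) * ∑' n, jacobiSummand z v q a b n := by
  have hzero : qPoch v q 0 * qPoch z q 0 = qPoch q q (0 + 0) *
      ∑' n, jacobiSummand v z q (0 : ℕ) (0 : ℕ) n := by
    have h₁ := qPoch_mul_invQPoch hq 0
    rw [qPoch_zero, one_mul, Nat.cast_zero] at h₁
    rw [tsum_eq_single 0 fun n hn => ?_]
    · simp [jacobiSummand, thetaTerm_zero, h₁, qPoch_zero]
    · rcases lt_or_gt_of_ne hn with hn | hn
      · exact jacobiSummand_of_lt_neg v z q (by simpa using hn)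
      · exact jacobiSummand_of_lt v z q (by simpa using hn)
  have hright : qPoch v q b * qPoch z q 0 = qPoch q q (b + 0) *
      ∑' n, jacobiSummand v z q b (0 : ℕ) n := by
    induction b with
    | zero => exact hzero
    | succ b ih => exact qPoch_mul_qPoch_succ hq ((mul_comm v z).trans hzv) ih
  induction a with
  | zero =>
    rw [mul_comm, hright, add_comm, ← (Equiv.neg ℤ).tsum_eq]
    exact congrArg _ (tsum_congr fun n => jacobiSummand_neg v z q b 0 n)
  | succ a ih => exact qPoch_mul_qPoch_succ hq hzv ih

theorem jacobi_triple_product (hq : X ∣ q) (hzv : z * v = q) :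
    qPochInf z q * qPochInf v q * qPochInf q q = ∑' n, thetaTerm z v q n := by
  refine eq_of_forall_X_pow_dvd_sub fun N => ?_
  have hfin := finite_jacobi_triple_product hq hzv (2 * N) (2 * N)
  have hprod : X ^ N ∣ qPochInf z q * qPochInf v q - qPoch z q (2 * N) * qPoch v q (2 * N) :=
    (pow_dvd_pow X (by omega)).trans (dvd_mul_sub_mul
      (X_pow_dvd_qPochInf_sub_qPoch_self hq z (2 * N))
      (X_pow_dvd_qPochInf_sub_qPoch_self hq v (2 * N)))
  have hjacobi := xAdicSummable_jacobiSummand z v q (2 * N : ℕ) (2 * N : ℕ)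
  have hsum := hjacobi.mul_left fun _ => qPoch q q (2 * N + 2 * N) * qPochInf q q
  have hθ := xAdicSummable_thetaTerm z v hq
  have hseries : X ^ N ∣ qPoch z q (2 * N) * qPoch v q (2 * N) * qPochInf q q -
      ∑' n, thetaTerm z v q n := by
    rw [hfin, mul_right_comm, ← hjacobi.tsum_mul_left, ← hsum.tsum_sub hθ]
    refine XAdicSummable.X_pow_dvd_tsum ?_ (X_pow_dvd_jacobiSummand_sub_thetaTerm z v hq N)
    simpa only [sub_eq_add_neg] using hsum.add hθ.neg
  convert dvd_add (hprod.mul_right (qPochInf q q)) hseries using 1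
  ring

end JacobiTripleProduct

section QBinomialTheorem

variable {K : Type*} [Field K] [TopologicalSpace K]

/-- The series `∑ (a; q)_k / (q; q)_k * b ^ k` of the `q`-binomial theorem. -/
def qBinomialSeries (q a b : K⟦X⟧) : K⟦X⟧ := ∑' k : ℕ, qPoch a q k * invQPoch q k * b ^ k

variable [T2Space K] [IsTopologicalRing K] {q : K⟦X⟧}

lemma one_sub_mul_qBinomialSeries (hq : X ∣ q) (a : K⟦X⟧) {b : K⟦X⟧} (hb : X ∣ b) :
    (1 - b) * qBinomialSeries q a b = (1 - a * b) * qBinomialSeries q a (b * q) := by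
  have hsum {c : K⟦X⟧} (hc : X ∣ c) :
      XAdicSummable fun k : ℕ => qPoch a q k * invQPoch q k * c ^ k :=
    .of_X_pow_dvd_nat fun k => (pow_dvd_pow_of_dvd hc k).mul_left _
  have h₁ := hsum hb
  have h₂ := hsum (hb.mul_right q)
  have hterm (k : ℕ) :
      qPoch a q (k + 1) * invQPoch q (k + 1 : ℕ) * b ^ (k + 1) -
          qPoch a q (k + 1) * invQPoch q (k + 1 : ℕ) * (b * q) ^ (k + 1) =
        b * (qPoch a q k * invQPoch q k * b ^ k -
          a * (qPoch a q k * invQPoch q k * (b * q) ^ k)) := by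
    rw [invQPoch_natCast hq k, qPoch_succ]
    ring
  have hdiff : qBinomialSeries q a b - qBinomialSeries q a (b * q) =
      b * (qBinomialSeries q a b - a * qBinomialSeries q a (b * q)) := by
    have h₃ := h₂.mul_left fun _ => a
    simp only [qBinomialSeries]
    rw [← h₁.tsum_sub h₂, (h₁.summable.sub h₂.summable).tsum_eq_zero_add, pow_zero, pow_zero,
      sub_self, zero_add, tsum_congr hterm, ← h₂.tsum_mul_left, ← h₁.tsum_sub h₃]
    exact (h₁.summable.sub h₃.summable).tsum_mul_left b
  linear_combination hdiff

lemma qPoch_mul_qBinomialSeries (hq : X ∣ q) (a : K⟦X⟧) {b : K⟦X⟧} (hb : X ∣ b) (n : ℕ) :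
    qPoch b q n * qBinomialSeries q a b =
      qPoch (a * b) q n * qBinomialSeries q a (b * q ^ n) := by
  induction n with
  | zero => simp only [qPoch_zero, pow_zero, mul_one]
  | succ n ih =>
    have hstep := one_sub_mul_qBinomialSeries hq a (hb.mul_right (q ^ n))
    rw [qPoch_succ, qPoch_succ, pow_succ, ← mul_assoc b]
    linear_combination (1 - b * q ^ n) * ih + qPoch (a * b) q n * hstep

lemma X_pow_dvd_qBinomialSeries_sub_one (hq : X ∣ q) (a : K⟦X⟧) {b : K⟦X⟧} (hb : X ∣ b) {N : ℕ}
    (hN : X ^ N ∣ b) : X ^ N ∣ qBinomialSeries q a b - 1 := by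
  have hsum : XAdicSummable fun k : ℕ => qPoch a q k * invQPoch q k * b ^ k :=
    .of_X_pow_dvd_nat fun k => (pow_dvd_pow_of_dvd hb k).mul_left _
  have hzero : qPoch a q 0 * invQPoch q (0 : ℕ) * b ^ 0 = 1 := by
    rw [pow_zero, mul_one, qPoch_zero, ← qPoch_zero q q, qPoch_mul_invQPoch hq, qPoch_zero]
  rw [qBinomialSeries, hsum.summable.tsum_eq_zero_add, hzero, add_sub_cancel_left]
  exact (hsum.comp_injective (add_left_injective 1)).X_pow_dvd_tsum fun k =>
    (hN.trans (dvd_pow_self b k.succ_ne_zero)).mul_left _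

theorem q_binomial_theorem (hq : X ∣ q) (a : K⟦X⟧) {b : K⟦X⟧} (hb : X ∣ b) :
    qPochInf b q * qBinomialSeries q a b = qPochInf (a * b) q := by
  refine eq_of_forall_X_pow_dvd_sub fun N => ?_
  have hN : X ^ N ∣ b * q ^ N := (pow_dvd_pow_of_dvd hq N).mul_left b
  have h₁ := (X_pow_dvd_qPochInf_sub_qPoch_self hq b N).mul_right (qBinomialSeries q a b)
  have h₂ := X_pow_dvd_qPochInf_sub_qPoch_self hq (a * b) N
  have h₃ := (X_pow_dvd_qBinomialSeries_sub_one hq a (hb.mul_right (q ^ N)) hN).mul_left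
    (qPoch (a * b) q N)
  convert dvd_sub (dvd_add h₁ h₃) h₂ using 1
  linear_combination qPoch_mul_qBinomialSeries hq a hb N

end QBinomialTheorem

section ConjugateBailey

lemma eq_of_add_X_pow_mul_succ_eq {R : Type*} [CommRing R] {f g : ℕ → R⟦X⟧} {c : R⟦X⟧}
    (hf : ∀ k, f k + X ^ (k + 1) * f (k + 1) = c) (hg : ∀ k, g k + X ^ (k + 1) * g (k + 1) = c) :
    f = g := by
  have hdvd (N k : ℕ) : X ^ N ∣ f k - g k := by
    induction N generalizing k with
    | zero => simp
    | succ N ih =>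
      have hdiff : f k - g k = -(X ^ k * (X * (f (k + 1) - g (k + 1)))) := by
        linear_combination hf k - hg k
      rw [hdiff, pow_succ', dvd_neg]
      exact (mul_dvd_mul_left X (ih (k + 1))).mul_left _
  exact funext fun k => eq_of_forall_X_pow_dvd_sub fun N => hdvd N k

lemma xAdicSummable_X_pow_mul_invQPoch_mul_invQPoch (k : ℕ) :
    XAdicSummable fun m : ℕ => X ^ m * (invQPoch (X : ℂ⟦X⟧) m * invQPoch X (m + k : ℕ)) :=
  .of_X_pow_dvd_nat fun _ => Dvd.intro _ rfl

lemma sum_range_X_pow_mul_invQPoch (k M : ℕ) :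
    ∑ m ∈ Finset.range (M + 1), (X ^ m * (invQPoch (X : ℂ⟦X⟧) m * invQPoch X (m + k : ℕ)) +
        X ^ (k + 1) * (X ^ m * (invQPoch X m * invQPoch X (m + (k + 1) : ℕ)))) =
      invQPoch X M * invQPoch X (M + 1 + k : ℕ) := by
  have hrec (m : ℕ) := invQPoch_natCast (dvd_refl (X : ℂ⟦X⟧)) (m + k)
  induction M with
  | zero =>
    have h₀ := qPoch_mul_invQPoch (dvd_refl (X : ℂ⟦X⟧)) 0
    have hk := hrec 0
    rw [qPoch_zero, one_mul] at h₀
    rw [zero_add] at hk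
    simp only [zero_add, Finset.sum_range_one, h₀, hk, add_comm 1 k]
    ring
  | succ M ih =>
    rw [Finset.sum_range_succ, ih, hrec (M + 1), invQPoch_natCast dvd_rfl M,
      show M + 1 + (k + 1) = M + 1 + k + 1 by ring, show M + 1 + 1 + k = M + 1 + k + 1 by ring]
    ring

/-- Euler's product `(q; q)_∞`. -/
def eulerProduct : ℂ⟦X⟧ := qPochInf X X

lemma eulerProduct_ne_zero : eulerProduct ≠ 0 := qPochInf_ne_zero dvd_rfl dvd_rfl

lemma eulerProduct_eq_qPoch_mul (n : ℕ) :
    eulerProduct = qPoch X X n * qPochInf (X ^ (n + 1)) X := by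
  rw [eulerProduct, qPochInf_eq_qPoch_mul dvd_rfl X n, pow_succ']

lemma X_pow_dvd_eulerProduct_mul_invQPoch_sub_one (n : ℕ) :
    X ^ n ∣ eulerProduct * invQPoch X n - 1 := by
  convert X_pow_dvd_qPochInf_sub_one (dvd_refl (X : ℂ⟦X⟧))
    (pow_dvd_pow X n.le_succ) using 1
  rw [eulerProduct_eq_qPoch_mul n]
  linear_combination qPochInf (X ^ (n + 1)) X * qPoch_mul_invQPoch (dvd_refl (X : ℂ⟦X⟧)) n

/-- The partial theta series `∑ (-1) ^ r * q ^ (r * (r + 1) / 2 + k * r)` over `r ≥ 0`. -/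
def partialTheta (k : ℕ) : ℂ⟦X⟧ := ∑' r : ℕ, (-1) ^ r * X ^ ((r + 1).choose 2 + k * r)

lemma xAdicSummable_partialTheta (k : ℕ) :
    XAdicSummable fun r : ℕ => (-1 : ℂ⟦X⟧) ^ r * X ^ ((r + 1).choose 2 + k * r) := by
  refine .of_X_pow_dvd_nat fun r => (pow_dvd_pow X ?_).mul_left _
  rw [choose_two_succ, add_assoc]
  exact (Nat.le_add_right r _).trans (Nat.le_add_left _ _)

lemma partialTheta_add_X_pow_mul (k : ℕ) :
    partialTheta k + X ^ (k + 1) * partialTheta (k + 1) = 1 := by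
  have hterm (r : ℕ) : (-1 : ℂ⟦X⟧) ^ (r + 1) * X ^ ((r + 1 + 1).choose 2 + k * (r + 1)) =
      -(X ^ (k + 1) * ((-1) ^ r * X ^ ((r + 1).choose 2 + (k + 1) * r))) := by
    rw [choose_two_succ (r + 1)]
    ring
  rw [partialTheta, (xAdicSummable_partialTheta k).summable.tsum_eq_zero_add, tsum_congr hterm,
    tsum_neg, (xAdicSummable_partialTheta (k + 1)).tsum_mul_left, partialTheta]
  simp

lemma eulerProduct_sq_mul_tsum_add (k : ℕ) :
    eulerProduct ^ 2 * ∑' m : ℕ, X ^ m * (invQPoch X m * invQPoch X (m + k : ℕ)) +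
      X ^ (k + 1) * (eulerProduct ^ 2 *
        ∑' m : ℕ, X ^ m * (invQPoch X m * invQPoch X (m + (k + 1) : ℕ))) = 1 := by
  have h₁ := xAdicSummable_X_pow_mul_invQPoch_mul_invQPoch k
  have h₂ := xAdicSummable_X_pow_mul_invQPoch_mul_invQPoch (k + 1)
  rw [mul_left_comm, ← mul_add, ← h₂.tsum_mul_left, ← h₁.tsum_add (h₂.mul_left _)]
  refine eq_of_forall_X_pow_dvd_sub fun N => ?_
  have hdvd (m : ℕ) : X ^ m ∣ X ^ m * (invQPoch (X : ℂ⟦X⟧) m * invQPoch X (m + k : ℕ)) +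
      X ^ (k + 1) * (X ^ m * (invQPoch X m * invQPoch X (m + (k + 1) : ℕ))) :=
    dvd_add (Dvd.intro _ rfl) ((Dvd.intro _ rfl).mul_left _)
  have htail := (pow_dvd_pow X N.le_succ).trans
    ((XAdicSummable.X_pow_dvd_tsum_sub_sum_range hdvd (N + 1)).mul_left (eulerProduct ^ 2))
  rw [sum_range_X_pow_mul_invQPoch] at htail
  have hhead := dvd_mul_sub_mul (X_pow_dvd_eulerProduct_mul_invQPoch_sub_one N)
    ((pow_dvd_pow X (by omega)).trans (X_pow_dvd_eulerProduct_mul_invQPoch_sub_one (N + 1 + k)))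
  convert dvd_add htail hhead using 1
  ring

lemma eulerProduct_sq_mul_tsum (k : ℕ) :
    eulerProduct ^ 2 * ∑' m : ℕ, X ^ m * (invQPoch X m * invQPoch X (m + k : ℕ)) =
      partialTheta k :=
  congrFun (eq_of_add_X_pow_mul_succ_eq eulerProduct_sq_mul_tsum_add partialTheta_add_X_pow_mul) k

/-- The conjugate Bailey coefficient `(q; q)_∞² * ∑ q ^ (N + 1) / ((q; q)_{N+1-j} (q; q)_{N+j})`. -/
def conjugateBailey (j : ℤ) : ℂ⟦X⟧ :=
  eulerProduct ^ 2 * ∑' N : ℕ, X ^ (N + 1) * (invQPoch X (N + 1 - j) * invQPoch X (N + j))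

lemma xAdicSummable_conjugateBailey (j : ℤ) : XAdicSummable fun N : ℕ =>
    X ^ (N + 1) * (invQPoch (X : ℂ⟦X⟧) (N + 1 - j) * invQPoch X (N + j)) :=
  .of_X_pow_dvd_nat fun N => (pow_dvd_pow X N.le_succ).mul_right _

lemma conjugateBailey_one_sub (j : ℤ) : conjugateBailey (1 - j) = conjugateBailey j := by
  refine congrArg (eulerProduct ^ 2 * ·) (tsum_congr fun N => ?_)
  rw [mul_comm (invQPoch X _), add_sub_assoc, add_sub_assoc, sub_sub_cancel]

lemma conjugateBailey_natCast_add_one (i : ℕ) :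
    conjugateBailey (i + 1) = X ^ (i + 1) * partialTheta (2 * i + 1) := by
  rw [conjugateBailey, ← eulerProduct_sq_mul_tsum, mul_left_comm,
    ← (xAdicSummable_X_pow_mul_invQPoch_mul_invQPoch _).tsum_mul_left,
    ← (add_left_injective i).tsum_eq]
  · refine congrArg _ (tsum_congr fun m => ?_)
    rw [show ((m + i : ℕ) : ℤ) + 1 - (i + 1) = m by push_cast; ring,
      show ((m + i : ℕ) : ℤ) + (i + 1) = ((m + (2 * i + 1) : ℕ) : ℤ) by push_cast; ring]
    ring
  · intro N hN
    by_contra hc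
    have hlt : N < i := not_le.1 fun h => hc ⟨N - i, Nat.sub_add_cancel h⟩
    have hneg : (N : ℤ) + 1 - (i + 1) < 0 := by omega
    exact hN (by simp only [invQPoch_of_neg X hneg, zero_mul, mul_zero])

lemma xAdicSummable_X_pow_mul_jacobiSummand (z v : ℂ⟦X⟧) : XAdicSummable fun p : ℕ × ℤ =>
    X ^ (p.1 + 1) * jacobiSummand z v X (p.1 + 1 : ℕ) p.1 p.2 := by
  refine fun M => ((Set.finite_lt_nat M).prod (Set.finite_Icc (-(M : ℤ)) M)).subset ?_
  rintro ⟨N, j⟩ hN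
  have hNM : N < M := by
    by_contra hc
    exact hN ((pow_dvd_pow X (by omega)).mul_right _)
  refine ⟨hNM, ?_⟩
  by_contra hc
  rw [Set.mem_Icc, not_and_or, not_le, not_le] at hc
  rcases hc with hc | hc
  · have hlt : j < -(N : ℤ) := by omega
    exact hN (by simp only [jacobiSummand_of_lt_neg z v X hlt, mul_zero, dvd_zero])
  · have hlt : ((N + 1 : ℕ) : ℤ) < j := by omega
    exact hN (by simp only [jacobiSummand_of_lt z v X hlt, mul_zero, dvd_zero])

theorem tsum_X_pow_mul_qPoch_mul_qPoch {z v : ℂ⟦X⟧} (hzv : z * v = X) :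
    ∑' N : ℕ, X ^ (N + 1) * (qPochInf (X ^ (2 * N + 2)) X * eulerProduct *
        (qPoch z X (N + 1) * qPoch v X N)) =
      ∑' j : ℤ, thetaTerm z v X j * conjugateBailey j := by
  have hsum := xAdicSummable_X_pow_mul_jacobiSummand z v
  have hrow (N : ℕ) : X ^ (N + 1) * (qPochInf (X ^ (2 * N + 2)) X * eulerProduct *
      (qPoch z X (N + 1) * qPoch v X N)) =
        eulerProduct ^ 2 * ∑' j, X ^ (N + 1) * jacobiSummand z v X (N + 1 : ℕ) N j := by
    rw [(xAdicSummable_jacobiSummand z v X _ _).tsum_mul_left,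
      finite_jacobi_triple_product dvd_rfl hzv]
    have hsplit := eulerProduct_eq_qPoch_mul (N + 1 + N)
    rw [show N + 1 + N + 1 = 2 * N + 2 by ring] at hsplit
    linear_combination (-X ^ (N + 1) * eulerProduct *
      ∑' j, jacobiSummand z v X (N + 1 : ℕ) N j) * hsplit
  have hcol (j : ℤ) : eulerProduct ^ 2 * ∑' N : ℕ, X ^ (N + 1) *
      jacobiSummand z v X (N + 1 : ℕ) N j = thetaTerm z v X j * conjugateBailey j := by
    rw [conjugateBailey, mul_left_comm, ← (xAdicSummable_conjugateBailey j).tsum_mul_left]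
    refine congrArg _ (tsum_congr fun N => ?_)
    rw [jacobiSummand, Nat.cast_add_one]
    ring
  rw [tsum_congr hrow, ← tsum_congr hcol, hsum.tsum_fiber.tsum_mul_left, hsum.tsum_comm]
  exact (hsum.swap.tsum_fiber.tsum_mul_left _).symm

lemma tsum_thetaTerm_X_one_mul_conjugateBailey :
    ∑' j : ℤ, thetaTerm X 1 X j * conjugateBailey j = X * eulerProduct ^ 2 := by
  rw [← tsum_X_pow_mul_qPoch_mul_qPoch (mul_one X), tsum_eq_single 0]
  · rw [eulerProduct_eq_qPoch_mul 1]
    simp only [qPoch_zero, qPoch_succ]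
    ring
  · intro N hN
    obtain ⟨k, rfl⟩ := Nat.exists_eq_succ_of_ne_zero hN
    have hzero : qPoch (1 : ℂ⟦X⟧) X k.succ = 0 :=
      Finset.prod_eq_zero (Finset.mem_range.2 k.succ_pos) (by simp)
    rw [hzero, mul_zero, mul_zero, mul_zero]

end ConjugateBailey

section PartitionSeries

variable {R : Type*} [CommRing R]

lemma finite_setOf_isPartition_sum_lt (N : ℕ) :
    {μ : Multiset ℕ | IsPartition μ ∧ μ.sum < N}.Finite := by
  refine ((Finset.range N).finite_toSet.biUnion fun m _ =>
    Set.finite_range (Nat.Partition.parts (n := m))).subset fun μ hμ => ?_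
  simp only [Set.mem_iUnion]
  exact ⟨μ.sum, Finset.mem_range.2 hμ.2, ⟨μ, fun hi => hμ.1 _ hi, rfl⟩, rfl⟩

lemma XAdicSummable.of_isPartition {f : Multiset ℕ → R⟦X⟧}
    (hzero : ∀ μ, ¬ IsPartition μ → f μ = 0) (hdvd : ∀ μ, X ^ μ.sum ∣ f μ) :
    XAdicSummable f := by
  refine fun N => (finite_setOf_isPartition_sum_lt N).subset fun μ hμ => ⟨?_, ?_⟩
  · by_contra hc
    exact hμ (hzero μ hc ▸ dvd_zero _)
  · by_contra hc
    exact hμ ((pow_dvd_pow X (not_lt.1 hc)).trans (hdvd μ))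

lemma XAdicSummable.of_isPartition_pair {f : Multiset ℕ × Multiset ℕ → R⟦X⟧}
    (hzero : ∀ p, ¬ (IsPartition p.1 ∧ IsPartition p.2) → f p = 0)
    (hdvd : ∀ p, X ^ (p.1.sum + p.2.sum) ∣ f p) : XAdicSummable f := by
  refine fun N => ((finite_setOf_isPartition_sum_lt N).prod
    (finite_setOf_isPartition_sum_lt N)).subset fun p hp => ?_
  have hpart : IsPartition p.1 ∧ IsPartition p.2 := by
    by_contra hc
    exact hp (hzero p hc ▸ dvd_zero _)
  have hsum : p.1.sum + p.2.sum < N := by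
    by_contra hc
    exact hp ((pow_dvd_pow X (not_lt.1 hc)).trans (hdvd p))
  exact ⟨⟨hpart.1, by omega⟩, ⟨hpart.2, by omega⟩⟩

lemma X_pow_sum_dvd_prod_map {u : ℕ → R⟦X⟧} (hu : ∀ i, X ^ i ∣ u i) (μ : Multiset ℕ) :
    X ^ μ.sum ∣ (μ.map u).prod := by
  induction μ using Multiset.induction_on with
  | empty => simp
  | cons a μ ih =>
    simp only [Multiset.sum_cons, Multiset.map_cons, Multiset.prod_cons, pow_add]
    exact mul_dvd_mul (hu a) ih

lemma tsum_multiset_eq_tsum_cons {α M : Type*} [AddCommMonoid M] [TopologicalSpace M]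
    {f : Multiset α → M} (a : α) (h : ∀ μ, a ∉ μ → f μ = 0) : ∑' μ, f μ = ∑' μ, f (a ::ₘ μ) := by
  refine (Function.Injective.tsum_eq (fun s t => (Multiset.cons_inj_right a).1)
    fun μ hμ => ?_).symm
  obtain ⟨t, rfl⟩ := Multiset.exists_cons_of_mem (not_imp_comm.1 (h μ) hμ)
  exact ⟨t, rfl⟩

lemma xAdicSummable_prod_map {u : ℕ → R⟦X⟧} (hu : ∀ i, X ^ i ∣ u i) {a : ℕ} (ha : 0 < a) :
    XAdicSummable fun μ : Multiset ℕ => if ∀ x ∈ μ, a ≤ x then (μ.map u).prod else 0 := by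
  refine .of_isPartition (fun μ hμ => if_neg fun hc => hμ fun x hx => ha.trans_le (hc x hx))
    fun μ => ?_
  split_ifs
  · exact X_pow_sum_dvd_prod_map hu μ
  · exact dvd_zero _

lemma xAdicSummable_box {n : ℕ} (hn : 0 < n) (m k : ℕ) : XAdicSummable fun ν : Multiset ℕ =>
    if ν.card = k ∧ ∀ x ∈ ν, n ≤ x ∧ x < n + m then (X : R⟦X⟧) ^ ν.sum else 0 := by
  refine .of_isPartition (fun μ hμ => if_neg fun hc => hμ fun x hx => hn.trans_le (hc.2 x hx).1)
    fun μ => ?_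
  split_ifs
  · exact dvd_rfl
  · exact dvd_zero _

variable [TopologicalSpace R]

/-- The generating function of the partitions with all parts at least `a`, a part `x` having
weight `u x`. -/
def partitionSeries (u : ℕ → R⟦X⟧) (a : ℕ) : R⟦X⟧ :=
  ∑' μ : Multiset ℕ, if ∀ x ∈ μ, a ≤ x then (μ.map u).prod else 0

variable (R) in
/-- The generating function of the partitions with `k` parts, all of them in `[n, n + m)`. -/
def boxSeries (n m k : ℕ) : R⟦X⟧ :=
  ∑' ν : Multiset ℕ, if ν.card = k ∧ ∀ x ∈ ν, n ≤ x ∧ x < n + m then X ^ ν.sum else 0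

lemma boxSeries_zero_right (n m : ℕ) : boxSeries R n m 0 = 1 := by
  rw [boxSeries, tsum_eq_single 0 fun μ hμ => by simp [hμ]]
  simp

lemma boxSeries_zero_left (n k : ℕ) : boxSeries R n 0 (k + 1) = 0 := by
  refine (tsum_congr fun μ => if_neg ?_).trans tsum_zero
  rintro ⟨hcard, hlt⟩
  obtain ⟨x, hx⟩ := Multiset.card_pos_iff_exists_mem.1 (k.succ_pos.trans_eq hcard.symm)
  have := hlt x hx
  omega

variable [T2Space R] [IsTopologicalRing R]

lemma X_pow_dvd_partitionSeries_sub_one {u : ℕ → R⟦X⟧} (hu : ∀ i, X ^ i ∣ u i) {a : ℕ}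
    (ha : 0 < a) : X ^ a ∣ partitionSeries u a - 1 := by
  have hsum := xAdicSummable_prod_map hu ha
  have hsplit : partitionSeries u a - 1 = ∑' μ : Multiset ℕ, if μ = 0 then 0 else
      if ∀ x ∈ μ, a ≤ x then (μ.map u).prod else 0 := by
    rw [partitionSeries, hsum.summable.tsum_eq_add_tsum_ite 0]
    simp
  rw [hsplit]
  refine (hsum.mono fun μ => ?_).X_pow_dvd_tsum fun μ => ?_
  · split_ifs <;> simp
  · split_ifs with hμ ha'
    · exact dvd_zero _
    · obtain ⟨x, hx⟩ := Multiset.exists_mem_of_ne_zero hμ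
      exact (pow_dvd_pow X ((ha' x hx).trans (Multiset.le_sum_of_mem hx))).trans
        (X_pow_sum_dvd_prod_map hu μ)
    · exact dvd_zero _

lemma XAdicSummable.tsum_eq_tsum_fiberwise {ι κ : Type*} [DecidableEq κ] {f : ι → R⟦X⟧}
    (h : XAdicSummable f) (c : ι → κ) :
    ∑' i, f i = ∑' k, ∑' i, if c i = k then f i else 0 := by
  have hsum : XAdicSummable fun p : κ × ι => if c p.2 = p.1 then f p.2 else 0 := by
    refine fun N => ((h N).image fun i => (c i, i)).subset ?_
    rintro ⟨k, i⟩ hk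
    simp only [Set.mem_ofPred_eq] at hk
    split_ifs at hk with hc
    · exact ⟨i, hk, Prod.ext hc rfl⟩
    · exact absurd (dvd_zero _) hk
  rw [hsum.tsum_comm]
  exact tsum_congr fun i => (tsum_ite_eq' (c i) fun _ => f i).symm

lemma one_sub_mul_partitionSeries {u : ℕ → R⟦X⟧} (hu : ∀ i, X ^ i ∣ u i) {a : ℕ} (ha : 0 < a) :
    (1 - u a) * partitionSeries u a = partitionSeries u (a + 1) := by
  have hsum := xAdicSummable_prod_map hu ha
  have hdiff : partitionSeries u a - partitionSeries u (a + 1) = u a * partitionSeries u a := by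
    rw [partitionSeries, partitionSeries, ← hsum.tsum_sub (xAdicSummable_prod_map hu a.succ_pos),
      tsum_multiset_eq_tsum_cons a, ← hsum.tsum_mul_left]
    · refine tsum_congr fun μ => ?_
      simp only [Multiset.forall_mem_cons, le_refl, true_and, Nat.not_succ_le_self, false_and,
        if_false, sub_zero, Multiset.map_cons, Multiset.prod_cons, mul_ite, mul_zero]
    · intro μ hμ
      have hiff : (∀ x ∈ μ, a ≤ x) ↔ ∀ x ∈ μ, a + 1 ≤ x := forall₂_congr fun x hx =>
        ⟨fun h => lt_of_le_of_ne h (ne_of_mem_of_not_mem hx hμ).symm, fun h => by omega⟩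
      simp only [hiff, sub_self]
  linear_combination hdiff

lemma boxSeries_succ {n : ℕ} (hn : 0 < n) (m k : ℕ) :
    boxSeries R n (m + 1) (k + 1) =
      boxSeries R n m (k + 1) + X ^ (n + m) * boxSeries R n (m + 1) k := by
  rw [← sub_eq_iff_eq_add', boxSeries, boxSeries, boxSeries,
    ← (xAdicSummable_box hn _ _).tsum_sub (xAdicSummable_box hn _ _),
    tsum_multiset_eq_tsum_cons (n + m), ← (xAdicSummable_box hn _ _).tsum_mul_left]
  · refine tsum_congr fun μ => ?_
    simp [pow_add, ← add_assoc]
  · intro μ hμ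
    have hiff : (∀ x ∈ μ, n ≤ x ∧ x < n + (m + 1)) ↔ ∀ x ∈ μ, n ≤ x ∧ x < n + m :=
      forall₂_congr fun x hx => by
        have := ne_of_mem_of_not_mem hx hμ
        omega
    simp only [hiff, sub_self]

lemma boxSeries_mul_qPoch {n : ℕ} (hn : 0 < n) (m k : ℕ) :
    boxSeries R n m k * qPoch X X k = X ^ (n * k) * qPoch (X ^ m) X k := by
  induction m generalizing k with
  | zero =>
    cases k with
    | zero => simp [boxSeries_zero_right, qPoch_zero]
    | succ k =>
      have hzero : qPoch (X ^ 0) (X : R⟦X⟧) (k + 1) = 0 :=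
        Finset.prod_eq_zero (Finset.mem_range.2 k.succ_pos) (by simp)
      rw [boxSeries_zero_left, hzero, zero_mul, mul_zero]
  | succ m ihm =>
    induction k with
    | zero => simp [boxSeries_zero_right, qPoch_zero]
    | succ k ihk =>
      have hm := ihm (k + 1)
      have hsplit := qPoch_add (X ^ m) (X : R⟦X⟧) 1 k
      have hone : qPoch (X ^ m) (X : R⟦X⟧) 1 = 1 - X ^ m := by simp [qPoch]
      rw [add_comm 1 k, hone, pow_one, ← pow_succ] at hsplit
      rw [hsplit] at hm
      rw [boxSeries_succ hn]
      rw [qPoch_succ X, mul_add_one, pow_add] at hm ⊢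
      rw [qPoch_succ (X ^ (m + 1))]
      linear_combination hm + (X ^ (n + m) * (1 - X * X ^ k)) * ihk

end PartitionSeries

section StepWeight

variable {R : Type*} [CommRing R]

/-- The weight of a part `i`: parts below `b` are only weighted by their size, the parts `≥ b` are
also marked by `z`. -/
def stepWeight (z : R) (b i : ℕ) : R⟦X⟧ := if i < b then X ^ i else C z * X ^ i

lemma X_pow_dvd_stepWeight (z : R) (b i : ℕ) : X ^ i ∣ stepWeight z b i := by
  unfold stepWeight
  split_ifs
  · exact dvd_rfl
  · exact Dvd.intro_left _ rfl

lemma prod_map_stepWeight (z : R) (b : ℕ) (μ : Multiset ℕ) :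
    (μ.map (stepWeight z b)).prod = C (z ^ μ.countP (b ≤ ·)) * X ^ μ.sum := by
  induction μ using Multiset.induction_on with
  | empty => simp
  | cons a μ ih =>
    rw [Multiset.map_cons, Multiset.prod_cons, ih, Multiset.sum_cons, stepWeight]
    split_ifs with h
    · rw [Multiset.countP_cons_of_neg _ (not_le.2 h), pow_add]
      ring
    · rw [Multiset.countP_cons_of_pos _ (not_lt.1 h), pow_add, pow_add, pow_one, map_mul]
      ring

variable [TopologicalSpace R] [T2Space R] [IsTopologicalRing R]

lemma qPochInf_mul_partitionSeries_stepWeight (z : R) {a b : ℕ} (ha : 0 < a) (hab : b ≤ a) :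
    qPochInf (C z * X ^ a) X * partitionSeries (stepWeight z b) a = 1 := by
  have hshift (N : ℕ) : qPochInf (C z * X ^ a) X * partitionSeries (stepWeight z b) a =
      qPochInf (C z * X ^ (a + N)) X * partitionSeries (stepWeight z b) (a + N) := by
    induction N with
    | zero => rfl
    | succ N ih =>
      have hweight : stepWeight z b (a + N) = C z * X ^ (a + N) := if_neg (by omega)
      rw [ih, qPochInf_eq_one_sub_mul dvd_rfl, ← add_assoc,
        ← one_sub_mul_partitionSeries (X_pow_dvd_stepWeight z b) (by omega : 0 < a + N), hweight,
        mul_assoc (C z), ← pow_succ]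
      ring
  refine eq_of_forall_X_pow_dvd_sub fun N => ?_
  rw [hshift N]
  have h₁ : X ^ N ∣ qPochInf (C z * X ^ (a + N)) X - 1 :=
    X_pow_dvd_qPochInf_sub_one dvd_rfl ((pow_dvd_pow X (N.le_add_left a)).mul_left _)
  have h₂ : X ^ N ∣ partitionSeries (stepWeight z b) (a + N) - 1 :=
    (pow_dvd_pow X (N.le_add_left a)).trans
      (X_pow_dvd_partitionSeries_sub_one (X_pow_dvd_stepWeight z b) (by omega))
  simpa only [mul_one] using dvd_mul_sub_mul h₁ h₂

lemma qPoch_mul_partitionSeries_stepWeight (z : R) {n b : ℕ} (hn : 0 < n) (k : ℕ)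
    (hk : n + k ≤ b) : qPoch (X ^ n) X k * partitionSeries (stepWeight z b) n =
      partitionSeries (stepWeight z b) (n + k) := by
  induction k with
  | zero => simp [qPoch_zero]
  | succ k ih =>
    have hweight : stepWeight z b (n + k) = X ^ (n + k) := if_pos (by omega)
    rw [qPoch_succ, ← add_assoc,
      ← one_sub_mul_partitionSeries (X_pow_dvd_stepWeight z b) (by omega : 0 < n + k),
      ← ih (by omega), hweight, pow_add]
    ring

end StepWeight

section BoxSeries

variable {K : Type*} [Field K]

lemma C_mul_C_inv {z : K} (hz : z ≠ 0) : C z * C z⁻¹ = 1 := by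
  rw [← map_mul, mul_inv_cancel₀ hz, map_one]

variable [TopologicalSpace K] [T2Space K] [IsTopologicalRing K]

lemma boxSeries_eq {n : ℕ} (hn : 0 < n) (m k : ℕ) :
    boxSeries K n m k = X ^ (n * k) * (qPoch (X ^ m) X k * invQPoch X k) := by
  linear_combination invQPoch (X : K⟦X⟧) k * boxSeries_mul_qPoch (R := K) hn m k -
    boxSeries K n m k * qPoch_mul_invQPoch (dvd_refl (X : K⟦X⟧)) k

lemma X_pow_dvd_boxSeries {n : ℕ} (hn : 0 < n) (m k : ℕ) : X ^ k ∣ boxSeries K n m k := by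
  rw [boxSeries_eq hn]
  exact (pow_dvd_pow X (Nat.le_mul_of_pos_left k hn)).mul_right _

lemma qPochInf_mul_boxSeries_mul_partitionSeries (z : K) {n : ℕ} (hn : 0 < n) (k : ℕ) :
    qPochInf (C z * X ^ n) X * (boxSeries K n n k * partitionSeries (stepWeight z (n + k)) n) =
      X ^ (n * k) * (qPoch (C z * X ^ n) X k * invQPoch X k) := by
  have hsmall := qPoch_mul_partitionSeries_stepWeight z hn k le_rfl
  have hlarge := qPochInf_mul_partitionSeries_stepWeight z (n.add_pos_left hn k) le_rfl
  have hsplit := qPochInf_eq_qPoch_mul (dvd_refl (X : K⟦X⟧)) (C z * X ^ n) k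
  rw [mul_assoc, ← pow_add] at hsplit
  rw [hsplit, boxSeries_eq hn]
  linear_combination (qPoch (C z * X ^ n) X k * invQPoch X k * X ^ (n * k)) *
    (qPochInf (C z * X ^ (n + k)) X * hsmall + hlarge)

lemma qPochInf_mul_qPochInf_mul_tsum_boxSeries {z : K} (hz : z ≠ 0) {n : ℕ} (hn : 0 < n) :
    qPochInf (C z * X ^ n) X * qPochInf (C z⁻¹ * X ^ n) X *
        ∑' k : ℕ, C (z⁻¹ ^ k) * (boxSeries K n n k * partitionSeries (stepWeight z (n + k)) n) =
      qPochInf (X ^ (2 * n)) X := by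
  have hdvd : X ∣ C z⁻¹ * X ^ n := (dvd_pow_self X hn.ne').mul_left _
  have hsum : XAdicSummable fun k : ℕ => C (z⁻¹ ^ k) *
      (boxSeries K n n k * partitionSeries (stepWeight z (n + k)) n) :=
    .of_X_pow_dvd_nat fun k => ((X_pow_dvd_boxSeries hn n k).mul_right _).mul_left _
  have hprod : C z * X ^ n * (C z⁻¹ * X ^ n) = X ^ (2 * n) := by
    rw [mul_mul_mul_comm, C_mul_C_inv hz, one_mul, ← pow_add, two_mul]
  rw [← hprod, ← q_binomial_theorem dvd_rfl (C z * X ^ n) hdvd, qBinomialSeries,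
    mul_comm (qPochInf (C z * X ^ n) X), mul_assoc, ← hsum.tsum_mul_left]
  refine congrArg _ (tsum_congr fun k => ?_)
  rw [mul_left_comm, qPochInf_mul_boxSeries_mul_partitionSeries z hn k, mul_pow, ← map_pow,
    ← pow_mul]
  ring

end BoxSeries

section CrankSeries

-- The map in the definition of `sPart` elaborates to a monadic lift of the coercion `ℕ → ℕ∞`.
lemma sPart_eq_inf_map (μ : Multiset ℕ) : sPart μ = (μ.map ((↑) : ℕ → ℕ∞)).inf := by
  simp [sPart, Multiset.bind_def, Multiset.pure_def, Multiset.bind_singleton]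

lemma sPart_eq_of_forall_le {μ : Multiset ℕ} {n : ℕ} (hn : n ∈ μ) (h : ∀ x ∈ μ, n ≤ x) :
    sPart μ = n := by
  rw [sPart_eq_inf_map]
  refine le_antisymm (Multiset.inf_le (Multiset.mem_map_of_mem _ hn)) ?_
  simpa [Multiset.le_inf] using h

lemma exists_mem_forall_le {μ : Multiset ℕ} (h : μ ≠ 0) : ∃ n ∈ μ, ∀ x ∈ μ, n ≤ x := by
  obtain ⟨x, hx⟩ := Multiset.exists_mem_of_ne_zero h
  have hne : μ.toFinset.Nonempty := ⟨x, Multiset.mem_toFinset.2 hx⟩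
  exact ⟨μ.toFinset.min' hne, Multiset.mem_toFinset.1 (Finset.min'_mem _ hne), fun y hy =>
    Finset.min'_le _ _ (Multiset.mem_toFinset.2 hy)⟩

lemma inST_iff_of_forall_le {μ ν : Multiset ℕ} {n : ℕ} (hn : n ∈ μ) (h : ∀ x ∈ μ, n ≤ x) :
    InST (μ, ν) ↔ 0 < n ∧ ∀ x ∈ ν, n ≤ x ∧ x < n + n := by
  have hs : sPart μ ≤ sPart ν ↔ ∀ x ∈ ν, n ≤ x := by
    rw [sPart_eq_of_forall_le hn h, sPart_eq_inf_map]
    simp [Multiset.le_inf]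
  have hl : (lPart ν : ℕ∞) < 2 * sPart μ ↔ lPart ν < n + n := by
    rw [sPart_eq_of_forall_le hn h, ← two_mul]
    exact_mod_cast Iff.rfl
  simp only [InST, hs, hl]
  constructor
  · rintro ⟨hμ, -, -, hle, hlt⟩
    exact ⟨hμ n hn, fun x hx => ⟨hle x hx, (Multiset.le_sup hx).trans_lt hlt⟩⟩
  · rintro ⟨hpos, hν⟩
    refine ⟨fun x hx => hpos.trans_le (h x hx), fun x hx => hpos.trans_le (hν x hx).1,
      fun hμ => Multiset.notMem_zero n (hμ ▸ hn), fun x hx => (hν x hx).1, ?_⟩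
    have hle : lPart ν ≤ n + n - 1 := Multiset.sup_le.2 fun x hx => Nat.le_sub_one_of_lt (hν x hx).2
    omega

lemma paircrank_cons {μ ν : Multiset ℕ} {n : ℕ} (h : ∀ x ∈ μ, n ≤ x) :
    paircrank (n ::ₘ μ, ν) = μ.countP (n + ν.card ≤ ·) - ν.card := by
  have hs : sPart (n ::ₘ μ) = n := sPart_eq_of_forall_le (Multiset.mem_cons_self n μ) (by simpa)
  by_cases hν : ν = 0
  · simp [paircrank, hν, Multiset.countP_eq_card.2 h]
  · have hcard : ¬ n + ν.card ≤ n := by simpa using hν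
    simp only [paircrank, hν, if_false, hs, ENat.toNat_natCast,
      Multiset.countP_cons_of_neg _ hcard]

open Classical in
/-- The term `z ^ paircrank p * q ^ |p|` of the crank series, `0` for pairs outside `𝒮𝒯`. -/
def crankSummand (z : ℂ) (p : Multiset ℕ × Multiset ℕ) : ℂ⟦X⟧ :=
  if InST p then C (z ^ paircrank p) * X ^ (p.1.sum + p.2.sum) else 0

lemma xAdicSummable_crankSummand (z : ℂ) : XAdicSummable (crankSummand z) := by
  refine .of_isPartition_pair (fun p hp => if_neg fun h => hp ⟨h.1, h.2.1⟩) fun p => ?_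
  unfold crankSummand
  split_ifs
  · exact Dvd.intro_left _ rfl
  · exact dvd_zero _

/-- The generating function of `𝒮𝒯` by size, with the crank marked by `z`. -/
def crankSeries (z : ℂ) : ℂ⟦X⟧ := ∑' p, crankSummand z p

/-- The contribution to the crank series of the pair `(n ::ₘ μ, ν)` with `s(π₁) = n`, as a function
of `p = (ν, μ)`. -/
def minPartSummand (z : ℂ) (n : ℕ) (p : Multiset ℕ × Multiset ℕ) : ℂ⟦X⟧ :=
  (if ∀ x ∈ p.1, n ≤ x ∧ x < n + n then C (z⁻¹ ^ p.1.card) * X ^ (n + p.1.sum) else 0) *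
    if ∀ x ∈ p.2, n ≤ x then (p.2.map (stepWeight z (n + p.1.card))).prod else 0

lemma minPartSummand_of_forall_le {z : ℂ} (hz : z ≠ 0) {n : ℕ} (hn : 0 < n) {μ : Multiset ℕ}
    (hμ : ∀ x ∈ μ, n ≤ x) (ν : Multiset ℕ) :
    minPartSummand z n (ν, μ) = crankSummand z (n ::ₘ μ, ν) := by
  have hST := inST_iff_of_forall_le (ν := ν) (Multiset.mem_cons_self n μ)
    (Multiset.forall_mem_cons.2 ⟨le_rfl, hμ⟩)
  simp only [minPartSummand, crankSummand, hST, hn, true_and, if_pos hμ, ite_mul, zero_mul]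
  refine if_congr Iff.rfl ?_ rfl
  rw [paircrank_cons hμ, prod_map_stepWeight, Multiset.sum_cons, zpow_sub₀ hz, zpow_natCast,
    zpow_natCast, div_eq_mul_inv, ← inv_pow, map_mul]
  ring

lemma minPartSummand_of_not_forall_le (z : ℂ) {n : ℕ} {μ : Multiset ℕ} (hμ : ¬ ∀ x ∈ μ, n ≤ x)
    (ν : Multiset ℕ) : minPartSummand z n (ν, μ) = 0 := by
  rw [minPartSummand, if_neg hμ, mul_zero]

lemma xAdicSummable_minPartSummand (z : ℂ) {n : ℕ} (hn : 0 < n) :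
    XAdicSummable (minPartSummand z n) := by
  refine .of_isPartition_pair (fun p hp => ?_) fun p => ?_
  · rw [not_and_or] at hp
    rcases hp with hp | hp
    · rw [minPartSummand, if_neg fun h => hp fun x hx => hn.trans_le (h x hx).1, zero_mul]
    · exact minPartSummand_of_not_forall_le z (fun h => hp fun x hx => hn.trans_le (h x hx)) _
  · rw [minPartSummand, pow_add]
    refine mul_dvd_mul ?_ ?_ <;> split_ifs
    · exact (pow_dvd_pow X (Nat.le_add_left _ _)).mul_left _
    · exact dvd_zero _
    · exact X_pow_sum_dvd_prod_map (X_pow_dvd_stepWeight z _) _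
    · exact dvd_zero _

lemma xAdicSummable_minPartSummand_succ (z : ℂ) :
    XAdicSummable fun p : ℕ × Multiset ℕ × Multiset ℕ => minPartSummand z (p.1 + 1) p.2 := by
  intro N
  refine ((Set.finite_lt_nat N).biUnion fun n _ =>
    (xAdicSummable_minPartSummand z n.succ_pos N).image (Prod.mk n)).subset fun p hp => ?_
  simp only [Set.mem_iUnion]
  refine ⟨p.1, ?_, p.2, hp, rfl⟩
  by_contra hc
  refine hp ?_
  unfold minPartSummand
  refine Dvd.dvd.mul_right ?_ _
  have hle : N ≤ p.1 + 1 + p.2.1.sum := by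
    have : N ≤ p.1 := not_lt.1 hc
    omega
  split_ifs
  · exact (pow_dvd_pow X hle).mul_left _
  · exact dvd_zero _

lemma crankSeries_eq_tsum_minPartSummand {z : ℂ} (hz : z ≠ 0) :
    crankSeries z = ∑' (n : ℕ) (p : Multiset ℕ × Multiset ℕ), minPartSummand z (n + 1) p := by
  rw [← (xAdicSummable_minPartSummand_succ z).tsum_prod]
  have hle {p : ℕ × Multiset ℕ × Multiset ℕ} (hp : minPartSummand z (p.1 + 1) p.2 ≠ 0) :
      ∀ x ∈ p.2.2, p.1 + 1 ≤ x := not_imp_comm.1 (minPartSummand_of_not_forall_le z · p.2.1) hp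
  refine tsum_eq_tsum_of_ne_zero_bij (fun p => ((p.1.1 + 1) ::ₘ p.1.2.2, p.1.2.1)) ?_ ?_ ?_
  · rintro ⟨⟨m, ν, μ⟩, hp⟩ ⟨⟨m', ν', μ'⟩, hp'⟩ h
    simp only [Prod.mk.injEq] at h
    have hs := sPart_eq_of_forall_le (Multiset.mem_cons_self (m + 1) μ)
      (Multiset.forall_mem_cons.2 ⟨le_rfl, hle hp⟩)
    rw [h.1, sPart_eq_of_forall_le (Multiset.mem_cons_self (m' + 1) μ')
      (Multiset.forall_mem_cons.2 ⟨le_rfl, hle hp'⟩)] at hs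
    obtain rfl : m' = m := Nat.succ_injective (Nat.cast_injective hs)
    simpa [h.2] using h.1
  · rintro ⟨μ, ν⟩ hp
    have hST : InST (μ, ν) := by
      by_contra hc
      exact hp (if_neg hc)
    obtain ⟨n, hn, hmin⟩ := exists_mem_forall_le hST.2.2.1
    have hpos := hST.1 n hn
    obtain ⟨t, rfl⟩ := Multiset.exists_cons_of_mem hn
    rw [Multiset.forall_mem_cons] at hmin
    refine ⟨⟨(n - 1, ν, t), ?_⟩, ?_⟩
    · rwa [Function.mem_support, Nat.sub_add_cancel hpos,
        minPartSummand_of_forall_le hz hpos hmin.2]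
    · simp only [Nat.sub_add_cancel hpos]
  · exact fun p => (minPartSummand_of_forall_le hz p.1.1.succ_pos (hle p.2) _).symm

lemma tsum_minPartSummand_mk (z : ℂ) {n : ℕ} (hn : 0 < n) (ν : Multiset ℕ) :
    ∑' μ, minPartSummand z n (ν, μ) =
      (if ∀ x ∈ ν, n ≤ x ∧ x < n + n then C (z⁻¹ ^ ν.card) * X ^ (n + ν.sum) else 0) *
        partitionSeries (stepWeight z (n + ν.card)) n := by
  rw [partitionSeries,
    ← (xAdicSummable_prod_map (X_pow_dvd_stepWeight z (n + ν.card)) hn).tsum_mul_left]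
  rfl

lemma tsum_ite_card_eq_minPartSummand (z : ℂ) {n : ℕ} (hn : 0 < n) (k : ℕ) :
    ∑' ν : Multiset ℕ, (if ν.card = k then ∑' μ, minPartSummand z n (ν, μ) else 0) =
      X ^ n * (C (z⁻¹ ^ k) * (boxSeries ℂ n n k * partitionSeries (stepWeight z (n + k)) n)) := by
  have hterm (ν : Multiset ℕ) : (if ν.card = k then ∑' μ, minPartSummand z n (ν, μ) else 0) =
      (X ^ n * C (z⁻¹ ^ k) * partitionSeries (stepWeight z (n + k)) n) *
        if ν.card = k ∧ ∀ x ∈ ν, n ≤ x ∧ x < n + n then X ^ ν.sum else 0 := by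
    rw [tsum_minPartSummand_mk z hn, ite_and]
    split_ifs with hcard
    · rw [hcard]
      ring
    · rw [zero_mul, mul_zero]
    · rw [mul_zero]
  rw [tsum_congr hterm, (xAdicSummable_box hn n k).tsum_mul_left, ← boxSeries]
  ring

lemma tsum_minPartSummand (z : ℂ) {n : ℕ} (hn : 0 < n) :
    ∑' p, minPartSummand z n p = X ^ n * ∑' k : ℕ, C (z⁻¹ ^ k) *
      (boxSeries ℂ n n k * partitionSeries (stepWeight z (n + k)) n) := by
  have hsum := xAdicSummable_minPartSummand z hn
  have hbox : XAdicSummable fun k : ℕ => C (z⁻¹ ^ k) *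
      (boxSeries ℂ n n k * partitionSeries (stepWeight z (n + k)) n) :=
    .of_X_pow_dvd_nat fun k => ((X_pow_dvd_boxSeries hn n k).mul_right _).mul_left _
  rw [hsum.tsum_prod, hsum.tsum_fiber.tsum_eq_tsum_fiberwise Multiset.card,
    tsum_congr (tsum_ite_card_eq_minPartSummand z hn), hbox.tsum_mul_left]

/-- The theta function `∑ (-1) ^ n z ^ n Q ^ (n (n - 1) / 2) = (z; Q)_∞ (Q / z; Q)_∞ (Q; Q)_∞`. -/
def thetaSeries (z : ℂ) (Q : ℂ⟦X⟧) : ℂ⟦X⟧ := ∑' n : ℤ, thetaTerm (C z) (C z⁻¹ * Q) Q n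

/-- The numerator of the crank series over the theta function `thetaSeries z X`. -/
def crankNumerator (z : ℂ) : ℂ⟦X⟧ :=
  ∑' n : ℤ, thetaTerm (C z) (C z⁻¹ * X) X n * conjugateBailey n

lemma C_mul_C_inv_mul {K : Type*} [Field K] {z : K} (hz : z ≠ 0) (Q : K⟦X⟧) :
    C z * (C z⁻¹ * Q) = Q := by
  rw [← mul_assoc, C_mul_C_inv hz, one_mul]

lemma thetaSeries_eq_mul {z : ℂ} (hz : z ≠ 0) {Q : ℂ⟦X⟧} (hQ : X ∣ Q) :
    thetaSeries z Q = qPochInf (C z) Q * qPochInf (C z⁻¹ * Q) Q * qPochInf Q Q :=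
  (jacobi_triple_product hQ (C_mul_C_inv_mul hz Q)).symm

theorem crankSeries_mul_thetaSeries {z : ℂ} (hz : z ≠ 0) :
    crankSeries z * thetaSeries z X = crankNumerator z := by
  have hsum : XAdicSummable fun n : ℕ => ∑' p, minPartSummand z (n + 1) p :=
    (xAdicSummable_minPartSummand_succ z).tsum_fiber
  rw [thetaSeries_eq_mul hz dvd_rfl, crankNumerator,
    ← tsum_X_pow_mul_qPoch_mul_qPoch (C_mul_C_inv_mul hz X),
    crankSeries_eq_tsum_minPartSummand hz, ← hsum.tsum_mul_right]
  refine tsum_congr fun N => ?_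
  have hbox := qPochInf_mul_qPochInf_mul_tsum_boxSeries hz N.succ_pos
  have h₁ := qPochInf_eq_qPoch_mul (dvd_refl (X : ℂ⟦X⟧)) (C z) (N + 1)
  have h₂ := qPochInf_eq_qPoch_mul (dvd_refl (X : ℂ⟦X⟧)) (C z⁻¹ * X) N
  rw [mul_assoc (C z⁻¹), ← pow_succ'] at h₂
  rw [tsum_minPartSummand z N.succ_pos, h₁, h₂, ← mul_add_one, ← Nat.succ_eq_add_one, ← hbox,
    eulerProduct]
  ring

end CrankSeries

section Counting

lemma finite_setOf_inST_sum_eq (M : ℕ) :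
    {p : Multiset ℕ × Multiset ℕ | InST p ∧ p.1.sum + p.2.sum = M}.Finite := by
  refine ((finite_setOf_isPartition_sum_lt (M + 1)).prod
    (finite_setOf_isPartition_sum_lt (M + 1))).subset ?_
  rintro p ⟨hST, hsum⟩
  exact ⟨⟨hST.1, by omega⟩, ⟨hST.2.1, by omega⟩⟩

lemma coeff_crankSeries (z : ℂ) (M : ℕ) :
    coeff M (crankSeries z) = ∑ p ∈ (finite_setOf_inST_sum_eq M).toFinset, z ^ paircrank p := by
  rw [crankSeries,
    (xAdicSummable_crankSummand z).coeff_tsum_eq_sum M (finite_setOf_inST_sum_eq M).toFinset]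
  · refine Finset.sum_congr rfl fun p hp => ?_
    obtain ⟨hST, hsum⟩ := (Set.Finite.mem_toFinset _).1 hp
    rw [crankSummand, if_pos hST, hsum, coeff_C_mul, coeff_X_pow_self, mul_one]
  · intro p hp
    rw [Set.Finite.mem_toFinset] at hp
    unfold crankSummand
    split_ifs with hST
    · have hne : M ≠ p.1.sum + p.2.sum := fun h => hp ⟨hST, h.symm⟩
      rw [coeff_C_mul, coeff_X_pow, if_neg hne, mul_zero]
    · exact map_zero _

lemma zpow_eq_zpow_of_intCast_eq {m : ℕ} {K : Type*} [Field K] {ζ : K} (hζ : ζ ^ m = 1) {a b : ℤ}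
    (h : (a : ZMod m) = b) : ζ ^ a = ζ ^ b := by
  rcases eq_or_ne m 0 with rfl | hm
  · exact congrArg (ζ ^ ·) h
  have hne : ζ ≠ 0 := by
    rintro rfl
    exact zero_ne_one ((zero_pow hm).symm.trans hζ)
  obtain ⟨c, hc⟩ := (ZMod.intCast_eq_intCast_iff_dvd_sub a b m).1 h
  rw [← sub_add_cancel b a, hc, zpow_add₀ hne, zpow_mul, zpow_natCast, hζ, one_zpow, one_mul]

theorem ncard_paircrank_eq {m : ℕ} (hm : m.Prime) {ζ : ℂ} (hζ : IsPrimitiveRoot ζ m) {M : ℕ}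
    (h : coeff M (crankSeries ζ) = 0) (i j : ZMod m) :
    {p : Multiset ℕ × Multiset ℕ | InST p ∧ p.1.sum + p.2.sum = M ∧
        (paircrank p : ZMod m) = i}.ncard =
      {p : Multiset ℕ × Multiset ℕ | InST p ∧ p.1.sum + p.2.sum = M ∧
        (paircrank p : ZMod m) = j}.ncard := by
  obtain ⟨k, rfl⟩ := Nat.exists_eq_succ_of_ne_zero hm.ne_zero
  set F := (finite_setOf_inST_sum_eq M).toFinset
  set c : ZMod (k + 1) → ℕ := fun i => {p : Multiset ℕ × Multiset ℕ | InST p ∧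
    p.1.sum + p.2.sum = M ∧ (paircrank p : ZMod (k + 1)) = i}.ncard with hc
  have hcard (i : ZMod (k + 1)) :
      c i = (F.filter fun p => (paircrank p : ZMod (k + 1)) = i).card := by
    rw [hc, ← Set.ncard_coe_finset]
    exact congrArg Set.ncard (by ext p; simp [F, and_assoc])
  have hrelation : ∑ i : ZMod (k + 1), ((c i : ℤ) : ℂ) * ζ ^ i.val = 0 := by
    rw [← h, coeff_crankSeries, ← Finset.sum_fiberwise F fun p => (paircrank p : ZMod (k + 1))]
    refine Finset.sum_congr rfl fun i _ => ?_
    rw [Finset.sum_congr rfl (g := fun _ => ζ ^ i.val)]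
    · rw [hcard, Finset.sum_const, nsmul_eq_mul, Int.cast_natCast]
    · intro p hp
      rw [← zpow_natCast]
      refine zpow_eq_zpow_of_intCast_eq hζ.pow_eq_one ?_
      rw [(Finset.mem_filter.1 hp).2, Int.cast_natCast, ZMod.natCast_zmod_val]
  exact Int.ofNat.inj ((hζ.sum_eq_zero_iff_forall_eq_int hm _).1 hrelation i j)

end Counting

section SignSeries

/-- The sign `(-1) ^ n` as a power series, for an integer `n`. -/
def signSeries (n : ℤ) : ℂ⟦X⟧ := ((n.negOnePow : ℤ) : ℂ⟦X⟧)

lemma signSeries_add (a b : ℤ) : signSeries (a + b) = signSeries a * signSeries b := by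
  simp only [signSeries, Int.negOnePow_add, Units.val_mul, Int.cast_mul]

lemma signSeries_add_one (a : ℤ) : signSeries (a + 1) = -signSeries a := by
  simp [signSeries, Int.negOnePow_succ]

lemma signSeries_neg (a : ℤ) : signSeries (-a) = signSeries a := by
  rw [signSeries, Int.negOnePow_neg, signSeries]

lemma signSeries_one_sub (a : ℤ) : signSeries (1 - a) = -signSeries a := by
  rw [sub_eq_neg_add, signSeries_add_one, signSeries_neg]

lemma signSeries_even {a : ℤ} (ha : Even a) : signSeries a = 1 := by
  simp [signSeries, Int.negOnePow_even a ha]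

lemma signSeries_mul_self (a : ℤ) : signSeries a * signSeries a = 1 := by
  rw [← signSeries_add, signSeries_even (Even.add_self a)]

lemma signSeries_natCast (k : ℕ) : signSeries k = (-1) ^ k :=
  Int.cast_negOnePow_natCast _ k

lemma ResidueSupported.signSeries_mul {m : ℕ} {T : Set (ZMod m)} {f : ℂ⟦X⟧}
    (hf : ResidueSupported T f) (a : ℤ) : ResidueSupported T (signSeries a * f) := by
  rcases Int.units_eq_one_or a.negOnePow with h | h
  · simpa [signSeries, h] using hf
  · simpa [signSeries, h] using hf.neg

end SignSeries

section Triangular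

/-- The triangular number `n (n - 1) / 2`, for an integer `n`. -/
def triangular (n : ℤ) : ℕ := (n * (n - 1) / 2).toNat

lemma two_mul_triangular (n : ℤ) : 2 * (triangular n : ℤ) = n * (n - 1) := by
  have hnonneg : 0 ≤ n * (n - 1) := by
    rcases le_or_gt n 0 with h | h <;> nlinarith
  have hdvd : 2 ∣ n * (n - 1) := (Int.even_mul_pred_self n).two_dvd
  rw [triangular, Int.toNat_of_nonneg (by omega)]
  omega

lemma triangular_one_sub (n : ℤ) : triangular (1 - n) = triangular n := by
  have h : (1 - n) * (1 - n - 1) = n * (n - 1) := by ring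
  rw [triangular, h, triangular]

lemma triangular_add_one (n : ℤ) : (triangular (n + 1) : ℤ) = triangular n + n := by
  linarith [two_mul_triangular n, two_mul_triangular (n + 1)]

lemma triangular_natCast (k : ℕ) : triangular k = k.choose 2 := by
  induction k with
  | zero => rfl
  | succ k ih =>
    rw [choose_two_succ, ← ih, ← Int.ofNat_inj, Nat.cast_add_one, triangular_add_one,
      Nat.cast_add]

lemma triangular_neg_natCast (k : ℕ) : triangular (-k) = k.choose 2 + k := by
  rw [← triangular_one_sub, ← choose_two_succ, ← triangular_natCast, sub_neg_eq_add, add_comm,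
    Nat.cast_add_one]

lemma two_mul_triangular_zmod (m : ℕ) (n : ℤ) : 2 * (triangular n : ZMod m) = n * (n - 1) := by
  exact_mod_cast congrArg (Int.cast : ℤ → ZMod m) (two_mul_triangular n)

lemma triangular_zmod_three (n : ℤ) :
    (triangular n : ZMod 3) = if (n : ZMod 3) = 2 then 1 else 0 := by
  have h : ∀ a b : ZMod 3, 2 * b = a * (a - 1) → b = if a = 2 then 1 else 0 := by decide
  exact h _ _ (two_mul_triangular_zmod 3 n)

lemma triangular_zmod_five {n : ℤ} (hn : (n : ZMod 5) ≠ 3) :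
    (triangular n : ZMod 5) = 0 ∨ (triangular n : ZMod 5) = 1 := by
  have h : ∀ a b : ZMod 5, a ≠ 3 → 2 * b = a * (a - 1) → b = 0 ∨ b = 1 := by decide
  exact h _ _ hn (two_mul_triangular_zmod 5 n)

lemma abs_le_triangular_add_one (n : ℤ) : |n| ≤ triangular n + 1 := by
  have h := two_mul_triangular n
  rw [abs_le]
  constructor
  · rcases le_or_gt 0 n with hn | hn
    · omega
    · nlinarith
  · rcases le_or_gt n 1 with hn | hn
    · omega
    · nlinarith

lemma XAdicSummable.of_X_pow_triangular_dvd {R : Type*} [CommRing R] {f : ℤ → R⟦X⟧}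
    (h : ∀ n, X ^ triangular n ∣ f n) : XAdicSummable f :=
  .of_X_pow_dvd_int (fun n => triangular n) h 1 abs_le_triangular_add_one

end Triangular

section ThetaSeries

lemma thetaTerm_C (z : ℂ) (Q : ℂ⟦X⟧) (n : ℤ) :
    thetaTerm (C z) (C z⁻¹ * Q) Q n = C (z ^ n) * (signSeries n * Q ^ triangular n) := by
  obtain ⟨k, rfl | rfl⟩ := n.eq_nat_or_neg
  · rw [thetaTerm_natCast, triangular_natCast, signSeries_natCast, zpow_natCast, map_pow]
    ring
  · rw [thetaTerm_neg_natCast, triangular_neg_natCast, signSeries_neg, signSeries_natCast,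
      zpow_neg, zpow_natCast, ← inv_pow, map_pow, mul_pow, pow_add]
    ring

/-- The signed monomial `(-1) ^ n q ^ (n (n - 1) / 2)`, the coefficient of `z ^ n` in
`thetaSeries z X`. -/
def thetaCoeff (n : ℤ) : ℂ⟦X⟧ := signSeries n * X ^ triangular n

/-- The coefficient of `z ^ n` in `crankNumerator z`. -/
def numeratorCoeff (n : ℤ) : ℂ⟦X⟧ := thetaCoeff n * conjugateBailey n

lemma thetaCoeff_one_sub (n : ℤ) : thetaCoeff (1 - n) = -thetaCoeff n := by
  rw [thetaCoeff, triangular_one_sub, signSeries_one_sub, neg_mul, thetaCoeff]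

lemma numeratorCoeff_one_sub (n : ℤ) : numeratorCoeff (1 - n) = -numeratorCoeff n := by
  rw [numeratorCoeff, thetaCoeff_one_sub, conjugateBailey_one_sub, neg_mul, numeratorCoeff]

lemma X_pow_triangular_dvd_thetaCoeff (n : ℤ) : X ^ triangular n ∣ thetaCoeff n :=
  Dvd.intro_left _ rfl

lemma xAdicSummable_thetaCoeff : XAdicSummable thetaCoeff :=
  .of_X_pow_triangular_dvd X_pow_triangular_dvd_thetaCoeff

lemma xAdicSummable_numeratorCoeff : XAdicSummable numeratorCoeff :=
  .of_X_pow_triangular_dvd fun n => (X_pow_triangular_dvd_thetaCoeff n).mul_right _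

lemma thetaSeries_eq_tsum (z : ℂ) (Q : ℂ⟦X⟧) :
    thetaSeries z Q = ∑' n : ℤ, C (z ^ n) * (signSeries n * Q ^ triangular n) :=
  tsum_congr (thetaTerm_C z Q)

lemma crankNumerator_eq_tsum (z : ℂ) :
    crankNumerator z = ∑' n : ℤ, C (z ^ n) * numeratorCoeff n := by
  refine tsum_congr fun n => ?_
  rw [thetaTerm_C, mul_assoc, numeratorCoeff, thetaCoeff]

lemma thetaSeries_ne_zero {z : ℂ} (hz : z ≠ 0) (hz₁ : z ≠ 1) {Q : ℂ⟦X⟧} (hQ : X ∣ Q) :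
    thetaSeries z Q ≠ 0 := by
  have hsub : 1 - C z ≠ 0 := by
    rw [← map_one C, sub_ne_zero]
    exact fun h => hz₁ (C_injective h).symm
  rw [thetaSeries_eq_mul hz hQ, qPochInf_eq_one_sub_mul hQ]
  exact mul_ne_zero (mul_ne_zero
    (mul_ne_zero hsub (qPochInf_ne_zero hQ (hQ.mul_left _)))
    (qPochInf_ne_zero hQ (hQ.mul_left _))) (qPochInf_ne_zero hQ hQ)

end ThetaSeries

section Supports

lemma ResidueSupported.tsum_zpow_mul {m k : ℕ} {T : Set (ZMod m)} {w : ℂ} (hw : w ^ k = 1)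
    {c : ZMod k} (hc : 1 - c = c) {f : ℤ → ℂ⟦X⟧} (hf : XAdicSummable f)
    (hneg : ∀ n, f (1 - n) = -f n)
    (hsupp : ∀ n : ℤ, (n : ZMod k) ≠ c → ResidueSupported T (f n)) :
    ResidueSupported T (∑' n, C (w ^ n) * f n) := by
  intro N
  contrapose!
  intro hN
  rw [(hf.mul_left _).coeff_tsum]
  refine tsum_eq_zero_of_one_sub_eq_neg fun n => ?_
  have hreflect : ((1 - n : ℤ) : ZMod k) = 1 - n := by rw [Int.cast_sub, Int.cast_one]
  by_cases hn : (n : ZMod k) = c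
  · rw [zpow_eq_zpow_of_intCast_eq hw (hreflect.trans (by rw [hn, hc])), hneg, mul_neg, map_neg]
  · rw [hneg, ((hsupp n hn).neg.C_mul _).coeff_eq_zero hN,
      ((hsupp n hn).C_mul _).coeff_eq_zero hN, neg_zero]

variable {m : ℕ}

lemma residueSupported_thetaCoeff (n : ℤ) :
    ResidueSupported {(triangular n : ZMod m)} (thetaCoeff n) :=
  (ResidueSupported.X_pow (Set.mem_singleton _)).signSeries_mul n

lemma residuePart_thetaCoeff (r : ZMod m) (n : ℤ) :
    residuePart r (thetaCoeff n) = if (triangular n : ZMod m) = r then thetaCoeff n else 0 := by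
  split_ifs with h
  · rw [← h, (residueSupported_thetaCoeff n).residuePart_eq_self]
  · exact (residueSupported_thetaCoeff n).residuePart_eq_zero fun hr => h hr.symm

lemma residuePart_thetaSeries (z : ℂ) (r : ZMod m) :
    residuePart r (thetaSeries z X) =
      ∑' n : ℤ, C (z ^ n) * (if (triangular n : ZMod m) = r then thetaCoeff n else 0) := by
  rw [thetaSeries_eq_tsum]
  refine (residuePart_tsum (xAdicSummable_thetaCoeff.mul_left _) r).trans
    (tsum_congr fun n => ?_)
  rw [residuePart_C_mul, residuePart_thetaCoeff]

lemma residueSupported_numeratorCoeff_natCast_add_one {T : Set (ZMod m)} {i : ℕ}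
    (h : ∀ e r : ZMod m, 2 * e = (i + 1) * (i + 1 + 1) + r * (r - 1) + 4 * (i + 1) * r → e ∈ T) :
    ResidueSupported T (numeratorCoeff (i + 1)) := by
  rw [numeratorCoeff, thetaCoeff, conjugateBailey_natCast_add_one, partialTheta, mul_assoc]
  refine ResidueSupported.signSeries_mul ?_ _
  rw [← mul_assoc, ← pow_add, ← (xAdicSummable_partialTheta _).tsum_mul_left]
  refine .tsum ((xAdicSummable_partialTheta _).mul_left _) fun r => ?_
  rw [← signSeries_natCast, mul_left_comm, ← pow_add]
  refine (ResidueSupported.X_pow (h _ (r : ZMod m) ?_)).signSeries_mul _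
  have hi := two_mul_triangular_zmod m ((i : ℤ) + 1)
  have hr := two_mul_triangular_zmod m ((r + 1 : ℕ) : ℤ)
  rw [triangular_natCast] at hr
  push_cast at hi hr ⊢
  linear_combination hi + hr

lemma residueSupported_numeratorCoeff {T : Set (ZMod m)} {j : ℤ}
    (h : ∀ e r : ZMod m, 2 * e = j * (j + 1) + r * (r - 1) + 4 * j * r → e ∈ T)
    (h' : ∀ e r : ZMod m,
      2 * e = (1 - j) * (1 - j + 1) + r * (r - 1) + 4 * (1 - j) * r → e ∈ T) :
    ResidueSupported T (numeratorCoeff j) := by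
  rcases le_or_gt j 0 with hj | hj
  · obtain ⟨i, hi⟩ := Int.eq_ofNat_of_zero_le (neg_nonneg.2 hj)
    have hij : 1 - j = i + 1 := by omega
    rw [← neg_neg (numeratorCoeff j), ← numeratorCoeff_one_sub, hij]
    refine (residueSupported_numeratorCoeff_natCast_add_one fun e r he => h' e r ?_).neg
    rw [he, show (1 : ZMod m) - j = i + 1 by exact_mod_cast congrArg (Int.cast : ℤ → ZMod m) hij]
  · obtain ⟨i, hi⟩ := Int.eq_ofNat_of_zero_le (Int.sub_nonneg_of_le hj)
    obtain rfl : j = i + 1 := by omega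
    refine residueSupported_numeratorCoeff_natCast_add_one fun e r he => h e r ?_
    rw [he]
    push_cast
    rfl

lemma residueSupported_numeratorCoeff_zmod_three (j : ℤ) :
    ResidueSupported ({0, 1} : Set (ZMod 3)) (numeratorCoeff j) := by
  have h : ∀ j e r : ZMod 3, 2 * e = j * (j + 1) + r * (r - 1) + 4 * j * r → e = 0 ∨ e = 1 := by
    decide
  exact residueSupported_numeratorCoeff (h _) (h _)

lemma residueSupported_numeratorCoeff_zmod_five {j : ℤ} (hj : (j : ZMod 5) ≠ 3) :
    ResidueSupported ({0, 1, 2, 3} : Set (ZMod 5)) (numeratorCoeff j) := by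
  have h : ∀ j e r : ZMod 5, j ≠ 3 → 2 * e = j * (j + 1) + r * (r - 1) + 4 * j * r →
      e = 0 ∨ e = 1 ∨ e = 2 ∨ e = 3 := by decide
  have hreflect : ∀ j : ZMod 5, j ≠ 3 → 1 - j ≠ 3 := by decide
  exact residueSupported_numeratorCoeff (fun e r => h _ e r hj)
    fun e r => h _ e r (hreflect _ hj)

end Supports

section ModThree

lemma residueSupported_crankNumerator_zmod_three (z : ℂ) :
    ResidueSupported ({0, 1} : Set (ZMod 3)) (crankNumerator z) := by
  rw [crankNumerator_eq_tsum]
  exact .tsum (xAdicSummable_numeratorCoeff.mul_left _) fun j =>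
    (residueSupported_numeratorCoeff_zmod_three j).C_mul _

lemma residueSupported_thetaSeries_zmod_three (z : ℂ) :
    ResidueSupported ({0, 1} : Set (ZMod 3)) (thetaSeries z X) := by
  rw [thetaSeries_eq_tsum]
  refine .tsum (xAdicSummable_thetaCoeff.mul_left _) fun j =>
    ((residueSupported_thetaCoeff j).mono ?_).C_mul _
  rw [Set.singleton_subset_iff, triangular_zmod_three]
  split_ifs <;> simp

lemma residuePart_two_crankSeries_mul_add {z : ℂ} (hz : z ≠ 0) :
    residuePart (2 : ZMod 3) (crankSeries z) * residuePart (0 : ZMod 3) (thetaSeries z X) +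
      residuePart (1 : ZMod 3) (crankSeries z) * residuePart (1 : ZMod 3) (thetaSeries z X) =
        0 := by
  have h := (residueSupported_thetaSeries_zmod_three z).residuePart_mul_eq_add zero_ne_one
    (crankSeries z) 2
  rw [crankSeries_mul_thetaSeries hz, sub_zero,
    (residueSupported_crankNumerator_zmod_three z).residuePart_eq_zero (by decide)] at h
  exact h.symm

lemma residueSupported_thetaSeries_of_pow_three {w : ℂ} (hw : w ^ 3 = 1) :
    ResidueSupported ({0} : Set (ZMod 3)) (thetaSeries w X) := by
  rw [thetaSeries_eq_tsum]
  refine .tsum_zpow_mul hw (c := 2) (by decide) xAdicSummable_thetaCoeff thetaCoeff_one_sub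
    fun n hn => (residueSupported_thetaCoeff n).mono ?_
  rw [triangular_zmod_three, if_neg hn]

theorem residuePart_two_crankSeries {ω : ℂ} (hω : IsPrimitiveRoot ω 3) :
    residuePart (2 : ZMod 3) (crankSeries ω) = 0 := by
  have hω₀ : ω ≠ 0 := hω.ne_zero three_ne_zero
  have h := (residueSupported_thetaSeries_of_pow_three hω.pow_eq_one).residuePart_mul'
    (g := crankSeries ω) 2
  rw [crankSeries_mul_thetaSeries hω₀, sub_zero,
    (residueSupported_crankNumerator_zmod_three ω).residuePart_eq_zero (by decide)] at h
  exact (mul_eq_zero.1 h.symm).resolve_right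
    (thetaSeries_ne_zero hω₀ (hω.ne_one (by norm_num)) dvd_rfl)

end ModThree

section ModFiveSupports

variable {w : ℂ}

lemma residueSupported_thetaSeries_of_pow_five (hw : w ^ 5 = 1) {c : ℕ} (hc : c ≠ 0) :
    ResidueSupported ({0, (c : ZMod 5)} : Set (ZMod 5)) (thetaSeries w (X ^ c)) := by
  rw [thetaSeries_eq_tsum]
  refine .tsum_zpow_mul hw (c := 3) (by decide) (.of_X_pow_triangular_dvd fun n => ?_)
    (fun n => ?_) fun n hn => ?_
  · exact (pow_dvd_pow_of_dvd (dvd_pow_self X hc) _).mul_left _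
  · rw [triangular_one_sub, signSeries_one_sub, neg_mul]
  · rw [← pow_mul]
    refine (ResidueSupported.X_pow ?_).signSeries_mul n
    rw [Nat.cast_mul]
    rcases triangular_zmod_five hn with h | h <;> simp [h]

lemma residueSupported_crankNumerator_of_pow_five (hw : w ^ 5 = 1) :
    ResidueSupported ({0, 1, 2, 3} : Set (ZMod 5)) (crankNumerator w) := by
  rw [crankNumerator_eq_tsum]
  exact .tsum_zpow_mul hw (c := 3) (by decide) xAdicSummable_numeratorCoeff
    numeratorCoeff_one_sub fun _ => residueSupported_numeratorCoeff_zmod_five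

end ModFiveSupports

section Pentagonal

lemma thetaTerm_eq_signSeries_mul_pow_pentagonal (Q : ℂ⟦X⟧) (k : ℤ) :
    thetaTerm Q (Q ^ 2) (Q ^ 3) k = signSeries k * Q ^ pentagonal k := by
  have hchoose : ∀ i : ℕ, 2 * (i.choose 2 : ℤ) = i * (i - 1) := fun i => by
    rw [← triangular_natCast, two_mul_triangular]
  obtain ⟨i, rfl | rfl⟩ := k.eq_nat_or_neg
  · have hexp : i + 3 * i.choose 2 = pentagonal i := by
      zify
      linarith [two_mul_natCast_pentagonal i, hchoose i]
    rw [thetaTerm_natCast, signSeries_natCast, ← pow_mul, ← pow_add, hexp]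
  · have hexp : 2 * i + 3 * i.choose 2 = pentagonal (-i) := by
      zify
      linarith [two_mul_natCast_pentagonal (-i), hchoose i]
    rw [thetaTerm_neg_natCast, signSeries_neg, signSeries_natCast, ← pow_mul, ← pow_mul, ← pow_add,
      hexp]

lemma triangular_le_pentagonal (k : ℤ) : triangular k ≤ pentagonal k := by
  zify
  nlinarith [two_mul_triangular k, two_mul_natCast_pentagonal k]

lemma xAdicSummable_signSeries_mul_pow_pentagonal {Q : ℂ⟦X⟧} (hQ : X ∣ Q) :
    XAdicSummable fun k => signSeries k * Q ^ pentagonal k :=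
  .of_X_pow_triangular_dvd fun k => Dvd.dvd.mul_left
    ((pow_dvd_pow_of_dvd hQ _).trans (pow_dvd_pow Q (triangular_le_pentagonal k))) _

theorem tsum_signSeries_mul_pow_pentagonal {Q : ℂ⟦X⟧} (hQ : X ∣ Q) :
    ∑' k : ℤ, signSeries k * Q ^ pentagonal k = qPochInf Q Q := by
  have hJTP : qPochInf Q (Q ^ 3) * qPochInf (Q ^ 2) (Q ^ 3) * qPochInf (Q ^ 3) (Q ^ 3) =
      ∑' k, thetaTerm Q (Q ^ 2) (Q ^ 3) k :=
    jacobi_triple_product (hQ.trans (dvd_pow_self Q three_ne_zero)) (by ring)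
  have hdissect := qPochInf_eq_prod_range hQ Q three_ne_zero
  rw [Finset.prod_range_succ, Finset.prod_range_succ, Finset.prod_range_one, pow_zero, mul_one,
    pow_one, ← sq, ← pow_succ', hJTP] at hdissect
  rw [hdissect]
  exact tsum_congr fun k => (thetaTerm_eq_signSeries_mul_pow_pentagonal Q k).symm

end Pentagonal

section TwistedTheta

/-- The coefficient of `z ^ n` in `J₀ - J₁`, where `Jᵣ` is the part of `thetaSeries z X` supported
on exponents congruent to `r` modulo `3`. -/
def twistedThetaCoeff (n : ℤ) : ℂ⟦X⟧ := if (n : ZMod 3) = 2 then -thetaCoeff n else thetaCoeff n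

lemma twistedThetaCoeff_one_sub (n : ℤ) : twistedThetaCoeff (1 - n) = -twistedThetaCoeff n := by
  have hreflect : ∀ a : ZMod 3, 1 - a = 2 ↔ a = 2 := by decide
  simp only [twistedThetaCoeff, Int.cast_sub, Int.cast_one, hreflect, thetaCoeff_one_sub]
  split_ifs <;> rfl

lemma X_pow_mul_thetaCoeff_add_three {n : ℤ} {a b : ℕ} (h : (a : ℤ) + 3 * n + 3 = b) :
    X ^ a * thetaCoeff (n + 3) = -(X ^ b * thetaCoeff n) := by
  have hexp : a + triangular (n + 3) = b + triangular n := by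
    zify
    linarith [two_mul_triangular n, two_mul_triangular (n + 3)]
  rw [thetaCoeff, thetaCoeff, mul_left_comm, ← pow_add, hexp, pow_add, show n + 3 = n + 1 + 1 + 1 by
    ring, signSeries_add_one, signSeries_add_one, signSeries_add_one]
  ring

lemma X_pow_mul_twistedThetaCoeff_add_three {n : ℤ} {a b : ℕ} (h : (a : ℤ) + 3 * n + 3 = b) :
    X ^ a * twistedThetaCoeff (n + 3) = -(X ^ b * twistedThetaCoeff n) := by
  have hperiod : ((n + 3 : ℤ) : ZMod 3) = n := by
    rw [Int.cast_add, show ((3 : ℤ) : ZMod 3) = 0 from rfl, add_zero]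
  rw [twistedThetaCoeff, twistedThetaCoeff, hperiod]
  split_ifs
  · rw [mul_neg, mul_neg, X_pow_mul_thetaCoeff_add_three h]
  · exact X_pow_mul_thetaCoeff_add_three h

lemma residuePart_thetaCoeff_mul_thetaCoeff {m : ℕ} (r : ZMod m) (a b : ℤ) :
    residuePart r (thetaCoeff a * thetaCoeff b) =
      if (triangular b : ZMod m) = r - triangular a then thetaCoeff a * thetaCoeff b else 0 := by
  rw [(residueSupported_thetaCoeff a).residuePart_mul, residuePart_thetaCoeff, mul_ite, mul_zero]

lemma residuePart_one_thetaCoeff_mul_swap (a b : ℤ) :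
    residuePart (1 : ZMod 3) (thetaCoeff a * twistedThetaCoeff b) =
      -residuePart (1 : ZMod 3) (thetaCoeff b * twistedThetaCoeff a) := by
  have h₀ : (0 : ZMod 3) ≠ 1 := by decide
  have h₁ : (1 : ZMod 3) ≠ 0 := by decide
  by_cases ha : (a : ZMod 3) = 2 <;> by_cases hb : (b : ZMod 3) = 2 <;>
    simp [twistedThetaCoeff, residuePart_thetaCoeff_mul_thetaCoeff, triangular_zmod_three, ha, hb,
      h₀, h₁, mul_comm]

lemma tsum_residuePart_one_thetaCoeff_mul (c s : ℤ) :
    ∑' j : ℤ, residuePart (1 : ZMod 3) (thetaCoeff (j + c) * twistedThetaCoeff (s - j)) = 0 :=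
  tsum_eq_zero_of_comp_eq_neg (Equiv.subLeft (s - c)) fun j => by
    rw [Equiv.subLeft_apply, residuePart_one_thetaCoeff_mul_swap, sub_right_comm s c j,
      sub_add_cancel, show s - (s - j - c) = j + c by ring]

end TwistedTheta

section DiagonalCoeff

/-- The part supported on exponents congruent to `1` modulo `3` of the coefficient of `z ^ m` in
`crankNumerator z * (J₀ - J₁)`, with `Jᵣ` as in `twistedThetaCoeff`. -/
def diagonalCoeff (m : ℤ) : ℂ⟦X⟧ :=
  ∑' j : ℤ, residuePart (1 : ZMod 3) (numeratorCoeff j * twistedThetaCoeff (m - j))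

lemma diagonalCoeff_two_sub (m : ℤ) : diagonalCoeff (2 - m) = diagonalCoeff m := by
  rw [diagonalCoeff, ← (Equiv.subLeft (1 : ℤ)).tsum_eq]
  refine tsum_congr fun j => ?_
  rw [Equiv.subLeft_apply, show 2 - m - (1 - j) = 1 - (m - j) by ring, twistedThetaCoeff_one_sub,
    numeratorCoeff_one_sub, neg_mul_neg]

lemma diagonalCoeff_eq_tsum_add (m c : ℤ) :
    diagonalCoeff m = ∑' j : ℤ, residuePart (1 : ZMod 3)
      ((numeratorCoeff j + thetaCoeff (j + c)) * twistedThetaCoeff (m - j)) := by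
  have hnum := (xAdicSummable_numeratorCoeff.mul_right
    fun j => twistedThetaCoeff (m - j)).map_residuePart (1 : ZMod 3)
  have htheta := ((xAdicSummable_thetaCoeff.comp_injective (add_left_injective c)).mul_right
    fun j => twistedThetaCoeff (m - j)).map_residuePart (1 : ZMod 3)
  simp only [add_mul, map_add]
  rw [hnum.tsum_add htheta, tsum_residuePart_one_thetaCoeff_mul, add_zero, diagonalCoeff]

lemma thetaCoeff_natCast_add_one (i : ℕ) :
    thetaCoeff (i + 1) = -(X ^ i * thetaCoeff i) := by
  have hexp : triangular ((i : ℤ) + 1) = triangular i + i := by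
    exact_mod_cast triangular_add_one i
  rw [thetaCoeff, thetaCoeff, signSeries_add_one, hexp, pow_add]
  ring

lemma partialTheta_eq_add_X_pow_mul (i : ℕ) :
    partialTheta (2 * i + 1) =
      1 - X ^ (2 * i + 2) + X ^ (4 * i + 5) * partialTheta (2 * i + 3) := by
  have h₁ := partialTheta_add_X_pow_mul (2 * i + 1)
  have h₂ := partialTheta_add_X_pow_mul (2 * i + 2)
  rw [show 4 * i + 5 = (2 * i + 2) + (2 * i + 3) by ring, pow_add]
  linear_combination h₁ - X ^ (2 * i + 2) * h₂

lemma numeratorCoeff_natCast_add_thetaCoeff (i : ℕ) :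
    numeratorCoeff i + thetaCoeff (i + 1) =
      -(X ^ (3 * i) * (numeratorCoeff (i + 1) + thetaCoeff i)) := by
  rcases i with _ | i
  · have hnum := numeratorCoeff_one_sub 0
    have htheta := thetaCoeff_one_sub 0
    rw [sub_zero] at hnum htheta
    rw [Nat.cast_zero, zero_add, hnum, htheta, mul_zero, pow_zero]
    ring
  · have hi := conjugateBailey_natCast_add_one i
    rw [← Nat.cast_add_one] at hi
    rw [numeratorCoeff, numeratorCoeff, conjugateBailey_natCast_add_one (i + 1), hi,
      thetaCoeff_natCast_add_one (i + 1), partialTheta_eq_add_X_pow_mul i,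
      show 2 * (i + 1) + 1 = 2 * i + 3 by ring]
    ring

lemma numeratorCoeff_sub_one_add_thetaCoeff_mul {j n : ℤ} {m : ℕ} (h : j + n = m) :
    (numeratorCoeff (j - 1) + thetaCoeff j) * twistedThetaCoeff (n + 3) =
      X ^ (3 * m) * ((numeratorCoeff j + thetaCoeff (j - 1)) * twistedThetaCoeff n) := by
  rcases le_or_gt j 0 with hj | hj
  · obtain ⟨i, hi⟩ := Int.eq_ofNat_of_zero_le (Int.sub_nonneg_of_le (hj.trans zero_le_one))
    obtain rfl : j = 1 - i := by omega
    have hrec := numeratorCoeff_natCast_add_thetaCoeff i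
    have hshift := X_pow_mul_twistedThetaCoeff_add_three (n := n) (a := 0) (b := 3 * m + 3 * i)
      (by push_cast; omega)
    rw [show 1 - (i : ℤ) - 1 = 1 - (i + 1) by ring, numeratorCoeff_one_sub, numeratorCoeff_one_sub,
      thetaCoeff_one_sub, thetaCoeff_one_sub]
    rw [pow_zero, one_mul, pow_add] at hshift
    rw [hshift]
    linear_combination (X ^ (3 * m) * twistedThetaCoeff n) * hrec
  · obtain ⟨i, hi⟩ := Int.eq_ofNat_of_zero_le (Int.sub_nonneg_of_le hj)
    obtain rfl : j = i + 1 := by omega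
    have hshift := X_pow_mul_twistedThetaCoeff_add_three (n := n) (a := 3 * i) (b := 3 * m)
      (by push_cast; omega)
    rw [add_sub_cancel_right, numeratorCoeff_natCast_add_thetaCoeff]
    linear_combination -(numeratorCoeff (i + 1) + thetaCoeff i) * hshift

lemma diagonalCoeff_natCast_add_two (m : ℕ) :
    diagonalCoeff (m + 2) = X ^ (3 * m) * diagonalCoeff m := by
  have hsupp : ResidueSupported {(0 : ZMod 3)} (X ^ (3 * m) : ℂ⟦X⟧) :=
    .X_pow (by simp [show (3 : ZMod 3) = 0 from rfl])
  have hsum : XAdicSummable fun j : ℤ => residuePart (1 : ZMod 3)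
      ((numeratorCoeff j + thetaCoeff (j + -1)) * twistedThetaCoeff (m - j)) :=
    ((xAdicSummable_numeratorCoeff.add (xAdicSummable_thetaCoeff.comp_injective
      (add_left_injective (-1)))).mul_right _).map_residuePart _
  rw [diagonalCoeff_eq_tsum_add _ 1, diagonalCoeff_eq_tsum_add m (-1), ← hsum.tsum_mul_left,
    ← (Equiv.subRight (1 : ℤ)).tsum_eq]
  refine tsum_congr fun j => ?_
  rw [Equiv.subRight_apply, sub_add_cancel, ← sub_eq_add_neg,
    show (m : ℤ) + 2 - (j - 1) = m - j + 3 by ring,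
    numeratorCoeff_sub_one_add_thetaCoeff_mul (add_sub_cancel j (m : ℤ)), hsupp.residuePart_mul,
    sub_zero]

lemma diagonalCoeff_two_mul (k : ℤ) :
    diagonalCoeff (2 * k) = X ^ (6 * triangular k) * diagonalCoeff 0 := by
  have hnat : ∀ i : ℕ, diagonalCoeff (2 * i) = X ^ (6 * i.choose 2) * diagonalCoeff 0 := fun i => by
    induction i with
    | zero => simp
    | succ i ih =>
      have hrec := diagonalCoeff_natCast_add_two (2 * i)
      rw [Nat.cast_mul, Nat.cast_ofNat, ih, ← mul_assoc, ← pow_add] at hrec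
      rw [Nat.cast_add_one, mul_add_one, hrec, choose_two_succ]
      congr 2
      ring
  rcases le_or_gt 0 k with hk | hk
  · lift k to ℕ using hk
    rw [hnat, triangular_natCast]
  · obtain ⟨i, hi⟩ := Int.eq_ofNat_of_zero_le (Int.sub_nonneg_of_le (hk.le.trans zero_le_one))
    rw [← diagonalCoeff_two_sub, ← mul_one_sub, ← triangular_one_sub, hi, hnat, triangular_natCast]

lemma diagonalCoeff_two_mul_add_one (k : ℤ) :
    diagonalCoeff (2 * k + 1) = X ^ (3 * k.natAbs ^ 2) * diagonalCoeff 1 := by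
  have hnat : ∀ i : ℕ, diagonalCoeff (2 * i + 1) = X ^ (3 * i ^ 2) * diagonalCoeff 1 := fun i => by
    induction i with
    | zero => simp
    | succ i ih =>
      have hrec := diagonalCoeff_natCast_add_two (2 * i + 1)
      rw [Nat.cast_add_one, Nat.cast_mul, Nat.cast_ofNat, ih, ← mul_assoc, ← pow_add] at hrec
      rw [Nat.cast_add_one, mul_add_one, add_right_comm, hrec]
      congr 2
      ring
  obtain ⟨i, rfl | rfl⟩ := k.eq_nat_or_neg
  · rw [hnat, Int.natAbs_natCast]
  · rw [← diagonalCoeff_two_sub, show 2 - (2 * -(i : ℤ) + 1) = 2 * i + 1 by ring, hnat,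
      Int.natAbs_neg, Int.natAbs_natCast]

end DiagonalCoeff

section ShiftedTheta

/-- The monomial `X ^ n * thetaCoeff n`, written so that no negative power of `X` occurs. -/
def shiftedThetaCoeff (n : ℤ) : ℂ⟦X⟧ := -thetaCoeff (n + 1)

lemma shiftedThetaCoeff_eq (n : ℤ) :
    shiftedThetaCoeff n = signSeries n * X ^ triangular (n + 1) := by
  rw [shiftedThetaCoeff, thetaCoeff, signSeries_add_one, neg_mul, neg_neg]

lemma xAdicSummable_shiftedThetaCoeff : XAdicSummable shiftedThetaCoeff :=
  (xAdicSummable_thetaCoeff.comp_injective (add_left_injective (1 : ℤ))).neg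

lemma thetaTerm_X_one (n : ℤ) : thetaTerm X 1 X n = shiftedThetaCoeff n := by
  rw [shiftedThetaCoeff_eq]
  obtain ⟨k, rfl | rfl⟩ := n.eq_nat_or_neg
  · have hexp : triangular (k + 1) = k.choose 2 + k := by
      rw [← choose_two_succ, ← triangular_natCast, Nat.cast_add_one]
    rw [thetaTerm_natCast, signSeries_natCast, hexp, pow_add, mul_comm (X ^ k)]
  · have hexp : triangular (-k + 1) = k.choose 2 := by
      rw [neg_add_eq_sub, triangular_one_sub, triangular_natCast]
    rw [thetaTerm_neg_natCast, signSeries_neg, signSeries_natCast, hexp, one_pow, one_mul]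

lemma tsum_shiftedThetaCoeff : ∑' n : ℤ, shiftedThetaCoeff n = 0 := by
  have hsum : ∑' n : ℤ, thetaCoeff (n + 1) = ∑' n : ℤ, thetaCoeff n :=
    (Equiv.addRight (1 : ℤ)).tsum_eq thetaCoeff
  simp only [shiftedThetaCoeff]
  rw [tsum_neg, hsum, tsum_eq_zero_of_one_sub_eq_neg thetaCoeff_one_sub, neg_zero]

/-- The negative of `shiftedThetaCoeff n` when `n` is congruent to `2` modulo `3`. -/
def shiftedThetaTwo (n : ℤ) : ℂ⟦X⟧ := if (n : ZMod 3) = 2 then -shiftedThetaCoeff n else 0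

/-- The monomial `shiftedThetaCoeff n` when `n` is not congruent to `2` modulo `3`. -/
def shiftedThetaNotTwo (n : ℤ) : ℂ⟦X⟧ := if (n : ZMod 3) = 2 then 0 else shiftedThetaCoeff n

lemma xAdicSummable_shiftedThetaTwo : XAdicSummable shiftedThetaTwo :=
  xAdicSummable_shiftedThetaCoeff.neg.ite_zero _

lemma xAdicSummable_shiftedThetaNotTwo : XAdicSummable shiftedThetaNotTwo :=
  xAdicSummable_shiftedThetaCoeff.mono fun n => by
    rw [shiftedThetaNotTwo]
    split_ifs <;> simp

lemma shiftedThetaTwo_three_mul_sub_one (k : ℤ) :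
    shiftedThetaTwo (3 * k - 1) = signSeries k * (X ^ 3) ^ pentagonal k := by
  have hclass : ((3 * k - 1 : ℤ) : ZMod 3) = 2 := by
    rw [Int.cast_sub, Int.cast_mul, show ((3 : ℤ) : ZMod 3) = 0 from rfl, zero_mul]
    decide
  have hexp : triangular (3 * k) = 3 * pentagonal k := by
    zify
    linarith [two_mul_triangular (3 * k), two_mul_natCast_pentagonal k]
  have hsign : signSeries (3 * k) = signSeries k := by
    rw [show 3 * k = 2 * k + k by ring, signSeries_add, signSeries_even (even_two_mul k), one_mul]
  rw [shiftedThetaTwo, if_pos hclass, shiftedThetaCoeff, sub_add_cancel, neg_neg, thetaCoeff, hexp,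
    hsign, pow_mul]

lemma tsum_shiftedThetaTwo : ∑' n : ℤ, shiftedThetaTwo n = qPochInf (X ^ 3) (X ^ 3) := by
  have hinj : Function.Injective fun k : ℤ => 3 * k - 1 := fun a b h => by
    simp only at h
    omega
  have hsupp : Function.support shiftedThetaTwo ⊆ Set.range fun k : ℤ => 3 * k - 1 := fun n hn => by
    have hclass : (n : ZMod 3) = 2 := by
      by_contra hc
      exact hn (if_neg hc)
    have hdvd : ((n + 1 : ℤ) : ZMod 3) = 0 := by
      rw [Int.cast_add, hclass]
      decide
    obtain ⟨k, hk⟩ := (ZMod.intCast_zmod_eq_zero_iff_dvd _ 3).1 hdvd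
    exact ⟨k, by push_cast at hk; simp only; omega⟩
  rw [← tsum_signSeries_mul_pow_pentagonal (dvd_pow_self X three_ne_zero), ← hinj.tsum_eq hsupp]
  exact tsum_congr shiftedThetaTwo_three_mul_sub_one

lemma tsum_shiftedThetaNotTwo : ∑' n : ℤ, shiftedThetaNotTwo n = qPochInf (X ^ 3) (X ^ 3) := by
  have hdiff : ∀ n, shiftedThetaNotTwo n - shiftedThetaTwo n = shiftedThetaCoeff n := fun n => by
    rw [shiftedThetaNotTwo, shiftedThetaTwo]
    split_ifs <;> simp
  rw [← tsum_shiftedThetaTwo, ← sub_eq_zero, ← xAdicSummable_shiftedThetaNotTwo.tsum_sub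
    xAdicSummable_shiftedThetaTwo, ← tsum_shiftedThetaCoeff]
  exact tsum_congr hdiff

end ShiftedTheta

section ShiftedDiagonal

/-- The product of `X ^ j` and the part of `numeratorCoeff j` supported on exponents congruent to
`r` modulo `3`, written so that no negative power of `X` occurs. -/
def shiftedNumeratorPart (r : ZMod 3) (j : ℤ) : ℂ⟦X⟧ :=
  shiftedThetaCoeff j * residuePart (r - (triangular j : ZMod 3)) (conjugateBailey j)

lemma xAdicSummable_shiftedNumeratorPart (r : ZMod 3) : XAdicSummable (shiftedNumeratorPart r) :=
  xAdicSummable_shiftedThetaCoeff.mul_right _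

lemma residuePart_numeratorCoeff {m : ℕ} (r : ZMod m) (j : ℤ) :
    residuePart r (numeratorCoeff j) =
      thetaCoeff j * residuePart (r - (triangular j : ZMod m)) (conjugateBailey j) :=
  (residueSupported_thetaCoeff j).residuePart_mul r

lemma thetaCoeff_ne_zero (n : ℤ) : thetaCoeff n ≠ 0 :=
  mul_ne_zero (left_ne_zero_of_mul_eq_one (signSeries_mul_self n)) (pow_ne_zero _ X_ne_zero)

lemma shiftedNumeratorPart_one_add_zero (j : ℤ) :
    shiftedNumeratorPart 1 j + shiftedNumeratorPart 0 j =
      shiftedThetaCoeff j * conjugateBailey j := by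
  have hsplit := (residueSupported_numeratorCoeff_zmod_three j).eq_add zero_ne_one
  rw [residuePart_numeratorCoeff, residuePart_numeratorCoeff, ← mul_add, numeratorCoeff] at hsplit
  rw [mul_left_cancel₀ (thetaCoeff_ne_zero j) hsplit, shiftedNumeratorPart, shiftedNumeratorPart,
    ← mul_add, add_comm]

/-- The product of `X ^ (j + n)` and the part of `numeratorCoeff j * twistedThetaCoeff n` supported
on exponents congruent to `1` modulo `3`, written so that no negative power of `X` occurs. -/
def shiftedProductPart (p : ℤ × ℤ) : ℂ⟦X⟧ :=
  shiftedNumeratorPart 1 p.1 * shiftedThetaNotTwo p.2 +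
    shiftedNumeratorPart 0 p.1 * shiftedThetaTwo p.2

lemma xAdicSummable_shiftedProductPart : XAdicSummable shiftedProductPart :=
  ((xAdicSummable_shiftedNumeratorPart 1).prod_mul xAdicSummable_shiftedThetaNotTwo).add
    ((xAdicSummable_shiftedNumeratorPart 0).prod_mul xAdicSummable_shiftedThetaTwo)

lemma tsum_shiftedProductPart :
    ∑' p, shiftedProductPart p = X * qPochInf (X ^ 3) (X ^ 3) * eulerProduct ^ 2 := by
  have hsum₀ := xAdicSummable_shiftedNumeratorPart 0
  have hsum₁ := xAdicSummable_shiftedNumeratorPart 1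
  have hbailey : ∑' j, (shiftedNumeratorPart 1 j + shiftedNumeratorPart 0 j) =
      X * eulerProduct ^ 2 := by
    rw [← tsum_thetaTerm_X_one_mul_conjugateBailey]
    exact tsum_congr fun j => by rw [shiftedNumeratorPart_one_add_zero, thetaTerm_X_one]
  simp only [shiftedProductPart]
  rw [(hsum₁.prod_mul xAdicSummable_shiftedThetaNotTwo).tsum_add
      (hsum₀.prod_mul xAdicSummable_shiftedThetaTwo),
    ← hsum₁.tsum_mul_tsum xAdicSummable_shiftedThetaNotTwo,
    ← hsum₀.tsum_mul_tsum xAdicSummable_shiftedThetaTwo, tsum_shiftedThetaTwo,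
    tsum_shiftedThetaNotTwo, ← add_mul, ← hsum₁.tsum_add hsum₀, hbailey]
  ring

lemma X_pow_mul_shiftedThetaCoeff_mul {j n : ℤ} {a b : ℕ} (h : (a : ℤ) + (j + n) = b) :
    X ^ a * (shiftedThetaCoeff j * shiftedThetaCoeff n) =
      X ^ b * (thetaCoeff j * thetaCoeff n) := by
  have hexp :
      a + (triangular (j + 1) + triangular (n + 1)) = b + (triangular j + triangular n) := by
    zify
    linarith [triangular_add_one j, triangular_add_one n]
  have hpow := congrArg (fun e => (X : ℂ⟦X⟧) ^ e) hexp
  simp only [pow_add] at hpow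
  rw [shiftedThetaCoeff_eq, shiftedThetaCoeff_eq, thetaCoeff, thetaCoeff]
  linear_combination signSeries j * signSeries n * hpow

lemma X_pow_mul_shiftedProductPart {j n : ℤ} {a b : ℕ} (h : (a : ℤ) + (j + n) = b) :
    X ^ a * shiftedProductPart (j, n) =
      X ^ b * residuePart (1 : ZMod 3) (numeratorCoeff j * twistedThetaCoeff n) := by
  have htheta := X_pow_mul_shiftedThetaCoeff_mul h
  have hsupp := residueSupported_thetaCoeff (m := 3) n
  rw [triangular_zmod_three] at hsupp
  simp only [shiftedProductPart, shiftedNumeratorPart, shiftedThetaNotTwo, shiftedThetaTwo,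
    twistedThetaCoeff]
  split_ifs at hsupp ⊢
  · rw [mul_neg (numeratorCoeff j), map_neg, hsupp.residuePart_mul',
      residuePart_numeratorCoeff, sub_self]
    linear_combination
      (-residuePart (0 - (triangular j : ZMod 3)) (conjugateBailey j)) * htheta
  · rw [hsupp.residuePart_mul', residuePart_numeratorCoeff, sub_zero]
    linear_combination residuePart (1 - (triangular j : ZMod 3)) (conjugateBailey j) * htheta

/-- The product `X ^ m * diagonalCoeff m`, written so that no negative power of `X` occurs. -/
def shiftedDiagonalCoeff (m : ℤ) : ℂ⟦X⟧ := ∑' j : ℤ, shiftedProductPart (j, m - j)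

lemma X_pow_mul_shiftedDiagonalCoeff {m : ℤ} {a b : ℕ} (h : (a : ℤ) + m = b) :
    X ^ a * shiftedDiagonalCoeff m = X ^ b * diagonalCoeff m := by
  have hprod : XAdicSummable fun j : ℤ => shiftedProductPart (j, m - j) :=
    xAdicSummable_shiftedProductPart.comp_injective fun _ _ hjk => (Prod.mk.inj hjk).1
  have hpart : XAdicSummable fun j : ℤ =>
      residuePart (1 : ZMod 3) (numeratorCoeff j * twistedThetaCoeff (m - j)) :=
    (xAdicSummable_numeratorCoeff.mul_right _).map_residuePart 1
  rw [shiftedDiagonalCoeff, diagonalCoeff, ← hprod.tsum_mul_left, ← hpart.tsum_mul_left]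
  exact tsum_congr fun j => X_pow_mul_shiftedProductPart (by omega)

lemma shiftedDiagonalCoeff_eq {m : ℤ} {e c : ℕ} {f : ℂ⟦X⟧} (hf : diagonalCoeff m = X ^ e * f)
    (hc : (c : ℤ) = e + m) : shiftedDiagonalCoeff m = X ^ c * f := by
  obtain ⟨b, hb⟩ : ∃ b : ℕ, (m.natAbs : ℤ) + m = b := ⟨(m.natAbs + m).toNat, by omega⟩
  have hshift := X_pow_mul_shiftedDiagonalCoeff hb
  rw [hf, ← mul_assoc, ← pow_add, show b + e = m.natAbs + c by omega, pow_add, mul_assoc] at hshift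
  exact mul_left_cancel₀ (pow_ne_zero _ X_ne_zero) hshift

lemma shiftedDiagonalCoeff_two_mul (k : ℤ) :
    shiftedDiagonalCoeff (2 * k) = X ^ (2 * pentagonal k) * diagonalCoeff 0 :=
  shiftedDiagonalCoeff_eq (diagonalCoeff_two_mul k) <| by
    push_cast
    linarith [two_mul_natCast_pentagonal k, two_mul_triangular k]

/-- The number `3k² + 2k + 1`, one more than a generalized octagonal number. -/
def octagonalAddOne (k : ℤ) : ℕ := 2 * k.natAbs ^ 2 + (k + 1).natAbs ^ 2

lemma octagonalAddOne_eq (k : ℤ) : (octagonalAddOne k : ℤ) = 3 * k ^ 2 + 2 * k + 1 := by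
  rw [octagonalAddOne]
  push_cast
  rw [sq_abs, sq_abs]
  ring

lemma shiftedDiagonalCoeff_two_mul_add_one (k : ℤ) :
    shiftedDiagonalCoeff (2 * k + 1) = X ^ octagonalAddOne k * diagonalCoeff 1 :=
  shiftedDiagonalCoeff_eq (diagonalCoeff_two_mul_add_one k) <| by
    rw [octagonalAddOne_eq]
    push_cast
    rw [sq_abs]
    ring

end ShiftedDiagonal

section ThetaSquares

lemma XAdicSummable.tsum_sq_of_mul_eq {R : Type*} [CommRing R] [TopologicalSpace R] [T2Space R]
    [IsTopologicalRing R] {u a α b β : ℤ → R⟦X⟧} (hu : XAdicSummable u) (ha : XAdicSummable a)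
    (hα : XAdicSummable α) (hb : XAdicSummable b) (hβ : XAdicSummable β)
    (heven : ∀ k s, u (k + s) * u (k - s) = a s * α k)
    (hodd : ∀ k s, u (k + s) * u (k + 1 - s) = b s * β k) :
    (∑' n, u n) ^ 2 = (∑' s, a s) * ∑' k, α k + (∑' s, b s) * ∑' k, β k := by
  have hprod := hu.prod_mul hu
  have heven_sum : ∀ k : ℤ, ∑' j : ℤ, u j * u (2 * k - j) = (∑' s, a s) * α k := fun k => by
    rw [← ha.tsum_mul_right, ← (Equiv.addLeft k).tsum_eq]
    exact tsum_congr fun s => by rw [Equiv.coe_addLeft, ← heven, two_mul, add_sub_add_left_eq_sub]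
  have hodd_sum : ∀ k : ℤ, ∑' j : ℤ, u j * u (2 * k + 1 - j) = (∑' s, b s) * β k := fun k => by
    rw [← hb.tsum_mul_right, ← (Equiv.addLeft k).tsum_eq]
    exact tsum_congr fun s => by
      rw [Equiv.coe_addLeft, ← hodd, two_mul, add_assoc, add_sub_add_left_eq_sub]
  rw [sq, hu.tsum_mul_tsum hu, hprod.tsum_int_antidiagonal,
    hprod.int_antidiagonal.tsum_int_even_add_odd, ← hα.tsum_mul_left, ← hβ.tsum_mul_left]
  simp only [heven_sum, hodd_sum]

lemma xAdicSummable_X_pow_of_triangular_le {R : Type*} [CommRing R] {e : ℤ → ℕ}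
    (h : ∀ k, triangular k ≤ e k) : XAdicSummable fun k => (X ^ e k : R⟦X⟧) :=
  .of_X_pow_triangular_dvd fun k => pow_dvd_pow X (h k)

lemma xAdicSummable_X_pow_two_mul_pentagonal :
    XAdicSummable fun k : ℤ => (X ^ (2 * pentagonal k) : ℂ⟦X⟧) :=
  xAdicSummable_X_pow_of_triangular_le fun k =>
    (triangular_le_pentagonal k).trans (Nat.le_mul_of_pos_left _ two_pos)

lemma xAdicSummable_X_pow_octagonalAddOne :
    XAdicSummable fun k : ℤ => (X ^ octagonalAddOne k : ℂ⟦X⟧) :=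
  xAdicSummable_X_pow_of_triangular_le fun k => by
    zify
    nlinarith [two_mul_triangular k, octagonalAddOne_eq k, sq_nonneg k, sq_nonneg (k + 1)]

lemma xAdicSummable_X_pow_three_mul_sq :
    XAdicSummable fun k : ℤ => (X ^ (3 * k.natAbs ^ 2) : ℂ⟦X⟧) :=
  xAdicSummable_X_pow_of_triangular_le fun k => by
    zify
    rw [sq_abs]
    nlinarith [two_mul_triangular k, sq_nonneg k, sq_nonneg (k + 1)]

lemma xAdicSummable_X_pow_six_mul_triangular :
    XAdicSummable fun k : ℤ => (X ^ (6 * triangular k) : ℂ⟦X⟧) :=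
  xAdicSummable_X_pow_of_triangular_le fun k => Nat.le_mul_of_pos_left _ (by norm_num)

/-- The theta constant `∑ q ^ (3 k ^ 2)`. -/
def squareTheta : ℂ⟦X⟧ := ∑' k : ℤ, X ^ (3 * k.natAbs ^ 2)

/-- The theta constant `∑ q ^ (3 k (k - 1))`. -/
def triangularTheta : ℂ⟦X⟧ := ∑' k : ℤ, X ^ (6 * triangular k)

lemma signSeries_add_mul_sub (k s : ℤ) : signSeries (k + s) * signSeries (k - s) = 1 := by
  rw [← signSeries_add, signSeries_even ⟨k, by ring⟩]

lemma signSeries_add_mul_add_one_sub (k s : ℤ) :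
    signSeries (k + s) * signSeries (k + 1 - s) = -1 := by
  rw [add_sub_right_comm, signSeries_add_one, mul_neg, signSeries_add_mul_sub]

lemma eulerProduct_sq : eulerProduct ^ 2 =
    squareTheta * ∑' k : ℤ, X ^ (2 * pentagonal k) -
      triangularTheta * ∑' k : ℤ, X ^ octagonalAddOne k := by
  rw [eulerProduct, ← tsum_signSeries_mul_pow_pentagonal dvd_rfl,
    (xAdicSummable_signSeries_mul_pow_pentagonal (dvd_refl (X : ℂ⟦X⟧))).tsum_sq_of_mul_eq
      xAdicSummable_X_pow_three_mul_sq xAdicSummable_X_pow_two_mul_pentagonal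
      xAdicSummable_X_pow_six_mul_triangular xAdicSummable_X_pow_octagonalAddOne.neg,
    tsum_neg, mul_neg, ← sub_eq_add_neg, squareTheta, triangularTheta]
  · intro k s
    have hexp : pentagonal (k + s) + pentagonal (k - s) = 3 * s.natAbs ^ 2 + 2 * pentagonal k := by
      zify
      rw [sq_abs]
      linarith [two_mul_natCast_pentagonal (k + s), two_mul_natCast_pentagonal (k - s),
        two_mul_natCast_pentagonal k]
    rw [mul_mul_mul_comm, signSeries_add_mul_sub, one_mul, ← pow_add, ← pow_add, hexp]
  · intro k s
    have hexp : pentagonal (k + s) + pentagonal (k + 1 - s) =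
        6 * triangular s + octagonalAddOne k := by
      zify
      linarith [two_mul_natCast_pentagonal (k + s), two_mul_natCast_pentagonal (k + 1 - s),
        octagonalAddOne_eq k, two_mul_triangular s]
    rw [mul_mul_mul_comm, signSeries_add_mul_add_one_sub, ← pow_add, hexp, pow_add, mul_neg,
      neg_one_mul]

/-- The part of `thetaSeries z (X ^ 3) ^ 2` on the even powers of `z`, without the factor
`squareTheta`. -/
def evenThetaSquare (z : ℂ) : ℂ⟦X⟧ := ∑' k : ℤ, C (z ^ (2 * k)) * X ^ (6 * triangular k)

/-- The part of `thetaSeries z (X ^ 3) ^ 2` on the odd powers of `z`, without the factor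
`-triangularTheta`. -/
def oddThetaSquare (z : ℂ) : ℂ⟦X⟧ := ∑' k : ℤ, C (z ^ (2 * k + 1)) * X ^ (3 * k.natAbs ^ 2)

lemma C_zpow_mul_C_zpow {z : ℂ} (hz : z ≠ 0) {a b c : ℤ} (h : a + b = c) :
    C (z ^ a) * C (z ^ b) = C (z ^ c) := by
  rw [← map_mul, ← zpow_add₀ hz, h]

lemma thetaSeries_X_pow_three_sq {z : ℂ} (hz : z ≠ 0) :
    thetaSeries z (X ^ 3) ^ 2 =
      squareTheta * evenThetaSquare z - triangularTheta * oddThetaSquare z := by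
  have hsum : XAdicSummable fun n : ℤ => C (z ^ n) * (signSeries n * (X ^ 3) ^ triangular n) :=
    .of_X_pow_triangular_dvd fun n => ((pow_dvd_pow_of_dvd
      (dvd_pow_self X three_ne_zero) _).mul_left _).mul_left _
  rw [thetaSeries_eq_tsum, hsum.tsum_sq_of_mul_eq xAdicSummable_X_pow_three_mul_sq
      (xAdicSummable_X_pow_six_mul_triangular.mul_left fun k => C (z ^ (2 * k)))
      xAdicSummable_X_pow_six_mul_triangular
      (xAdicSummable_X_pow_three_mul_sq.mul_left fun k => C (z ^ (2 * k + 1))).neg,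
    tsum_neg, mul_neg, ← sub_eq_add_neg, squareTheta, triangularTheta, evenThetaSquare,
    oddThetaSquare]
  · intro k s
    have hexp : 3 * triangular (k + s) + 3 * triangular (k - s) =
        3 * s.natAbs ^ 2 + 6 * triangular k := by
      zify
      rw [sq_abs]
      linarith [two_mul_triangular (k + s), two_mul_triangular (k - s), two_mul_triangular k]
    rw [mul_mul_mul_comm, C_zpow_mul_C_zpow hz (by ring : k + s + (k - s) = 2 * k),
      mul_mul_mul_comm, signSeries_add_mul_sub, one_mul, ← pow_mul, ← pow_mul, ← pow_add, hexp,
      pow_add, mul_left_comm]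
  · intro k s
    have hexp : 3 * triangular (k + s) + 3 * triangular (k + 1 - s) =
        6 * triangular s + 3 * k.natAbs ^ 2 := by
      zify
      rw [sq_abs]
      linarith [two_mul_triangular (k + s), two_mul_triangular (k + 1 - s), two_mul_triangular s]
    rw [mul_mul_mul_comm, C_zpow_mul_C_zpow hz (by ring : k + s + (k + 1 - s) = 2 * k + 1),
      mul_mul_mul_comm, signSeries_add_mul_add_one_sub, ← pow_mul, ← pow_mul, ← pow_add, hexp,
      pow_add]
    ring

end ThetaSquares

section DiagonalEvaluation

lemma diagonalCoeff_zero_mul_add_diagonalCoeff_one_mul :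
    (∑' k : ℤ, X ^ (2 * pentagonal k)) * diagonalCoeff 0 +
        (∑' k : ℤ, X ^ octagonalAddOne k) * diagonalCoeff 1 =
      X * qPochInf (X ^ 3) (X ^ 3) * eulerProduct ^ 2 := by
  have hsum : XAdicSummable shiftedDiagonalCoeff :=
    xAdicSummable_shiftedProductPart.int_antidiagonal
  rw [← tsum_shiftedProductPart, xAdicSummable_shiftedProductPart.tsum_int_antidiagonal,
    ← xAdicSummable_X_pow_two_mul_pentagonal.tsum_mul_right,
    ← xAdicSummable_X_pow_octagonalAddOne.tsum_mul_right]
  simp only [← shiftedDiagonalCoeff_two_mul, ← shiftedDiagonalCoeff_two_mul_add_one]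
  exact hsum.tsum_int_even_add_odd.symm

lemma tsum_C_mul_twistedThetaCoeff (z : ℂ) :
    ∑' n : ℤ, C (z ^ n) * twistedThetaCoeff n =
      residuePart (0 : ZMod 3) (thetaSeries z X) - residuePart (1 : ZMod 3) (thetaSeries z X) := by
  have hsum : ∀ r : ZMod 3, XAdicSummable fun n : ℤ =>
      C (z ^ n) * (if (triangular n : ZMod 3) = r then thetaCoeff n else 0) := fun r =>
    (xAdicSummable_thetaCoeff.ite_zero _).mul_left _
  rw [residuePart_thetaSeries, residuePart_thetaSeries, ← (hsum 0).tsum_sub (hsum 1)]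
  refine tsum_congr fun n => ?_
  rw [triangular_zmod_three, twistedThetaCoeff, ← mul_sub]
  split_ifs <;> simp_all

lemma residuePart_one_crankNumerator_mul_tsum {z : ℂ} (hz : z ≠ 0) :
    residuePart (1 : ZMod 3) (crankNumerator z * ∑' n : ℤ, C (z ^ n) * twistedThetaCoeff n) =
      evenThetaSquare z * diagonalCoeff 0 + oddThetaSquare z * diagonalCoeff 1 := by
  have hnum : XAdicSummable fun j : ℤ => C (z ^ j) * numeratorCoeff j :=
    xAdicSummable_numeratorCoeff.mul_left _
  have htwist : XAdicSummable fun j : ℤ => C (z ^ j) * twistedThetaCoeff j :=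
    (xAdicSummable_thetaCoeff.mono fun n => by
      rw [twistedThetaCoeff]
      split_ifs <;> simp).mul_left _
  have hprod := (hnum.prod_mul htwist).map_residuePart (1 : ZMod 3)
  have hdiag : ∀ m : ℤ, ∑' j : ℤ, residuePart (1 : ZMod 3) (C (z ^ j) * numeratorCoeff j *
      (C (z ^ (m - j)) * twistedThetaCoeff (m - j))) = C (z ^ m) * diagonalCoeff m := fun m => by
    rw [diagonalCoeff, ← ((xAdicSummable_numeratorCoeff.mul_right _).map_residuePart
      (1 : ZMod 3)).tsum_mul_left]
    exact tsum_congr fun j => by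
      rw [mul_mul_mul_comm, C_zpow_mul_C_zpow hz (add_sub_cancel j m), residuePart_C_mul]
  rw [crankNumerator_eq_tsum, hnum.tsum_mul_tsum htwist, residuePart_tsum (hnum.prod_mul htwist),
    hprod.tsum_int_antidiagonal, hprod.int_antidiagonal.tsum_int_even_add_odd]
  simp only [hdiag, diagonalCoeff_two_mul, diagonalCoeff_two_mul_add_one]
  simp only [← mul_assoc]
  rw [(xAdicSummable_X_pow_six_mul_triangular.mul_left _).tsum_mul_right,
    (xAdicSummable_X_pow_three_mul_sq.mul_left _).tsum_mul_right, evenThetaSquare, oddThetaSquare]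

lemma triangularTheta_mul_add_squareTheta_mul :
    triangularTheta * diagonalCoeff 0 + squareTheta * diagonalCoeff 1 = 0 := by
  have hzero : crankNumerator 1 = 0 := by
    rw [crankNumerator_eq_tsum]
    refine tsum_eq_zero_of_one_sub_eq_neg fun n => ?_
    rw [one_zpow, one_zpow, numeratorCoeff_one_sub, mul_neg]
  have h := residuePart_one_crankNumerator_mul_tsum (one_ne_zero (α := ℂ))
  rw [hzero, zero_mul, map_zero, evenThetaSquare, oddThetaSquare] at h
  simp only [one_zpow, map_one, one_mul] at h
  exact h.symm

lemma diagonalCoeff_zero : diagonalCoeff 0 = X * qPochInf (X ^ 3) (X ^ 3) * squareTheta := by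
  refine mul_left_cancel₀ (pow_ne_zero 2 eulerProduct_ne_zero) ?_
  linear_combination diagonalCoeff 0 * eulerProduct_sq +
    squareTheta * diagonalCoeff_zero_mul_add_diagonalCoeff_one_mul -
    (∑' k : ℤ, X ^ octagonalAddOne k) * triangularTheta_mul_add_squareTheta_mul

lemma diagonalCoeff_one : diagonalCoeff 1 = -(X * qPochInf (X ^ 3) (X ^ 3) * triangularTheta) := by
  refine mul_left_cancel₀ (pow_ne_zero 2 eulerProduct_ne_zero) ?_
  linear_combination diagonalCoeff 1 * eulerProduct_sq -
    triangularTheta * diagonalCoeff_zero_mul_add_diagonalCoeff_one_mul +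
    (∑' k : ℤ, X ^ (2 * pentagonal k)) * triangularTheta_mul_add_squareTheta_mul

theorem residuePart_one_crankNumerator_mul {z : ℂ} (hz : z ≠ 0) :
    residuePart (1 : ZMod 3) (crankNumerator z *
        (residuePart (0 : ZMod 3) (thetaSeries z X) -
          residuePart (1 : ZMod 3) (thetaSeries z X))) =
      X * qPochInf (X ^ 3) (X ^ 3) * thetaSeries z (X ^ 3) ^ 2 := by
  rw [← tsum_C_mul_twistedThetaCoeff, residuePart_one_crankNumerator_mul_tsum hz,
    thetaSeries_X_pow_three_sq hz, diagonalCoeff_zero, diagonalCoeff_one]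
  ring

end DiagonalEvaluation

section RootsOfUnity

lemma prod_range_sub_pow_mul {R : Type*} [CommRing R] [IsDomain R] {n : ℕ} {ζ : R}
    (hζ : IsPrimitiveRoot ζ n) (hn : 0 < n) (x y : R) :
    ∏ i ∈ Finset.range n, (x - ζ ^ i * y) = x ^ n - y ^ n := by
  classical
  rw [hζ.pow_sub_pow_eq_prod_sub_mul x y hn, Polynomial.nthRootsFinset_def,
    Finset.prod_eq_multiset_prod (s := (Polynomial.nthRoots n 1).toFinset), Multiset.toFinset_val,
    Multiset.dedup_eq_self.2 hζ.nthRoots_one_nodup, hζ.nthRoots_eq (one_pow n),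
    Multiset.map_map]
  simp only [Function.comp_def, mul_one]
  rfl

variable {R : Type*} [CommRing R] [TopologicalSpace R] [T2Space R] {q : R⟦X⟧}

lemma qPochInf_mul_pow_three {v : R⟦X⟧} (hv : v ^ 3 = 1) (hq : X ∣ q) (x : R⟦X⟧) :
    qPochInf (x * (v * q)) (v * q) =
      qPochInf (v * (x * q)) (q ^ 3) * qPochInf (v ^ 2 * (x * q ^ 2)) (q ^ 3) *
        qPochInf (x * q ^ 3) (q ^ 3) := by
  have hcube : (v * q) ^ 3 = q ^ 3 := by rw [mul_pow, hv, one_mul]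
  have hsecond : x * (v * q) * (v * q) = v ^ 2 * (x * q ^ 2) := by ring
  have hthird : x * (v * q) * (v * q) ^ 2 = x * q ^ 3 := by rw [← hcube]; ring
  rw [qPochInf_eq_prod_range (hq.mul_left v) _ three_ne_zero, hcube, Finset.prod_range_succ,
    Finset.prod_range_succ, Finset.prod_range_one, pow_zero, pow_one, mul_one, hsecond, hthird,
    mul_left_comm x]

variable [IsTopologicalRing R] [IsDomain R]

lemma prod_range_qPochInf_pow_mul {n : ℕ} {w : R⟦X⟧} (hw : IsPrimitiveRoot w n) (hn : 0 < n)
    (hq : X ∣ q) (x : R⟦X⟧) :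
    ∏ i ∈ Finset.range n, qPochInf (w ^ i * x) q = qPochInf (x ^ n) (q ^ n) := by
  simp only [qPochInf]
  rw [← Multipliable.tprod_finsetProd fun i _ =>
    (xAdicSummable_mul_pow hq (w ^ i * x)).multipliable_one_sub]
  refine tprod_congr fun k => ?_
  simp only [mul_assoc]
  rw [prod_range_sub_pow_mul hw hn, one_pow, mul_pow, pow_right_comm]

lemma prod_range_qPochInf_cubic {w : R⟦X⟧} (hw : IsPrimitiveRoot w 3) (hq : X ∣ q) (x : R⟦X⟧) :
    (∏ i ∈ Finset.range 3, qPochInf (x * (w ^ i * q)) (w ^ i * q)) *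
        qPochInf (x ^ 3 * q ^ 9) (q ^ 9) =
      qPochInf (x * q ^ 3) (q ^ 3) ^ 3 * qPochInf (x ^ 3 * q ^ 3) (q ^ 3) := by
  have hq₃ : X ∣ q ^ 3 := dvd_pow hq three_ne_zero
  have hw₂ : IsPrimitiveRoot (w ^ 2) 3 := hw.pow_of_coprime 2 (by norm_num)
  have hdissect (i : ℕ) : qPochInf (x * (w ^ i * q)) (w ^ i * q) =
      qPochInf (w ^ i * (x * q)) (q ^ 3) * qPochInf ((w ^ 2) ^ i * (x * q ^ 2)) (q ^ 3) *
        qPochInf (x * q ^ 3) (q ^ 3) := by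
    rw [qPochInf_mul_pow_three (by rw [pow_right_comm, hw.pow_eq_one, one_pow]) hq, pow_right_comm]
  have hcube : qPochInf (x ^ 3 * q ^ 3) (q ^ 3) = qPochInf ((x * q) ^ 3) ((q ^ 3) ^ 3) *
      qPochInf ((x * q ^ 2) ^ 3) ((q ^ 3) ^ 3) * qPochInf (x ^ 3 * q ^ 9) (q ^ 9) := by
    rw [qPochInf_eq_prod_range hq₃ _ three_ne_zero, Finset.prod_range_succ,
      Finset.prod_range_succ, Finset.prod_range_one]
    ring_nf
  simp only [hdissect, Finset.prod_mul_distrib, Finset.prod_const, Finset.card_range]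
  rw [prod_range_qPochInf_pow_mul hw three_pos hq₃, prod_range_qPochInf_pow_mul hw₂ three_pos hq₃,
    hcube]
  ring

end RootsOfUnity

section CubicForm

variable {z : ℂ}

lemma thetaSeries_eq_one_sub_mul (hz : z ≠ 0) {Q : ℂ⟦X⟧} (hQ : X ∣ Q) :
    thetaSeries z Q =
      (1 - C z) * qPochInf (C z * Q) Q * qPochInf (C z⁻¹ * Q) Q * qPochInf (1 * Q) Q := by
  rw [thetaSeries_eq_mul hz hQ, qPochInf_eq_one_sub_mul hQ (C z), one_mul]

lemma prod_range_thetaSeries_cubic {ω : ℂ} (hω : IsPrimitiveRoot ω 3) (hz : z ≠ 0) {Q : ℂ⟦X⟧}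
    (hQ : X ∣ Q) :
    (∏ i ∈ Finset.range 3, thetaSeries z (C ω ^ i * Q)) * thetaSeries (z ^ 3) (Q ^ 9) =
      thetaSeries z (Q ^ 3) ^ 3 * thetaSeries (z ^ 3) (Q ^ 3) := by
  have hC : IsPrimitiveRoot (C ω : ℂ⟦X⟧) 3 := hω.map_of_injective C_injective
  have hprod (i : ℕ) := thetaSeries_eq_one_sub_mul hz (hQ.mul_left (C ω ^ i))
  have hz₃ : z ^ 3 ≠ 0 := pow_ne_zero 3 hz
  simp only [hprod, Finset.prod_mul_distrib, Finset.prod_const, Finset.card_range]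
  rw [thetaSeries_eq_one_sub_mul hz₃ (dvd_pow hQ (by norm_num)),
    thetaSeries_eq_one_sub_mul hz₃ (dvd_pow hQ three_ne_zero),
    thetaSeries_eq_one_sub_mul hz (dvd_pow hQ three_ne_zero), ← inv_pow, map_pow, map_pow]
  have hleft := prod_range_qPochInf_cubic hC hQ (C z)
  have hright := prod_range_qPochInf_cubic hC hQ (C z⁻¹)
  have hone := prod_range_qPochInf_cubic hC hQ 1
  rw [one_pow] at hone
  linear_combination (1 - C z) ^ 3 * (1 - C z ^ 3) *
    congrArg₂ (· * ·) (congrArg₂ (· * ·) hleft hright) hone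

lemma thetaSeries_C_mul_X {ω : ℂ} (hω : ω ^ 3 = 1) (z : ℂ) :
    thetaSeries z (C ω * X) = residuePart (0 : ZMod 3) (thetaSeries z X) +
      C ω * residuePart (1 : ZMod 3) (thetaSeries z X) := by
  have hsum (r : ZMod 3) : XAdicSummable fun n : ℤ =>
      C (z ^ n) * (if (triangular n : ZMod 3) = r then thetaCoeff n else 0) :=
    (xAdicSummable_thetaCoeff.ite_zero _).mul_left _
  rw [residuePart_thetaSeries, residuePart_thetaSeries, ← (hsum 1).tsum_mul_left,
    ← (hsum 0).tsum_add ((hsum 1).mul_left _), thetaSeries_eq_tsum]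
  refine tsum_congr fun n => ?_
  rw [mul_pow, ← map_pow, thetaCoeff]
  by_cases h : (n : ZMod 3) = 2
  · have htri : (triangular n : ZMod 3) = 1 := by rw [triangular_zmod_three, if_pos h]
    have hpow : ω ^ triangular n = ω := by
      simpa using zpow_eq_zpow_of_intCast_eq hω (a := triangular n) (b := 1) (by simpa using htri)
    rw [htri, if_neg one_ne_zero, if_pos rfl, hpow]
    ring
  · have htri : (triangular n : ZMod 3) = 0 := by rw [triangular_zmod_three, if_neg h]
    have hpow : ω ^ triangular n = 1 := by
      simpa using zpow_eq_zpow_of_intCast_eq hω (a := triangular n) (b := 0) (by simpa using htri)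
    rw [htri, if_pos rfl, if_neg zero_ne_one, hpow, map_one]
    ring

/-- The norm `∏ᵢ (J₀ + ωⁱ J₁) = J₀³ + J₁³` over the cube roots of unity `ωⁱ`, where
`J = thetaSeries z X` and `Jᵣ` is its part with exponents `≡ r (mod 3)`. -/
def thetaNorm (z : ℂ) : ℂ⟦X⟧ :=
  residuePart (0 : ZMod 3) (thetaSeries z X) ^ 3 + residuePart (1 : ZMod 3) (thetaSeries z X) ^ 3

lemma thetaNorm_eq_prod {ω : ℂ} (hω : IsPrimitiveRoot ω 3) (z : ℂ) :
    thetaNorm z = ∏ i ∈ Finset.range 3, thetaSeries z (C ω ^ i * X) := by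
  have hC : IsPrimitiveRoot (C ω : ℂ⟦X⟧) 3 := hω.map_of_injective C_injective
  have hprod := prod_range_sub_pow_mul hC three_pos (residuePart (0 : ZMod 3) (thetaSeries z X))
    (-residuePart (1 : ZMod 3) (thetaSeries z X))
  rw [Odd.neg_pow (by decide), sub_neg_eq_add] at hprod
  rw [thetaNorm, ← hprod]
  refine Finset.prod_congr rfl fun i _ => ?_
  rw [← map_pow, thetaSeries_C_mul_X (by rw [pow_right_comm, hω.pow_eq_one, one_pow]), mul_neg,
    sub_neg_eq_add]

lemma thetaNorm_mul_thetaSeries (hz : z ≠ 0) :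
    thetaNorm z * thetaSeries (z ^ 3) (X ^ 9) =
      thetaSeries z (X ^ 3) ^ 3 * thetaSeries (z ^ 3) (X ^ 3) := by
  have hω : IsPrimitiveRoot _ 3 := Complex.isPrimitiveRoot_exp 3 three_ne_zero
  rw [thetaNorm_eq_prod hω, prod_range_thetaSeries_cubic hω hz dvd_rfl]

end CubicForm

section CrankParts

variable {z : ℂ}

lemma residuePart_crankSeries_mul_sq_sub (hz : z ≠ 0) :
    residuePart (1 : ZMod 3) (crankSeries z) * residuePart (0 : ZMod 3) (thetaSeries z X) ^ 2 -
        residuePart (2 : ZMod 3) (crankSeries z) *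
          residuePart (1 : ZMod 3) (thetaSeries z X) ^ 2 =
      X * qPochInf (X ^ 3) (X ^ 3) * thetaSeries z (X ^ 3) ^ 2 := by
  have hsplit := (residueSupported_thetaSeries_zmod_three z).residuePart_mul_eq_add zero_ne_one
    (crankSeries z)
  rw [← residuePart_one_crankNumerator_mul hz, mul_sub, map_sub,
    (ResidueSupported.residuePart_self 0 _).residuePart_mul',
    (ResidueSupported.residuePart_self 1 _).residuePart_mul', ← crankSeries_mul_thetaSeries hz,
    hsplit, hsplit]
  simp only [sub_zero, sub_self, show (0 : ZMod 3) - 1 = 2 by decide]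
  ring

lemma residuePart_one_crankSeries_mul_thetaNorm (hz : z ≠ 0) :
    residuePart (1 : ZMod 3) (crankSeries z) * thetaNorm z =
      residuePart (0 : ZMod 3) (thetaSeries z X) *
        (X * qPochInf (X ^ 3) (X ^ 3) * thetaSeries z (X ^ 3) ^ 2) := by
  rw [← residuePart_crankSeries_mul_sq_sub hz, thetaNorm]
  linear_combination residuePart (1 : ZMod 3) (thetaSeries z X) ^ 2 *
    residuePart_two_crankSeries_mul_add hz

lemma residuePart_two_crankSeries_mul_thetaNorm (hz : z ≠ 0) :
    residuePart (2 : ZMod 3) (crankSeries z) * thetaNorm z =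
      -residuePart (1 : ZMod 3) (thetaSeries z X) *
        (X * qPochInf (X ^ 3) (X ^ 3) * thetaSeries z (X ^ 3) ^ 2) := by
  rw [← residuePart_crankSeries_mul_sq_sub hz, thetaNorm]
  linear_combination residuePart (0 : ZMod 3) (thetaSeries z X) ^ 2 *
    residuePart_two_crankSeries_mul_add hz

end CrankParts

section ThetaCoefficients

lemma triangular_eq_triangular_iff {m n : ℤ} :
    triangular n = triangular m ↔ n = m ∨ n = 1 - m := by
  rw [← Int.natCast_inj, ← mul_right_inj' (two_ne_zero (α := ℤ)), two_mul_triangular,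
    two_mul_triangular, ← sub_eq_zero, show n * (n - 1) - m * (m - 1) = (n - m) * (n - (1 - m)) by
      ring, mul_eq_zero, sub_eq_zero, sub_eq_zero]

lemma coeff_triangular_thetaSeries (z : ℂ) (m : ℤ) :
    coeff (triangular m) (thetaSeries z X) = (m.negOnePow : ℤ) * (z ^ m - z ^ (1 - m)) := by
  have hterm (n : ℤ) : coeff (triangular m) (C (z ^ n) * (signSeries n * X ^ triangular n)) =
      if triangular m = triangular n then z ^ n * (n.negOnePow : ℤ) else 0 := by
    rw [signSeries, ← map_intCast (C (R := ℂ)), coeff_C_mul, coeff_C_mul, coeff_X_pow]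
    simp only [mul_ite, mul_one, mul_zero]
  have hsum : XAdicSummable fun n => C (z ^ n) * (signSeries n * X ^ triangular n) :=
    xAdicSummable_thetaCoeff.mul_left _
  rw [thetaSeries_eq_tsum, hsum.coeff_tsum_eq_sum _ {m, 1 - m},
    Finset.sum_pair (by omega), hterm, hterm, if_pos rfl, if_pos (triangular_one_sub m).symm,
    Int.negOnePow_sub, Int.negOnePow_one]
  · push_cast
    ring
  · intro n hn
    rw [hterm, if_neg]
    rw [eq_comm, triangular_eq_triangular_iff]
    simpa only [Finset.mem_insert, Finset.mem_singleton] using hn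

lemma residuePart_thetaSeries_det_ne_zero {z : ℂ} (hz : z ≠ 0) (hz₁ : z ≠ 1) (hz₃ : z ^ 3 ≠ 1) :
    residuePart (0 : ZMod 3) (residuePart (0 : ZMod 5) (thetaSeries z X)) *
        residuePart (1 : ZMod 3) (residuePart (1 : ZMod 5) (thetaSeries z X)) -
      residuePart (1 : ZMod 3) (residuePart (0 : ZMod 5) (thetaSeries z X)) *
        residuePart (0 : ZMod 3) (residuePart (1 : ZMod 5) (thetaSeries z X)) ≠ 0 := by
  have hcoeff₀ : coeff 0 (thetaSeries z X) = 1 - z := by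
    simpa [triangular] using coeff_triangular_thetaSeries z 1
  have hcoeff₁ : coeff 1 (thetaSeries z X) = z ^ 2 - z⁻¹ := by
    simpa [triangular] using coeff_triangular_thetaSeries z 2
  have hz₂ : z ^ 2 - z⁻¹ ≠ 0 := by
    rwa [sub_ne_zero, Ne, ← mul_left_inj' hz, ← pow_succ, inv_mul_cancel₀ hz]
  refine fun h => mul_ne_zero (sub_ne_zero.2 hz₁.symm) hz₂ ?_
  have hone := congrArg (coeff 1) h
  rw [← hcoeff₀, ← hcoeff₁, ← hone.trans (map_zero _)]
  simp only [map_sub, coeff_one_mul, ← coeff_zero_eq_constantCoeff_apply, coeff_residuePart,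
    Nat.cast_zero, Nat.cast_one, if_true, if_neg (show (0 : ZMod 3) ≠ 1 by decide),
    if_neg (show (1 : ZMod 3) ≠ 0 by decide), if_neg (show (1 : ZMod 5) ≠ 0 by decide),
    if_neg (show (0 : ZMod 5) ≠ 1 by decide)]
  ring

end ThetaCoefficients

section ModFive

lemma residueSupported_qPochInf_X_pow {m k : ℕ} (hk : k ≠ 0) (hmk : m ∣ k) :
    ResidueSupported ({0} : Set (ZMod m)) (qPochInf (X ^ k : ℂ⟦X⟧) (X ^ k)) := by
  have hX : (X : ℂ⟦X⟧) ∣ X ^ k := dvd_pow_self X hk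
  rw [← tsum_signSeries_mul_pow_pentagonal hX]
  refine .tsum (xAdicSummable_signSeries_mul_pow_pentagonal hX) fun n => ?_
  rw [← pow_mul]
  refine (ResidueSupported.X_pow ?_).signSeries_mul n
  rw [Nat.cast_mul, (ZMod.natCast_eq_zero_iff k m).2 hmk, zero_mul]
  rfl

variable {ζ : ℂ}

lemma thetaSeries_mul_thetaSeries_pow_three (hζ : IsPrimitiveRoot ζ 5) {Q : ℂ⟦X⟧}
    (hQ : X ∣ Q) :
    thetaSeries ζ Q * thetaSeries (ζ ^ 3) Q =
      C ((1 - ζ) * (1 - ζ ^ 3)) * (qPochInf Q Q * qPochInf (Q ^ 5) (Q ^ 5)) := by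
  have hζ₀ : ζ ≠ 0 := hζ.ne_zero (by norm_num)
  have hinv : ζ⁻¹ = ζ ^ 4 :=
    inv_eq_of_mul_eq_one_right ((pow_succ' ζ 4).symm.trans hζ.pow_eq_one)
  have hinv₃ : (ζ ^ 3)⁻¹ = ζ ^ 2 :=
    inv_eq_of_mul_eq_one_right ((pow_add ζ 3 2).symm.trans hζ.pow_eq_one)
  have hprod := prod_range_qPochInf_pow_mul (hζ.map_of_injective C_injective) (by norm_num) hQ Q
  simp only [Finset.prod_range_succ, Finset.prod_range_zero, one_mul, pow_zero, pow_one] at hprod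
  rw [thetaSeries_eq_one_sub_mul hζ₀ hQ, thetaSeries_eq_one_sub_mul (pow_ne_zero 3 hζ₀) hQ, hinv,
    hinv₃, one_mul, ← hprod]
  simp only [map_mul, map_sub, map_one, map_pow]
  ring

lemma eq_zero_of_det_ne_zero {R : Type*} [CommRing R] [NoZeroDivisors R] {a b c d x y : R}
    (hdet : a * d - b * c ≠ 0) (h₁ : x * a + y * c = 0) (h₂ : x * b + y * d = 0) :
    x = 0 ∧ y = 0 := by
  constructor
  · refine (mul_eq_zero.1 ?_).resolve_right hdet
    linear_combination d * h₁ - c * h₂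
  · refine (mul_eq_zero.1 ?_).resolve_right hdet
    linear_combination a * h₂ - b * h₁

lemma residueSupported_of_mul_thetaNorm (hζ : IsPrimitiveRoot ζ 5) {S J : ℂ⟦X⟧}
    (hJ : ResidueSupported ({0, 1} : Set (ZMod 5)) J)
    (h : S * thetaNorm ζ = J * (X * qPochInf (X ^ 3) (X ^ 3) * thetaSeries ζ (X ^ 3) ^ 2)) :
    ResidueSupported ({0, 1, 2} : Set (ZMod 5)) S := by
  have hζ₀ : ζ ≠ 0 := hζ.ne_zero (by norm_num)
  have hζ₁ : ζ ≠ 1 := hζ.ne_one (by norm_num)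
  have hζ₃ : ζ ^ 3 ≠ 1 := hζ.pow_ne_one_of_pos_of_lt three_ne_zero (by norm_num)
  have hX : (X : ℂ⟦X⟧) ∣ X ^ 3 := dvd_pow_self X three_ne_zero
  have hX₁₅ : (X : ℂ⟦X⟧) ∣ X ^ 15 := dvd_pow_self X (by norm_num)
  set P₃ : ℂ⟦X⟧ := qPochInf (X ^ 3) (X ^ 3)
  set P₁₅ : ℂ⟦X⟧ := qPochInf (X ^ 15) (X ^ 15)
  set c := C ((1 - ζ) * (1 - ζ ^ 3))
  have hc : c ≠ 0 := (map_ne_zero_iff C C_injective).2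
    (mul_ne_zero (sub_ne_zero.2 hζ₁.symm) (sub_ne_zero.2 hζ₃.symm))
  have hprod : thetaSeries ζ (X ^ 3) * thetaSeries (ζ ^ 3) (X ^ 3) = c * (P₃ * P₁₅) := by
    rw [thetaSeries_mul_thetaSeries_pow_three hζ hX, ← pow_mul]
  have hreduced : P₁₅ * (c * S) = X ^ 1 * (J * thetaSeries (ζ ^ 3) (X ^ 9)) := by
    refine mul_left_cancel₀ (mul_ne_zero (pow_ne_zero 2 (thetaSeries_ne_zero hζ₀ hζ₁ hX))
      (qPochInf_ne_zero hX hX)) ?_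
    linear_combination thetaSeries (ζ ^ 3) (X ^ 9) * h - S * thetaNorm_mul_thetaSeries hζ₀ -
      S * thetaSeries ζ (X ^ 3) ^ 2 * hprod
  have hsupp : ResidueSupported ({0, 1, 2} : Set (ZMod 5)) (P₁₅ * (c * S)) := by
    rw [hreduced]
    refine (ResidueSupported.X_pow (Set.mem_singleton _)).mul (hJ.mul (W := {0, 1, 4})
      (residueSupported_thetaSeries_of_pow_five (w := ζ ^ 3) ?_ (by norm_num)) ?_) ?_
    · rw [pow_right_comm, hζ.pow_eq_one, one_pow]
    · simp only [Set.mem_insert_iff, Set.mem_singleton_iff]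
      decide
    · simp only [Set.mem_insert_iff, Set.mem_singleton_iff]
      decide
  have hP₁₅ : ResidueSupported ({0} : Set (ZMod 5)) P₁₅ :=
    residueSupported_qPochInf_X_pow (by norm_num) (by norm_num)
  refine .of_residuePart_eq_zero fun r hr => ?_
  have hzero := hsupp.residuePart_eq_zero hr
  rw [hP₁₅.residuePart_mul, sub_zero, residuePart_C_mul] at hzero
  exact (mul_eq_zero.1 ((mul_eq_zero.1 hzero).resolve_left
    (qPochInf_ne_zero hX₁₅ hX₁₅))).resolve_left hc

lemma residueSupported_residuePart_crankSeries (hζ : IsPrimitiveRoot ζ 5) {r : ZMod 5}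
    (hr : r ∉ ({0, 1, 2} : Set (ZMod 5))) :
    ResidueSupported ({0} : Set (ZMod 3)) (residuePart r (crankSeries ζ)) := by
  have hζ₀ : ζ ≠ 0 := hζ.ne_zero (by norm_num)
  have htheta : ResidueSupported ({0, 1} : Set (ZMod 5)) (thetaSeries ζ X) := by
    simpa using residueSupported_thetaSeries_of_pow_five hζ.pow_eq_one one_ne_zero
  refine .of_residuePart_eq_zero fun t ht => ?_
  rw [residuePart_comm]
  have ht' : t = 1 ∨ t = 2 := by
    revert t
    decide
  rcases ht' with rfl | rfl
  · exact (residueSupported_of_mul_thetaNorm hζ (htheta.map_residuePart 0)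
      (residuePart_one_crankSeries_mul_thetaNorm hζ₀)).residuePart_eq_zero hr
  · exact (residueSupported_of_mul_thetaNorm hζ (htheta.map_residuePart 1).neg
      (residuePart_two_crankSeries_mul_thetaNorm hζ₀)).residuePart_eq_zero hr

theorem residuePart_crankSeries_of_primitiveRoot_five (hζ : IsPrimitiveRoot ζ 5) :
    residuePart (3 : ZMod 5) (crankSeries ζ) = 0 ∧
      residuePart (4 : ZMod 5) (crankSeries ζ) = 0 := by
  have hζ₀ : ζ ≠ 0 := hζ.ne_zero (by norm_num)
  have hζ₁ : ζ ≠ 1 := hζ.ne_one (by norm_num)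
  have hζ₃ : ζ ^ 3 ≠ 1 := hζ.pow_ne_one_of_pos_of_lt three_ne_zero (by norm_num)
  have htheta : ResidueSupported ({0, 1} : Set (ZMod 5)) (thetaSeries ζ X) := by
    simpa using residueSupported_thetaSeries_of_pow_five hζ.pow_eq_one one_ne_zero
  have hrel := htheta.residuePart_mul_eq_add (by decide) (crankSeries ζ) 4
  rw [crankSeries_mul_thetaSeries hζ₀, (residueSupported_crankNumerator_of_pow_five
    hζ.pow_eq_one).residuePart_eq_zero (by decide), sub_zero, show (4 : ZMod 5) - 1 = 3 by decide]
    at hrel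
  have hsupp₃ := residueSupported_residuePart_crankSeries hζ (r := 3) (by decide)
  have hsupp₄ := residueSupported_residuePart_crankSeries hζ (r := 4) (by decide)
  have hpart (t : ZMod 3) := congrArg (residuePart t) hrel.symm
  simp only [map_zero, map_add, hsupp₃.residuePart_mul, hsupp₄.residuePart_mul, sub_zero] at hpart
  exact (eq_zero_of_det_ne_zero (residuePart_thetaSeries_det_ne_zero hζ₀ hζ₁ hζ₃) (hpart 0)
    (hpart 1)).symm

end ModFive

theorem paircrank_equidistribution (n : ℕ) :
    (∀ i j : ZMod 3,
      {p : Multiset ℕ × Multiset ℕ | InST p ∧ p.1.sum + p.2.sum = 3 * n + 2 ∧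
        ((paircrank p : ZMod 3) = i)}.ncard =
      {p : Multiset ℕ × Multiset ℕ | InST p ∧ p.1.sum + p.2.sum = 3 * n + 2 ∧
        ((paircrank p : ZMod 3) = j)}.ncard) ∧
    (∀ i j : ZMod 5,
      {p : Multiset ℕ × Multiset ℕ | InST p ∧ p.1.sum + p.2.sum = 5 * n + 3 ∧
        ((paircrank p : ZMod 5) = i)}.ncard =
      {p : Multiset ℕ × Multiset ℕ | InST p ∧ p.1.sum + p.2.sum = 5 * n + 3 ∧
        ((paircrank p : ZMod 5) = j)}.ncard) ∧
    (∀ i j : ZMod 5,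
      {p : Multiset ℕ × Multiset ℕ | InST p ∧ p.1.sum + p.2.sum = 5 * n + 4 ∧
        ((paircrank p : ZMod 5) = i)}.ncard =
      {p : Multiset ℕ × Multiset ℕ | InST p ∧ p.1.sum + p.2.sum = 5 * n + 4 ∧
        ((paircrank p : ZMod 5) = j)}.ncard) := by
  have hω : IsPrimitiveRoot _ 3 := Complex.isPrimitiveRoot_exp 3 (by norm_num)
  have hζ : IsPrimitiveRoot _ 5 := Complex.isPrimitiveRoot_exp 5 (by norm_num)
  have hresidue (m r : ℕ) : ((m * n + r : ℕ) : ZMod m) = r := by simp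
  obtain ⟨h₃, h₄⟩ := residuePart_crankSeries_of_primitiveRoot_five hζ
  exact ⟨ncard_paircrank_eq Nat.prime_three hω (coeff_eq_zero_of_residuePart_eq_zero
      (residuePart_two_crankSeries hω) (hresidue 3 2)),
    ncard_paircrank_eq Nat.prime_five hζ (coeff_eq_zero_of_residuePart_eq_zero h₃ (hresidue 5 3)),
    ncard_paircrank_eq Nat.prime_five hζ (coeff_eq_zero_of_residuePart_eq_zero h₄ (hresidue 5 4))⟩
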